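/- There exist positive constants C, c_a, c_b, c_c with the following property. Let n ≥ 2, θ ∈ (0, 1/2), 0 < μ < c_a · min{θ n^{-1}, n^{-5/4}}, let X₀ ∈ ℝ^{n×p} have i.i.d. BG(θ) entries, and suppose p ≥ (C/(μ²θ²)) n³ log(n/(μθ)). Then with probability at least 1 − c_b p^{-5}, the function q ↦ f(q; X₀) has exactly 2n local minimizers over the sphere S^{n−1}, and there is a bijection between these local minimizers and the signed standard basis vectors {±e_i : i = 1,…,n} such that each local minimizer q_star and its corresponding signed basis vector b satisfy ‖q_star − b‖ ≤ √2 · min{(c_c μ/θ)√(n log p / p), μ/16}. -/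

import Mathlib

open MeasureTheory ProbabilityTheory Real Matrix
open scoped RealInnerProductSpace ENNReal NNReal

noncomputable section

/-- The Bernoulli–Gaussian law `BG(θ)`: with probability `θ` a standard Gaussian,
with probability `1-θ` a point mass at `0`. -/
def bg (θ : ℝ) : Measure ℝ :=
  θ.toNNReal • gaussianReal 0 1 + (1 - θ).toNNReal • Measure.dirac 0

instance bg.instIsFiniteMeasure (θ : ℝ) : IsFiniteMeasure (bg θ) := by
  unfold bg; infer_instance

/-- Law of an `n × p` matrix with i.i.d. `BG(θ)` entries. -/
def bgMatrix (θ : ℝ) (n p : ℕ) : Measure (Fin n → Fin p → ℝ) :=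
  Measure.pi fun _ => Measure.pi fun _ => bg θ

/-- Law of a vector in `ℝ^n` with i.i.d. `BG(θ)` entries. -/
def bgVec (θ : ℝ) (n : ℕ) : Measure (Fin n → ℝ) :=
  Measure.pi fun _ => bg θ

/-- The smooth sparsity surrogate `h_μ(z) = μ log cosh (z/μ)`. -/
def hmu (μ z : ℝ) : ℝ := μ * Real.log (Real.cosh (z / μ))

/-- Reparametrization `q(w) = (w, √(1-‖w‖²))` with `w` in the unit ball of `ℝ^{n-1}`. -/
def qmap (n : ℕ) (w : EuclideanSpace ℝ (Fin (n - 1))) : Fin n → ℝ :=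
  fun i => if h : (i : ℕ) < n - 1 then w ⟨i, h⟩ else Real.sqrt (1 - ‖w‖ ^ 2)

/-- `f(q; Y) = (1/p) ∑ₖ h_μ(qᵀ yₖ)`. -/
def ffun (n p : ℕ) (μ : ℝ) (Y : Matrix (Fin n) (Fin p) ℝ)
    (q : EuclideanSpace ℝ (Fin n)) : ℝ :=
  (p : ℝ)⁻¹ * ∑ k : Fin p, hmu μ (∑ i : Fin n, q i * Y i k)

/-- `g(w; Y) = f(q(w); Y)`. -/
def gfun (n p : ℕ) (μ : ℝ) (Y : Matrix (Fin n) (Fin p) ℝ)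
    (w : EuclideanSpace ℝ (Fin (n - 1))) : ℝ :=
  (p : ℝ)⁻¹ * ∑ k : Fin p, hmu μ (∑ i : Fin n, qmap n w i * Y i k)

/-- Gradient `∇g(w; Y)` in `w`. -/
def gradg (n p : ℕ) (μ : ℝ) (Y : Matrix (Fin n) (Fin p) ℝ)
    (w : EuclideanSpace ℝ (Fin (n - 1))) : EuclideanSpace ℝ (Fin (n - 1)) :=
  gradient (gfun n p μ Y) w

/-- Hessian `∇²g(w; Y)` in `w`, as a continuous linear map. -/
def hessg (n p : ℕ) (μ : ℝ) (Y : Matrix (Fin n) (Fin p) ℝ)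
    (w : EuclideanSpace ℝ (Fin (n - 1))) :
    EuclideanSpace ℝ (Fin (n - 1)) →L[ℝ] EuclideanSpace ℝ (Fin (n - 1)) :=
  fderiv ℝ (gradg n p μ Y) w

/-- The set `Γ = {w : ‖w‖ < √((4n-1)/(4n))}`. -/
def GammaSet (n : ℕ) : Set (EuclideanSpace ℝ (Fin (n - 1))) :=
  {w | ‖w‖ < Real.sqrt ((4 * (n : ℝ) - 1) / (4 * n))}

/-- Spectral (`ℓ²→ℓ²` operator) norm of а matrix. -/
def specNorm {m k : ℕ} (M : Matrix (Fin m) (Fin k) ℝ) : ℝ :=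
  ‖LinearMap.toContinuousLinearMap (Matrix.toEuclideanLin M)‖

/-- Largest magnitude of an entry of a matrix. -/
def Minf {m k : ℕ} (M : Matrix (Fin m) (Fin k) ℝ) : ℝ := ⨆ i, ⨆ j, |M i j|

/-- Condition number: ratio of largest to smallest singular value. -/
def kappa {n : ℕ} (s : Fin n → ℝ) : ℝ := (⨆ i, s i) / (⨅ i, s i)

/-- Signed standard basis vectors `{± e_i}` of `ℝ^n`. -/
def SignedBasis (n : ℕ) : Set (EuclideanSpace ℝ (Fin n)) :=
  {b | ∃ i : Fin n, b = EuclideanSpace.single i (1 : ℝ) ∨ b = -EuclideanSpace.single i (1 : ℝ)}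

/-- Set of local minimizers of `f(·; Y)` over the unit sphere `S^{n-1}`. -/
def LocalMins (n p : ℕ) (μ : ℝ) (Y : Matrix (Fin n) (Fin p) ℝ) :
    Set (EuclideanSpace ℝ (Fin n)) :=
  {q | q ∈ Metric.sphere (0 : EuclideanSpace ℝ (Fin n)) 1 ∧
       IsLocalMinOn (ffun n p μ Y) (Metric.sphere (0 : EuclideanSpace ℝ (Fin n)) 1) q}

/-- Expected objective `E_x[h_μ(q(w)ᵀ x)]` for `x` with i.i.d. `BG(θ)` entries. -/
def Gexp (n : ℕ) (θ μ : ℝ) (w : EuclideanSpace ℝ (Fin (n - 1))) : ℝ :=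
  ∫ x, hmu μ (∑ i : Fin n, qmap n w i * x i) ∂(bgVec θ n)

/-- The squared hyperbolic secant, the derivative of `tanh`. -/
def sech2 (z : ℝ) : ℝ := (Real.cosh z ^ 2)⁻¹

lemma sech2_pos (z : ℝ) : 0 < sech2 z := by
  have := Real.cosh_pos z
  unfold sech2; positivity

lemma sech2_le_one (z : ℝ) : sech2 z ≤ 1 := by
  unfold sech2
  exact inv_le_one_of_one_le₀ (one_le_pow₀ (Real.one_le_cosh z))

@[fun_prop]
lemma continuous_sech2 : Continuous sech2 :=
  (Real.continuous_cosh.pow 2).inv₀ fun z => (pow_pos (Real.cosh_pos z) 2).ne'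

lemma sech2_le_sech2 {x y : ℝ} (h : |x| ≤ |y|) : sech2 y ≤ sech2 x := by
  unfold sech2
  have := Real.cosh_pos x
  have := Real.cosh_le_cosh.2 h
  gcongr

lemma sech2_le_exp (z : ℝ) : sech2 z ≤ 4 * Real.exp (-2 * |z|) := by
  unfold sech2
  have h : Real.exp |z| / 2 ≤ Real.cosh z := by
    rw [← Real.cosh_abs, Real.cosh_eq]
    have := Real.exp_pos (-|z|)
    linarith
  have h2 : (Real.exp |z| / 2) ^ 2 ≤ Real.cosh z ^ 2 := by gcongr
  calc (Real.cosh z ^ 2)⁻¹ ≤ ((Real.exp |z| / 2) ^ 2)⁻¹ := by gcongr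
    _ = 4 * Real.exp (-2 * |z|) := by
      rw [show -2 * |z| = -(|z| + |z|) by ring, Real.exp_neg, Real.exp_add]
      field_simp; norm_num

lemma hasDerivAt_tanh' (z : ℝ) : HasDerivAt Real.tanh (sech2 z) z := by
  have h := (Real.hasDerivAt_sinh z).div (Real.hasDerivAt_cosh z) (Real.cosh_pos z).ne'
  have e : (Real.sinh / Real.cosh) = Real.tanh := by
    ext x; rw [Pi.div_apply, Real.tanh_eq_sinh_div_cosh]
  rw [e] at h
  refine h.congr_deriv ?_
  unfold sech2
  rw [show Real.cosh z * Real.cosh z - Real.sinh z * Real.sinh z = 1 by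
    have := Real.cosh_sq z; nlinarith]
  simp

@[fun_prop]
lemma continuous_tanh' : Continuous Real.tanh :=
  continuous_iff_continuousAt.2 fun z => (hasDerivAt_tanh' z).continuousAt

lemma sech2_eq (z : ℝ) : sech2 z = 1 - Real.tanh z ^ 2 := by
  have h1 := Real.cosh_sq z
  have h := Real.cosh_pos z
  rw [Real.tanh_eq_sinh_div_cosh, sech2]
  field_simp
  linarith

lemma hasDerivAt_sech2 (z : ℝ) : HasDerivAt sech2 (-2 * Real.tanh z * sech2 z) z := by
  have h := ((hasDerivAt_tanh' z).pow 2).const_sub 1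
  have e : sech2 = fun z => 1 - Real.tanh z ^ 2 := funext sech2_eq
  nth_rewrite 1 [e]
  refine h.congr_deriv ?_
  ring

lemma abs_tanh_sub_le (x y : ℝ) : |Real.tanh x - Real.tanh y| ≤ |x - y| := by
  have := Convex.norm_image_sub_le_of_norm_hasDerivWithin_le (f := Real.tanh) (f' := sech2)
    (C := 1) (s := Set.univ) (x := y) (y := x)
    (fun z _ => (hasDerivAt_tanh' z).hasDerivWithinAt)
    (fun z _ => by rw [Real.norm_eq_abs, abs_of_pos (sech2_pos z)]; exact sech2_le_one z)
    convex_univ trivial trivial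
  simpa using this

lemma abs_sech2_sub_le (x y : ℝ) : |sech2 x - sech2 y| ≤ 2 * |x - y| := by
  have := Convex.norm_image_sub_le_of_norm_hasDerivWithin_le (f := sech2)
    (f' := fun z => -2 * Real.tanh z * sech2 z)
    (C := 2) (s := Set.univ) (x := y) (y := x)
    (fun z _ => (hasDerivAt_sech2 z).hasDerivWithinAt)
    (fun z _ => by
      have h1 := (Real.abs_tanh_lt_one z).le
      have h2 := sech2_le_one z
      have h3 := sech2_pos z
      rw [Real.norm_eq_abs, abs_mul, abs_mul, abs_of_pos h3]
      norm_num
      nlinarith [abs_nonneg (Real.tanh z)])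
    convex_univ trivial trivial
  simpa using this

/-- The Gaussian average of `sech²(τ V)`. -/
def gA (τ : ℝ) : ℝ := ∫ v, sech2 (τ * v) ∂gaussianReal 0 1

/-- The Gaussian average of `sech²(τ V) V²`. -/
def gB (τ : ℝ) : ℝ := ∫ v, sech2 (τ * v) * v ^ 2 ∂gaussianReal 0 1

lemma integrable_sq_gaussian : Integrable (fun v : ℝ => v ^ 2) (gaussianReal 0 1) :=
  (memLp_id_gaussianReal' (μ := 0) (v := 1) 2 (by simp)).integrable_sq

lemma integrable_gA (τ : ℝ) : Integrable (fun v => sech2 (τ * v)) (gaussianReal 0 1) := by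
  refine (integrable_const (1 : ℝ)).mono' (by fun_prop) (ae_of_all _ fun v => ?_)
  rw [Real.norm_eq_abs, abs_of_pos (sech2_pos _)]
  exact sech2_le_one _

lemma integrable_gB (τ : ℝ) :
    Integrable (fun v => sech2 (τ * v) * v ^ 2) (gaussianReal 0 1) := by
  refine integrable_sq_gaussian.mono' (by fun_prop) (ae_of_all _ fun v => ?_)
  rw [Real.norm_eq_abs, abs_of_nonneg (mul_nonneg (sech2_pos _).le (sq_nonneg v))]
  exact mul_le_of_le_one_left (sq_nonneg v) (sech2_le_one _)

lemma sech2_mul_le {α β : ℝ} (h0 : 0 ≤ α) (h : α ≤ β) (v : ℝ) :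
    sech2 (β * v) ≤ sech2 (α * v) := by
  apply sech2_le_sech2
  rw [abs_mul, abs_mul, abs_of_nonneg h0, abs_of_nonneg (h0.trans h)]
  gcongr

lemma gA_antitone {α β : ℝ} (h0 : 0 ≤ α) (h : α ≤ β) : gA β ≤ gA α :=
  integral_mono (integrable_gA β) (integrable_gA α) fun v => sech2_mul_le h0 h v

lemma gB_antitone {α β : ℝ} (h0 : 0 ≤ α) (h : α ≤ β) : gB β ≤ gB α :=
  integral_mono (integrable_gB β) (integrable_gB α) fun v =>
    mul_le_mul_of_nonneg_right (sech2_mul_le h0 h v) (sq_nonneg v)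

lemma gA_nonneg (τ : ℝ) : 0 ≤ gA τ := integral_nonneg fun _ => (sech2_pos _).le

lemma gB_nonneg (τ : ℝ) : 0 ≤ gB τ :=
  integral_nonneg fun v => mul_nonneg (sech2_pos _).le (sq_nonneg v)

lemma gA_pos (τ : ℝ) : 0 < gA τ := by
  unfold gA
  rw [integral_pos_iff_support_of_nonneg (fun v => (sech2_pos _).le) (integrable_gA τ)]
  have : Function.support (fun v => sech2 (τ * v)) = Set.univ := by
    ext v; simp [(sech2_pos _).ne']
  rw [this]; simp

lemma gB_pos (τ : ℝ) : 0 < gB τ := by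
  unfold gB
  rw [integral_pos_iff_support_of_nonneg
    (fun v => mul_nonneg (sech2_pos _).le (sq_nonneg v)) (integrable_gB τ)]
  have : Function.support (fun v => sech2 (τ * v) * v ^ 2) = {0}ᶜ := by
    ext v; simp [(sech2_pos _).ne']
  rw [this]
  have := nullSingletonClass_gaussianReal (μ := 0) (v := 1) one_ne_zero
  rw [prob_compl_eq_one_sub (measurableSet_singleton _), measure_singleton]
  simp

lemma gaussianPDF_std (v : ℝ) :
    gaussianPDFReal 0 1 v = (√(2 * π))⁻¹ * Real.exp (-v ^ 2 / 2) := by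
  simp [gaussianPDFReal]

lemma gaussianPDF_std_zero_le : (√(2 * π))⁻¹ ≤ 1 := by
  apply inv_le_one_of_one_le₀
  rw [Real.one_le_sqrt]
  linarith [Real.pi_gt_three]

lemma gaussianPDF_std_le (v : ℝ) : gaussianPDFReal 0 1 v ≤ (√(2 * π))⁻¹ := by
  rw [gaussianPDF_std]
  exact mul_le_of_le_one_right (by positivity) (Real.exp_le_one_iff.2 (by nlinarith [sq_nonneg v]))

lemma integrable_pow_mul_sech2 (k : ℕ) : Integrable fun u : ℝ => sech2 u * |u| ^ k := by
  have h0 : Integrable fun u : ℝ => Real.exp (-|u|) := by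
    rw [← integrableOn_univ, ← Set.Iic_union_Ioi (a := (0 : ℝ)), integrableOn_union]
    constructor
    · refine (integrableOn_exp_Iic 0).congr_fun (fun u hu => ?_) measurableSet_Iic
      simp only [abs_of_nonpos (Set.mem_Iic.1 hu), neg_neg]
    · refine (integrableOn_exp_neg_Ioi 0).congr_fun (fun u hu => ?_) measurableSet_Ioi
      simp only [abs_of_pos (Set.mem_Ioi.1 hu)]
  have h1 := h0.const_mul (4 * (k.factorial : ℝ))
  refine h1.mono' (by fun_prop) (ae_of_all _ fun u => ?_)
  have hs := (sech2_pos u).le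
  rw [Real.norm_eq_abs, abs_of_nonneg (by positivity)]
  have hp : |u| ^ k ≤ k.factorial * Real.exp |u| := by
    have := Real.pow_div_factorial_le_exp |u| (abs_nonneg u) k
    rwa [div_le_iff₀ (by positivity), mul_comm] at this
  calc sech2 u * |u| ^ k ≤ (4 * Real.exp (-2 * |u|)) * (k.factorial * Real.exp |u|) := by
        gcongr; exact sech2_le_exp u
    _ = 4 * k.factorial * Real.exp (-|u|) := by
        rw [show 4 * Real.exp (-2 * |u|) * (k.factorial * Real.exp |u|)
          = 4 * k.factorial * (Real.exp (-2 * |u|) * Real.exp |u|) by ring, ← Real.exp_add]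
        ring_nf

lemma integrable_sech2 : Integrable sech2 := by simpa using integrable_pow_mul_sech2 0

lemma integrable_sech2_mul_sq : Integrable fun u : ℝ => sech2 u * u ^ 2 := by
  simpa using integrable_pow_mul_sech2 2

lemma integrable_sech2_mul_pdf (τ : ℝ) :
    Integrable fun u : ℝ => sech2 u * gaussianPDFReal 0 1 (τ⁻¹ * u) := by
  refine integrable_sech2.mono' ?_ (ae_of_all _ fun u => ?_)
  · have := measurable_gaussianPDFReal 0 1
    exact (continuous_sech2.measurable.mul (this.comp (measurable_const_mul _))).aestronglyMeasurable
  · have h1 := (sech2_pos u).le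
    have h2 := gaussianPDFReal_nonneg 0 1 (τ⁻¹ * u)
    rw [Real.norm_eq_abs, abs_of_nonneg (by positivity)]
    exact mul_le_of_le_one_right h1 ((gaussianPDF_std_le _).trans gaussianPDF_std_zero_le)

lemma mul_gA {τ : ℝ} (h : 0 < τ) :
    τ * gA τ = ∫ u, sech2 u * gaussianPDFReal 0 1 (τ⁻¹ * u) := by
  have e := Measure.integral_comp_mul_left
    (fun u => sech2 u * gaussianPDFReal 0 1 (τ⁻¹ * u)) τ
  rw [abs_of_pos (inv_pos.2 h)] at e
  unfold gA
  rw [integral_gaussianReal_eq_integral_smul one_ne_zero]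
  have : ∀ x, gaussianPDFReal 0 1 x • sech2 (τ * x)
      = sech2 (τ * x) * gaussianPDFReal 0 1 (τ⁻¹ * (τ * x)) := fun x => by
    rw [inv_mul_cancel_left₀ h.ne', smul_eq_mul, mul_comm]
  simp_rw [this]
  rw [e, smul_eq_mul, mul_inv_cancel_left₀ h.ne']

lemma gA_one_le_mul_gA {τ : ℝ} (h : 1 ≤ τ) : gA 1 ≤ τ * gA τ := by
  rw [mul_gA (by linarith), ← one_mul (gA 1), mul_gA one_pos]
  refine integral_mono (integrable_sech2_mul_pdf 1) (integrable_sech2_mul_pdf τ) fun u => ?_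
  have : gaussianPDFReal 0 1 (1⁻¹ * u) ≤ gaussianPDFReal 0 1 (τ⁻¹ * u) := by
    rw [gaussianPDF_std, gaussianPDF_std]
    have h1 : τ⁻¹ ≤ 1 := inv_le_one_of_one_le₀ h
    have h0 : 0 < τ⁻¹ := by positivity
    have : (τ⁻¹ * u) ^ 2 ≤ (1⁻¹ * u) ^ 2 := by
      rw [mul_pow, mul_pow]; gcongr
    gcongr
  exact mul_le_mul_of_nonneg_left this (sech2_pos u).le

lemma mul_gA_le {τ : ℝ} (h : 0 < τ) : τ * gA τ ≤ ∫ u, sech2 u := by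
  rw [mul_gA h]
  refine integral_mono (integrable_sech2_mul_pdf τ) integrable_sech2 fun u => ?_
  exact mul_le_of_le_one_right (sech2_pos u).le
    ((gaussianPDF_std_le _).trans gaussianPDF_std_zero_le)

lemma pow_mul_gB_le {τ : ℝ} (h : 0 < τ) : τ ^ 3 * gB τ ≤ ∫ u, sech2 u * u ^ 2 := by
  have e := Measure.integral_comp_mul_left (fun u => sech2 u * u ^ 2) τ
  rw [abs_of_pos (inv_pos.2 h), smul_eq_mul] at e
  have hB : gB τ ≤ ∫ v, sech2 (τ * v) * v ^ 2 := by
    unfold gB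
    rw [integral_gaussianReal_eq_integral_smul one_ne_zero]
    have hi : Integrable fun v : ℝ => sech2 (τ * v) * v ^ 2 := by
      have := (integrable_sech2_mul_sq.comp_mul_left' h.ne').const_mul (τ⁻¹ ^ 2)
      refine this.congr (ae_of_all _ fun v => ?_)
      simp only; field_simp
    refine integral_mono_of_nonneg (ae_of_all _ fun v => ?_) hi (ae_of_all _ fun v => ?_)
    · exact mul_nonneg (gaussianPDFReal_nonneg _ _ _) (mul_nonneg (sech2_pos _).le (sq_nonneg v))
    · exact mul_le_of_le_one_left (mul_nonneg (sech2_pos _).le (sq_nonneg v))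
        ((gaussianPDF_std_le _).trans gaussianPDF_std_zero_le)
  have : ∫ v, sech2 (τ * v) * (τ * v) ^ 2 = τ ^ 2 * ∫ v, sech2 (τ * v) * v ^ 2 := by
    rw [← integral_const_mul]; congr 1; ext v; ring
  rw [this] at e
  have e2 : ∫ u, sech2 u * u ^ 2 = τ ^ 3 * ∫ v, sech2 (τ * v) * v ^ 2 := by
    rw [eq_comm, inv_mul_eq_iff_eq_mul₀ h.ne'] at e
    rw [e]; ring
  rw [e2]; gcongr

lemma mul_gA_sub_le {α β : ℝ} (h : 0 < α) (hβ : 0 < β) :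
    β * gA β - α * gA α ≤ (∫ u, sech2 u * u ^ 2) / α ^ 2 := by
  rw [mul_gA h, mul_gA hβ, ← integral_sub (integrable_sech2_mul_pdf β) (integrable_sech2_mul_pdf α),
    ← integral_div]
  refine integral_mono ((integrable_sech2_mul_pdf β).sub (integrable_sech2_mul_pdf α))
    (integrable_sech2_mul_sq.div_const _) fun u => ?_
  have h1 := gaussianPDF_std_le (β⁻¹ * u)
  have h2 : (√(2 * π))⁻¹ * (1 - (α⁻¹ * u) ^ 2) ≤ gaussianPDFReal 0 1 (α⁻¹ * u) := by
    rw [gaussianPDF_std]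
    gcongr
    have := Real.add_one_le_exp (-(α⁻¹ * u) ^ 2 / 2)
    nlinarith [sq_nonneg (α⁻¹ * u)]
  have h3 := gaussianPDF_std_zero_le
  have h4 : (√(2 * π))⁻¹ * (α⁻¹ * u) ^ 2 ≤ (α⁻¹ * u) ^ 2 :=
    mul_le_of_le_one_left (sq_nonneg _) h3
  have h5 : gaussianPDFReal 0 1 (β⁻¹ * u) - gaussianPDFReal 0 1 (α⁻¹ * u) ≤ (α⁻¹ * u) ^ 2 := by
    linarith
  calc _ = sech2 u * (gaussianPDFReal 0 1 (β⁻¹ * u) - gaussianPDFReal 0 1 (α⁻¹ * u)) := by ring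
    _ ≤ sech2 u * (α⁻¹ * u) ^ 2 := mul_le_mul_of_nonneg_left h5 (sech2_pos u).le
    _ = _ := by field_simp

/-- Stein's identity for `tanh`. -/
lemma integral_tanh_mul_gaussian (τ : ℝ) :
    ∫ v, Real.tanh (τ * v) * v ∂gaussianReal 0 1 = τ * gA τ := by
  unfold gA
  rw [integral_gaussianReal_eq_integral_smul one_ne_zero,
    integral_gaussianReal_eq_integral_smul one_ne_zero, ← integral_const_mul]
  have hd : ∀ v : ℝ, HasDerivAt (gaussianPDFReal 0 1) (-v * gaussianPDFReal 0 1 v) v := by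
    intro v
    have e : gaussianPDFReal 0 1 = fun v => (√(2 * π))⁻¹ * Real.exp (-v ^ 2 / 2) :=
      funext gaussianPDF_std
    have := ((((hasDerivAt_id v).pow 2).neg.div_const 2).exp).const_mul (√(2 * π))⁻¹
    rw [gaussianPDF_std v, e]
    refine this.congr_deriv ?_
    simp; ring
  have hu : ∀ v : ℝ, HasDerivAt (fun v => Real.tanh (τ * v)) (sech2 (τ * v) * τ) v := fun v => by
    have h1 : HasDerivAt (fun v : ℝ => τ * v) τ v := by
      simpa using (hasDerivAt_id v).const_mul τ
    exact (hasDerivAt_tanh' (τ * v)).comp v h1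
  have hm := measurable_gaussianPDFReal 0 1
  have hg := integrable_gaussianPDFReal 0 1
  have hvg : Integrable fun v : ℝ => v * gaussianPDFReal 0 1 v := by
    have : Integrable (fun v : ℝ => v) (gaussianReal 0 1) :=
      (memLp_id_gaussianReal' (μ := 0) (v := 1) 1 (by simp)).integrable le_rfl
    rw [gaussianReal_of_var_ne_zero _ one_ne_zero,
      integrable_withDensity_iff_integrable_smul' (measurable_gaussianPDF 0 1)
        (ae_of_all _ fun x => gaussianPDF_lt_top)] at this
    refine this.congr (ae_of_all _ fun v => ?_)
    simp [toReal_gaussianPDF, mul_comm]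
  have hb : ∀ x, |Real.tanh x| ≤ 1 := fun x => (Real.abs_tanh_lt_one x).le
  have key := integral_mul_deriv_eq_deriv_mul_of_integrable
    (u := fun v => Real.tanh (τ * v)) (v := gaussianPDFReal 0 1)
    (u' := fun v => sech2 (τ * v) * τ) (v' := fun v => -v * gaussianPDFReal 0 1 v)
    (fun v _ => hu v) (fun v _ => hd v) ?_ ?_ ?_
  · rw [← neg_inj, ← integral_neg, ← integral_neg]
    rw [← integral_neg] at key
    refine Eq.trans ?_ (key.trans ?_)
    · congr 1; ext v; simp; ring
    · congr 1; ext v; simp; ring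
  · refine hvg.norm.mono' (by fun_prop) (ae_of_all _ fun v => ?_)
    simp only [Pi.mul_apply, norm_mul, norm_neg, Real.norm_eq_abs]
    exact mul_le_of_le_one_left (by positivity) (hb _)
  · refine (hg.norm.const_mul |τ|).mono' (by fun_prop) (ae_of_all _ fun v => ?_)
    simp only [Pi.mul_apply, norm_mul, Real.norm_eq_abs, abs_of_pos (sech2_pos _)]
    gcongr
    exact mul_le_of_le_one_left (abs_nonneg τ) (sech2_le_one _)
  · refine hg.norm.mono' (by fun_prop) (ae_of_all _ fun v => ?_)
    simp only [Pi.mul_apply, norm_mul, Real.norm_eq_abs]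
    exact mul_le_of_le_one_left (by positivity) (hb _)

lemma integral_sech2_mul_sq_nonneg : 0 ≤ ∫ u, sech2 u * u ^ 2 :=
  integral_nonneg fun u => mul_nonneg (sech2_pos u).le (sq_nonneg u)

/-- Quantitative decay of `gA`. -/
lemma exists_gA_sub_gA_ge : ∃ c K : ℝ, 0 < c ∧ 1 ≤ K ∧ ∀ α β : ℝ, 0 ≤ α → 0 ≤ β →
    K ≤ β ^ 2 - α ^ 2 → c * (β ^ 2 - α ^ 2) / β ^ 3 ≤ gA α - gA β := by
  set M := ∫ u, sech2 u * u ^ 2 with hM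
  have hM0 : 0 ≤ M := integral_sech2_mul_sq_nonneg
  have hA := gA_pos 1
  have aux : ∀ α β : ℝ, 0 < α → 1 ≤ β → β ^ 2 ≤ 2 * α ^ 2 → α ≤ β →
      16 * M / gA 1 ≤ β ^ 2 - α ^ 2 → gA 1 / 4 * (β ^ 2 - α ^ 2) / β ^ 3 ≤ gA α - gA β := by
    intro α β hα hβ h2 hαβ hK
    have h3 := mul_gA_sub_le hα (by linarith : 0 < β)
    have h4 := gA_one_le_mul_gA hβ
    rw [← hM] at h3
    have hβ0 : 0 < β := by linarith
    have hK' : 16 * M ≤ gA 1 * (β ^ 2 - α ^ 2) := by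
      rw [div_le_iff₀ hA] at hK; linarith
    have h5 : β * gA β - α * gA α ≤ 4 * M / β ^ 2 * 1 := by
      refine h3.trans ?_
      rw [mul_one, div_le_div_iff₀ (by positivity) (by positivity)]
      nlinarith
    -- `α gA α ≥ β gA β - 4M/β²`
    have h6 : α * (gA α - gA β) ≥ (β - α) * gA β - 4 * M / β ^ 2 := by linarith
    have h7 : gA 1 / β ≤ gA β := by
      rw [div_le_iff₀ hβ0]; linarith
    have h8 : (β - α) * (gA 1 / β) ≤ (β - α) * gA β :=
      mul_le_mul_of_nonneg_left h7 (by linarith)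
    have h9 : gA 1 * (β ^ 2 - α ^ 2) / (2 * β ^ 2) ≤ (β - α) * (gA 1 / β) := by
      rw [div_le_iff₀ (by positivity)]
      have : (β - α) * (gA 1 / β) * (2 * β ^ 2) = gA 1 * ((β - α) * (2 * β)) := by
        field_simp
      rw [this]
      apply mul_le_mul_of_nonneg_left _ hA.le
      nlinarith
    have h10 : 4 * M / β ^ 2 ≤ gA 1 * (β ^ 2 - α ^ 2) / (4 * β ^ 2) := by
      rw [div_le_div_iff₀ (by positivity) (by positivity)]
      nlinarith [sq_nonneg β]
    have h11 : gA 1 * (β ^ 2 - α ^ 2) / (4 * β ^ 2) ≤ α * (gA α - gA β) := by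
      have : gA 1 * (β ^ 2 - α ^ 2) / (2 * β ^ 2) = gA 1 * (β ^ 2 - α ^ 2) / (4 * β ^ 2)
        + gA 1 * (β ^ 2 - α ^ 2) / (4 * β ^ 2) := by field_simp; ring
      linarith
    have h12 : 0 ≤ gA α - gA β := by linarith [gA_antitone hα.le hαβ]
    have h13 : gA 1 * (β ^ 2 - α ^ 2) / (4 * β ^ 2) ≤ β * (gA α - gA β) :=
      h11.trans (mul_le_mul_of_nonneg_right hαβ h12)
    rw [div_le_iff₀ (by positivity)] at h13 ⊢
    nlinarith
  refine ⟨gA 1 / 8, max 2 (32 * M / gA 1), by positivity, le_trans (by norm_num) (le_max_left _ _),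
    fun α β hα hβ hK => ?_⟩
  have hK1 := (le_max_left _ _).trans hK
  have hK2 := (le_max_right _ _).trans hK
  have hβ1 : 1 ≤ β := by nlinarith [sq_nonneg α]
  have hdiv : 32 * M / gA 1 = 2 * (16 * M / gA 1) := by ring
  rw [hdiv] at hK2
  have h16 : 0 ≤ 16 * M / gA 1 := by positivity
  have hαβ : α ≤ β := by nlinarith
  by_cases h : β ^ 2 ≤ 2 * α ^ 2
  · have hα0 : 0 < α := by
      rcases hα.lt_or_eq with h' | h'
      · exact h'
      · rw [← h'] at h; nlinarith
    refine le_trans ?_ (aux α β hα0 hβ1 h hαβ (by linarith))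
    gcongr <;> linarith
  · push Not at h
    have hs : (β / √2) ^ 2 = β ^ 2 / 2 := by rw [div_pow, Real.sq_sqrt (by norm_num)]
    have hp : 0 < β / √2 := by positivity
    have h1 : α ≤ β / √2 := by
      refine (sq_le_sq₀ hα hp.le).1 ?_
      rw [hs]; linarith
    have h2 : β / √2 ≤ β := by
      refine (sq_le_sq₀ hp.le hβ).1 ?_
      rw [hs]; nlinarith
    have := aux (β / √2) β hp hβ1 (by rw [hs]; linarith) h2 (by rw [hs]; nlinarith [sq_nonneg α])
    have h3 := gA_antitone hα h1
    refine le_trans ?_ (this.trans (by linarith))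
    rw [hs]
    gcongr ?_ / _
    nlinarith [sq_nonneg α]

/-- Strict negativity of the second Gaussian derivative at large scales. -/
lemma exists_gA_sub_gB_ge : ∃ c τ₀ : ℝ, 0 < c ∧ 1 ≤ τ₀ ∧ ∀ τ : ℝ, τ₀ ≤ τ →
    c / τ ≤ gA τ - gB τ := by
  set M := ∫ u, sech2 u * u ^ 2 with hM
  have hM0 : 0 ≤ M := integral_sech2_mul_sq_nonneg
  have hA := gA_pos 1
  refine ⟨gA 1 / 2, max 1 (2 * M / gA 1), by positivity, le_max_left _ _, fun τ hτ => ?_⟩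
  have h1 := (le_max_left _ _).trans hτ
  have h2 := (le_max_right _ _).trans hτ
  rw [div_le_iff₀ hA] at h2
  have h0 : 0 < τ := by linarith
  have h3 := pow_mul_gB_le h0
  have h4 := gA_one_le_mul_gA h1
  rw [← hM] at h3
  rw [div_le_iff₀ h0]
  have h5 : τ * gB τ ≤ gA 1 / 2 := by
    have : τ ^ 2 * (τ * gB τ) ≤ τ ^ 2 * (gA 1 / 2) := by
      have : τ * gA 1 ≤ τ ^ 2 * gA 1 := by nlinarith
      nlinarith
    exact le_of_mul_le_mul_left this (by positivity)
  linarith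

/-- The law of a vector whose coordinates in `S` are independent standard Gaussians and whose
other coordinates vanish. -/
def gaussS {n : ℕ} (S : Finset (Fin n)) : Measure (Fin n → ℝ) :=
  Measure.pi fun l => gaussianReal 0 (if l ∈ S then 1 else 0)

instance {n : ℕ} (S : Finset (Fin n)) : IsProbabilityMeasure (gaussS S) := by
  unfold gaussS; infer_instance

/-- The probability that a Bernoulli(`θ`) support equals `S`. -/
def bw {n : ℕ} (θ : ℝ) (S : Finset (Fin n)) : ℝ := θ ^ S.card * (1 - θ) ^ Sᶜ.card

lemma bw_nonneg {n : ℕ} {θ : ℝ} (h0 : 0 ≤ θ) (h1 : θ ≤ 1) (S : Finset (Fin n)) : 0 ≤ bw θ S := by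
  have : 0 ≤ 1 - θ := by linarith
  unfold bw; positivity

lemma bgVec_eq {n : ℕ} {θ : ℝ} (h0 : 0 ≤ θ) (h1 : θ ≤ 1) :
    bgVec θ n = ∑ S : Finset (Fin n), ENNReal.ofReal (bw θ S) • gaussS S := by
  unfold bgVec
  refine Measure.pi_eq fun s hs => ?_
  have hb : ∀ i, bg θ (s i) = ENNReal.ofReal θ * gaussianReal 0 1 (s i)
      + ENNReal.ofReal (1 - θ) * gaussianReal 0 0 (s i) := by
    intro i
    rw [bg, gaussianReal_zero_var, Measure.add_apply]
    rfl
  simp_rw [hb]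
  rw [Fintype.prod_add]
  simp only [Measure.coe_finsetSum, Finset.sum_apply, Measure.smul_apply, smul_eq_mul, gaussS,
    Measure.pi_pi]
  refine Finset.sum_congr rfl fun S _ => ?_
  have h2 : ∏ i, gaussianReal 0 (if i ∈ S then (1 : ℝ≥0) else 0) (s i)
      = (∏ i ∈ S, gaussianReal 0 1 (s i)) * ∏ i ∈ Sᶜ, gaussianReal 0 0 (s i) := by
    rw [← Finset.prod_mul_prod_compl S]
    congr 1
    · exact Finset.prod_congr rfl fun i hi => by rw [if_pos hi]
    · exact Finset.prod_congr rfl fun i hi => by rw [if_neg (Finset.mem_compl.1 hi)]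
  rw [h2, Finset.prod_mul_distrib, Finset.prod_mul_distrib, Finset.prod_const, Finset.prod_const,
    bw, ENNReal.ofReal_mul (by positivity), ENNReal.ofReal_pow h0,
    ENNReal.ofReal_pow (by linarith)]
  ring

lemma integrable_bgVec {n : ℕ} {θ : ℝ} (h0 : 0 ≤ θ) (h1 : θ ≤ 1) {F : (Fin n → ℝ) → ℝ}
    (hF : ∀ S, Integrable F (gaussS S)) : Integrable F (bgVec θ n) := by
  rw [bgVec_eq h0 h1, integrable_finsetSum_measure]
  intro S _
  exact (hF S).smul_measure ENNReal.ofReal_ne_top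

lemma integral_bgVec {n : ℕ} {θ : ℝ} (h0 : 0 ≤ θ) (h1 : θ ≤ 1) {F : (Fin n → ℝ) → ℝ}
    (hF : ∀ S, Integrable F (gaussS S)) :
    ∫ x, F x ∂(bgVec θ n) = ∑ S, bw θ S * ∫ x, F x ∂(gaussS S) := by
  rw [bgVec_eq h0 h1, integral_finsetSum_measure]
  · refine Finset.sum_congr rfl fun S _ => ?_
    rw [integral_smul_measure, ENNReal.toReal_ofReal (bw_nonneg h0 h1 S), smul_eq_mul]
  · intro S _
    exact (hF S).smul_measure ENNReal.ofReal_ne_top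

section GaussS

variable {n : ℕ} (S : Finset (Fin n))

lemma hasGaussianLaw_gaussS : HasGaussianLaw (fun x : Fin n → ℝ => x) (gaussS S) := by
  refine iIndepFun.hasGaussianLaw (X := fun i (x : Fin n → ℝ) => x i) (fun i => ?_) ?_
  · have : Measure.map (fun x : Fin n → ℝ => x i) (gaussS S)
        = gaussianReal 0 (if i ∈ S then 1 else 0) :=
      (measurePreserving_eval (fun l => gaussianReal 0 (if l ∈ S then (1 : ℝ≥0) else 0)) i).map_eq
    exact ⟨by rw [this]; infer_instance⟩
  · exact iIndepFun_pi (X := fun _ => id) fun i => aemeasurable_id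

/-- The linear functional `x ↦ a ⬝ᵥ x`. -/
def dotCLM (a : Fin n → ℝ) : (Fin n → ℝ) →L[ℝ] ℝ :=
  ∑ i, a i • ContinuousLinearMap.proj i

lemma dotCLM_apply (a x : Fin n → ℝ) : dotCLM a x = a ⬝ᵥ x := by
  simp [dotCLM, dotProduct]

@[fun_prop]
lemma continuous_dot (a : Fin n → ℝ) : Continuous fun x : Fin n → ℝ => a ⬝ᵥ x := by
  unfold dotProduct; fun_prop

@[fun_prop]
lemma measurable_dot (a : Fin n → ℝ) : Measurable fun x : Fin n → ℝ => a ⬝ᵥ x :=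
  (continuous_dot a).measurable

lemma hasGaussianLaw_dot (a : Fin n → ℝ) :
    HasGaussianLaw (fun x : Fin n → ℝ => a ⬝ᵥ x) (gaussS S) := by
  simpa [dotCLM_apply] using (hasGaussianLaw_gaussS S).map_fun (dotCLM a)

lemma hasGaussianLaw_dot_pair (a b : Fin n → ℝ) :
    HasGaussianLaw (fun x : Fin n → ℝ => (a ⬝ᵥ x, b ⬝ᵥ x)) (gaussS S) := by
  simpa [dotCLM_apply] using (hasGaussianLaw_gaussS S).map_fun ((dotCLM a).prod (dotCLM b))

lemma memLp_dot (a : Fin n → ℝ) : MemLp (fun x : Fin n → ℝ => a ⬝ᵥ x) 2 (gaussS S) :=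
  (hasGaussianLaw_dot S a).memLp_two

lemma map_eval_gaussS (i : Fin n) : Measure.map (fun x : Fin n → ℝ => x i) (gaussS S)
    = gaussianReal 0 (if i ∈ S then 1 else 0) :=
  (measurePreserving_eval (fun l => gaussianReal 0 (if l ∈ S then (1 : ℝ≥0) else 0)) i).map_eq

lemma memLp_eval (i : Fin n) : MemLp (fun x : Fin n → ℝ => x i) 2 (gaussS S) := by
  simpa using memLp_dot S (Pi.single i 1)

lemma integral_eval_gaussS (i : Fin n) : ∫ x, x i ∂(gaussS S) = 0 := by
  have h := integral_map (μ := gaussS S) (φ := fun x : Fin n → ℝ => x i) (f := fun y : ℝ => y)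
    (measurable_pi_apply i).aemeasurable (by fun_prop)
  rw [← h, map_eval_gaussS]
  exact integral_id_gaussianReal

lemma covariance_eval_gaussS (i j : Fin n) :
    cov[fun x : Fin n → ℝ => x i, fun x : Fin n → ℝ => x j; gaussS S]
      = if i = j ∧ i ∈ S then 1 else 0 := by
  by_cases hij : i = j
  · subst hij
    rw [covariance_self (measurable_pi_apply i).aemeasurable]
    have h := variance_map (μ := gaussS S) (Y := fun x : Fin n → ℝ => x i) (X := fun y : ℝ => y)
      (by fun_prop) (measurable_pi_apply i).aemeasurable
    have h2 : Var[fun x : Fin n → ℝ => x i; gaussS S] =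
        Var[fun y : ℝ => y; Measure.map (fun x : Fin n → ℝ => x i) (gaussS S)] := by
      rw [h]; rfl
    rw [h2, map_eval_gaussS, variance_fun_id_gaussianReal]
    by_cases hS : i ∈ S <;> simp [hS]
  · rw [if_neg (by tauto)]
    refine IndepFun.covariance_eq_zero ?_ (memLp_eval S i) (memLp_eval S j)
    exact (iIndepFun_pi (X := fun _ => id) (μ := fun l => gaussianReal 0
      (if l ∈ S then (1 : ℝ≥0) else 0)) fun i => aemeasurable_id).indepFun hij

lemma integral_dot_gaussS (a : Fin n → ℝ) : ∫ x, a ⬝ᵥ x ∂(gaussS S) = 0 := by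
  unfold dotProduct
  rw [integral_finsetSum]
  · exact Finset.sum_eq_zero fun i _ => by rw [integral_const_mul, integral_eval_gaussS, mul_zero]
  · exact fun i _ => ((memLp_eval S i).integrable (by norm_num)).const_mul _

lemma covariance_dot_gaussS (a b : Fin n → ℝ) :
    cov[fun x : Fin n → ℝ => a ⬝ᵥ x, fun x : Fin n → ℝ => b ⬝ᵥ x; gaussS S]
      = ∑ l ∈ S, a l * b l := by
  unfold dotProduct
  rw [covariance_fun_sum_fun_sum (fun i => (memLp_eval S i).const_mul _)
    (fun i => (memLp_eval S i).const_mul _)]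
  simp_rw [covariance_const_mul_left, covariance_const_mul_right, covariance_eval_gaussS]
  rw [← Finset.sum_subset (Finset.subset_univ S)]
  · refine Finset.sum_congr rfl fun i hi => ?_
    simp [hi]
  · intro i _ hi
    simp [hi]

lemma map_dot_gaussS (a : Fin n → ℝ) :
    Measure.map (fun x : Fin n → ℝ => a ⬝ᵥ x) (gaussS S)
      = Measure.map (fun y => √(∑ l ∈ S, a l ^ 2) * y) (gaussianReal 0 1) := by
  rw [(hasGaussianLaw_dot S a).map_eq_gaussianReal, integral_dot_gaussS,
    gaussianReal_map_const_mul]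
  congr 1
  · simp
  · have : Var[fun x : Fin n → ℝ => a ⬝ᵥ x; gaussS S] = ∑ l ∈ S, a l ^ 2 := by
      rw [← covariance_self (by fun_prop), covariance_dot_gaussS]
      simp [sq]
    rw [this]
    ext
    simp [Real.sq_sqrt (Finset.sum_nonneg fun l (_ : l ∈ S) => sq_nonneg (a l)),
      Finset.sum_nonneg fun l (_ : l ∈ S) => sq_nonneg (a l)]

lemma integral_comp_dot_gaussS (a : Fin n → ℝ) {F : ℝ → ℝ} (hF : Measurable F) :
    ∫ x, F (a ⬝ᵥ x) ∂(gaussS S) = ∫ y, F (√(∑ l ∈ S, a l ^ 2) * y) ∂(gaussianReal 0 1) := by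
  rw [← integral_map (by fun_prop) hF.aestronglyMeasurable, map_dot_gaussS,
    integral_map (by fun_prop) hF.aestronglyMeasurable]

lemma integrable_comp_dot_gaussS (a : Fin n → ℝ) {F : ℝ → ℝ} (hF : Measurable F) :
    Integrable (fun x => F (a ⬝ᵥ x)) (gaussS S) ↔
      Integrable (fun y => F (√(∑ l ∈ S, a l ^ 2) * y)) (gaussianReal 0 1) := by
  have h1 := integrable_map_measure (μ := gaussS S) (f := fun x : Fin n → ℝ => a ⬝ᵥ x) (g := F)
    hF.aestronglyMeasurable (by fun_prop)
  have h2 := integrable_map_measure (μ := gaussianReal 0 1)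
    (f := fun y => √(∑ l ∈ S, a l ^ 2) * y) (g := F) hF.aestronglyMeasurable (by fun_prop)
  rw [← map_dot_gaussS, h1] at h2
  exact h2

end GaussS

section Conditional

variable {n : ℕ} (S : Finset (Fin n))

/-- The residual of `v` after regression on `q` within the support `S`. -/
def resid (q v : Fin n → ℝ) : Fin n → ℝ :=
  v - ((∑ l ∈ S, q l * v l) / ∑ l ∈ S, q l ^ 2) • q

lemma sum_mul_eq_zero_of_sum_sq {q : Fin n → ℝ} (v : Fin n → ℝ) (h : ∑ l ∈ S, q l ^ 2 = 0) :
    ∑ l ∈ S, q l * v l = 0 := by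
  rw [Finset.sum_eq_zero_iff_of_nonneg fun l _ => sq_nonneg _] at h
  exact Finset.sum_eq_zero fun l hl => by rw [pow_eq_zero_iff two_ne_zero |>.1 (h l hl), zero_mul]

lemma resid_dot (q v x : Fin n → ℝ) : v ⬝ᵥ x =
    ((∑ l ∈ S, q l * v l) / ∑ l ∈ S, q l ^ 2) * (q ⬝ᵥ x) + resid S q v ⬝ᵥ x := by
  rw [resid, sub_dotProduct, smul_dotProduct, smul_eq_mul]
  ring

lemma sum_mul_resid (q v : Fin n → ℝ) : ∑ l ∈ S, q l * resid S q v l = 0 := by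
  have h : ∑ l ∈ S, q l * resid S q v l = (∑ l ∈ S, q l * v l)
      - ((∑ l ∈ S, q l * v l) / ∑ l ∈ S, q l ^ 2) * ∑ l ∈ S, q l ^ 2 := by
    simp only [resid, Pi.sub_apply, Pi.smul_apply, smul_eq_mul]
    rw [Finset.mul_sum, ← Finset.sum_sub_distrib]
    exact Finset.sum_congr rfl fun l _ => by ring
  rw [h, div_mul_cancel_of_imp (sum_mul_eq_zero_of_sum_sq S v), sub_self]

lemma sum_resid_sq (q v : Fin n → ℝ) : ∑ l ∈ S, resid S q v l ^ 2
    = ∑ l ∈ S, v l ^ 2 - (∑ l ∈ S, q l * v l) ^ 2 / ∑ l ∈ S, q l ^ 2 := by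
  have h : ∑ l ∈ S, resid S q v l ^ 2 = ∑ l ∈ S, v l ^ 2
      - ((∑ l ∈ S, q l * v l) / ∑ l ∈ S, q l ^ 2) * ∑ l ∈ S, q l * v l
      - ((∑ l ∈ S, q l * v l) / ∑ l ∈ S, q l ^ 2) * ∑ l ∈ S, q l * resid S q v l := by
    simp only [resid, Pi.sub_apply, Pi.smul_apply, smul_eq_mul]
    rw [Finset.mul_sum, Finset.mul_sum, ← Finset.sum_sub_distrib, ← Finset.sum_sub_distrib]
    exact Finset.sum_congr rfl fun l _ => by ring
  rw [h, sum_mul_resid]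
  ring

lemma indepFun_resid (q v : Fin n → ℝ) :
    IndepFun (fun x => q ⬝ᵥ x) (fun x => resid S q v ⬝ᵥ x) (gaussS S) := by
  refine (hasGaussianLaw_dot_pair S q (resid S q v)).indepFun_of_covariance_eq_zero ?_
  rw [covariance_dot_gaussS, sum_mul_resid]

lemma abs_tanh_le_one (z : ℝ) : |tanh z| ≤ 1 :=
  (abs_lt.2 ⟨Real.neg_one_lt_tanh z, Real.tanh_lt_one z⟩).le

lemma integrable_dot (a : Fin n → ℝ) : Integrable (fun x => a ⬝ᵥ x) (gaussS S) :=
  (memLp_dot S a).integrable (by norm_num)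

lemma integrable_dot_sq (a : Fin n → ℝ) : Integrable (fun x => (a ⬝ᵥ x) ^ 2) (gaussS S) :=
  (memLp_dot S a).integrable_sq

lemma integrable_tanh_dot (μ : ℝ) (q v : Fin n → ℝ) :
    Integrable (fun x => tanh (q ⬝ᵥ x / μ) * (v ⬝ᵥ x)) (gaussS S) := by
  refine (integrable_dot S v).mono (by fun_prop) (.of_forall fun x => ?_)
  rw [norm_mul]
  exact mul_le_of_le_one_left (norm_nonneg _) (abs_tanh_le_one _)

lemma integrable_sech2_dot (μ : ℝ) (q v : Fin n → ℝ) :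
    Integrable (fun x => sech2 (q ⬝ᵥ x / μ) * (v ⬝ᵥ x) ^ 2) (gaussS S) := by
  refine (integrable_dot_sq S v).mono (by fun_prop) (.of_forall fun x => ?_)
  rw [norm_mul]
  refine mul_le_of_le_one_left (norm_nonneg _) ?_
  rw [Real.norm_eq_abs, abs_of_pos (sech2_pos _)]
  exact sech2_le_one _

lemma integral_tanh_dot_gaussS (μ : ℝ) (q v : Fin n → ℝ) :
    ∫ x, tanh (q ⬝ᵥ x / μ) * (v ⬝ᵥ x) ∂(gaussS S) =
      (∑ l ∈ S, q l * v l) * (gA (√(∑ l ∈ S, q l ^ 2) / μ) / μ) := by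
  set c := ∑ l ∈ S, q l * v l with hc
  set s := ∑ l ∈ S, q l ^ 2 with hs
  have hs0 : 0 ≤ s := Finset.sum_nonneg fun l _ => sq_nonneg _
  have h1 : ∀ x, tanh (q ⬝ᵥ x / μ) * (v ⬝ᵥ x) = c / s * (tanh (q ⬝ᵥ x / μ) * (q ⬝ᵥ x))
      + tanh (q ⬝ᵥ x / μ) * (resid S q v ⬝ᵥ x) := by
    intro x
    rw [resid_dot S q v x]; ring
  simp_rw [h1]
  rw [integral_add ((integrable_tanh_dot S μ q q).const_mul _) (integrable_tanh_dot S μ q _),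
    integral_const_mul]
  have h2 : ∫ x, tanh (q ⬝ᵥ x / μ) * (resid S q v ⬝ᵥ x) ∂(gaussS S) = 0 := by
    have hi := (indepFun_resid S q v).comp (φ := fun y => tanh (y / μ)) (ψ := fun y => y)
      (by fun_prop) (by fun_prop)
    have := hi.integral_fun_mul_eq_mul_integral (by dsimp [Function.comp_def]; fun_prop)
      (by dsimp [Function.comp_def]; fun_prop)
    simp only [Function.comp_def] at this
    rw [this, integral_dot_gaussS, mul_zero]
  have h3 : ∫ x, tanh (q ⬝ᵥ x / μ) * (q ⬝ᵥ x) ∂(gaussS S) = s * (gA (√s / μ) / μ) := by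
    rw [integral_comp_dot_gaussS S q (F := fun y => tanh (y / μ) * y) (by fun_prop)]
    have h4 : ∀ y, tanh (√s * y / μ) * (√s * y) = √s * (tanh (√s / μ * y) * y) := by
      intro y
      rw [show √s * y / μ = √s / μ * y by ring]; ring
    simp_rw [← hs, h4]
    rw [integral_const_mul, integral_tanh_mul_gaussian]
    have := Real.mul_self_sqrt hs0
    calc √s * (√s / μ * gA (√s / μ)) = (√s * √s) * (gA (√s / μ) / μ) := by ring
      _ = _ := by rw [this]
  rw [h2, h3, add_zero, ← mul_assoc, div_mul_cancel_of_imp (sum_mul_eq_zero_of_sum_sq S v)]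

lemma integral_sech2_dot_gaussS (μ : ℝ) (q v : Fin n → ℝ) :
    ∫ x, sech2 (q ⬝ᵥ x / μ) * (v ⬝ᵥ x) ^ 2 ∂(gaussS S) =
      (∑ l ∈ S, v l ^ 2 - (∑ l ∈ S, q l * v l) ^ 2 / ∑ l ∈ S, q l ^ 2) *
          gA (√(∑ l ∈ S, q l ^ 2) / μ)
        + (∑ l ∈ S, q l * v l) ^ 2 / (∑ l ∈ S, q l ^ 2) * gB (√(∑ l ∈ S, q l ^ 2) / μ) := by
  rw [← sum_resid_sq S q v]
  set c := ∑ l ∈ S, q l * v l with hc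
  set s := ∑ l ∈ S, q l ^ 2 with hs
  set w := resid S q v
  have hs0 : 0 ≤ s := Finset.sum_nonneg fun l _ => sq_nonneg _
  have h1 : ∀ x, sech2 (q ⬝ᵥ x / μ) * (v ⬝ᵥ x) ^ 2
      = (c / s) ^ 2 * (sech2 (q ⬝ᵥ x / μ) * (q ⬝ᵥ x) ^ 2)
      + (2 * (c / s) * ((sech2 (q ⬝ᵥ x / μ) * (q ⬝ᵥ x)) * (w ⬝ᵥ x))
      + sech2 (q ⬝ᵥ x / μ) * (w ⬝ᵥ x) ^ 2) := by
    intro x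
    rw [resid_dot S q v x]; ring
  have hu : Integrable (fun x => sech2 (q ⬝ᵥ x / μ) * (q ⬝ᵥ x)) (gaussS S) := by
    refine (integrable_dot S q).mono (by fun_prop) (.of_forall fun x => ?_)
    rw [norm_mul]
    refine mul_le_of_le_one_left (norm_nonneg _) ?_
    rw [Real.norm_eq_abs, abs_of_pos (sech2_pos _)]
    exact sech2_le_one _
  have hi := (indepFun_resid S q v).comp (φ := fun y => sech2 (y / μ) * y) (ψ := fun y => y)
    (by fun_prop) (by fun_prop)
  have hi' := (indepFun_resid S q v).comp (φ := fun y => sech2 (y / μ)) (ψ := fun y => y ^ 2)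
    (by fun_prop) (by fun_prop)
  have hprod : Integrable (fun x => (sech2 (q ⬝ᵥ x / μ) * (q ⬝ᵥ x)) * (w ⬝ᵥ x)) (gaussS S) :=
    hi.integrable_mul hu (integrable_dot S w)
  have hsum : Integrable (fun x => 2 * (c / s) * ((sech2 (q ⬝ᵥ x / μ) * (q ⬝ᵥ x)) * (w ⬝ᵥ x))
      + sech2 (q ⬝ᵥ x / μ) * (w ⬝ᵥ x) ^ 2) (gaussS S) :=
    (hprod.const_mul _).add (integrable_sech2_dot S μ q w)
  simp_rw [h1]
  rw [integral_add ((integrable_sech2_dot S μ q q).const_mul _) hsum,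
    integral_add (hprod.const_mul _) (integrable_sech2_dot S μ q w),
    integral_const_mul, integral_const_mul]
  have h2 : ∫ x, (sech2 (q ⬝ᵥ x / μ) * (q ⬝ᵥ x)) * (w ⬝ᵥ x) ∂(gaussS S) = 0 := by
    have := hi.integral_fun_mul_eq_mul_integral (by dsimp [Function.comp_def]; fun_prop)
      (by dsimp [Function.comp_def]; fun_prop)
    simp only [Function.comp_def] at this
    rw [this, integral_dot_gaussS, mul_zero]
  have h3 : ∫ x, sech2 (q ⬝ᵥ x / μ) * (w ⬝ᵥ x) ^ 2 ∂(gaussS S)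
      = (∑ l ∈ S, w l ^ 2) * gA (√s / μ) := by
    have := hi'.integral_fun_mul_eq_mul_integral (by dsimp [Function.comp_def]; fun_prop)
      (by dsimp [Function.comp_def]; fun_prop)
    simp only [Function.comp_def] at this
    have hv : ∫ x, (w ⬝ᵥ x) ^ 2 ∂(gaussS S) = ∑ l ∈ S, w l ^ 2 := by
      have h := covariance_eq_sub (memLp_dot S w) (memLp_dot S w)
      rw [covariance_dot_gaussS, integral_dot_gaussS] at h
      simp only [Pi.mul_apply, ← sq] at h
      linarith
    rw [this, integral_comp_dot_gaussS S q (F := fun y => sech2 (y / μ)) (by fun_prop), hv, gA,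
      mul_comm, ← hs]
    congr 2
    ext y
    rw [show √s * y / μ = √s / μ * y by ring]
  have h4 : ∫ x, sech2 (q ⬝ᵥ x / μ) * (q ⬝ᵥ x) ^ 2 ∂(gaussS S) = s * gB (√s / μ) := by
    rw [integral_comp_dot_gaussS S q (F := fun y => sech2 (y / μ) * y ^ 2) (by fun_prop)]
    have h5 : ∀ y, sech2 (√s * y / μ) * (√s * y) ^ 2 = s * (sech2 (√s / μ * y) * y ^ 2) := by
      intro y
      rw [show √s * y / μ = √s / μ * y by ring, mul_pow, Real.sq_sqrt hs0]; ring
    simp_rw [← hs, h5]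
    rw [integral_const_mul]; rfl
  rw [h2, h3, h4]
  have h5 : (c / s) ^ 2 * (s * gB (√s / μ)) = c ^ 2 / s * gB (√s / μ) := by
    rcases eq_or_ne s 0 with h | h
    · simp [h]
    · field_simp
  rw [h5]; ring

end Conditional

/-- Population mean of the directional derivative of `f` at `q` along `v`. -/
def M1 {n : ℕ} (θ μ : ℝ) (q v : Fin n → ℝ) : ℝ :=
  ∫ x, tanh (q ⬝ᵥ x / μ) * (v ⬝ᵥ x) ∂(bgVec θ n)

/-- Population mean of the curvature term of `f` at `q` along `v`. -/
def M2 {n : ℕ} (θ μ : ℝ) (q v : Fin n → ℝ) : ℝ :=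
  ∫ x, sech2 (q ⬝ᵥ x / μ) * (v ⬝ᵥ x) ^ 2 ∂(bgVec θ n)

/-- `gphi μ s` is the mean of `h_μ''` at a centred Gaussian of variance `s`. -/
def gphi (μ s : ℝ) : ℝ := gA (√s / μ) / μ

lemma M1_eq {n : ℕ} {θ : ℝ} (h0 : 0 ≤ θ) (h1 : θ ≤ 1) (μ : ℝ) (q v : Fin n → ℝ) :
    M1 θ μ q v = ∑ S, bw θ S * ((∑ l ∈ S, q l * v l) * gphi μ (∑ l ∈ S, q l ^ 2)) := by
  rw [M1, integral_bgVec h0 h1 fun S => integrable_tanh_dot S μ q v]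
  simp_rw [integral_tanh_dot_gaussS]
  rfl

lemma M2_eq {n : ℕ} {θ : ℝ} (h0 : 0 ≤ θ) (h1 : θ ≤ 1) (μ : ℝ) (q v : Fin n → ℝ) :
    M2 θ μ q v = ∑ S, bw θ S *
      ((∑ l ∈ S, v l ^ 2 - (∑ l ∈ S, q l * v l) ^ 2 / ∑ l ∈ S, q l ^ 2) *
          gA (√(∑ l ∈ S, q l ^ 2) / μ)
        + (∑ l ∈ S, q l * v l) ^ 2 / (∑ l ∈ S, q l ^ 2) * gB (√(∑ l ∈ S, q l ^ 2) / μ)) := by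
  rw [M2, integral_bgVec h0 h1 fun S => integrable_sech2_dot S μ q v]
  simp_rw [integral_sech2_dot_gaussS]

lemma sum_bw {n : ℕ} (θ : ℝ) : ∑ S : Finset (Fin n), bw θ S = 1 := by
  have := Fintype.prod_add (fun _ : Fin n => θ) (fun _ => 1 - θ)
  simp only [Finset.prod_const] at this
  unfold bw
  rw [← this]; simp

lemma integrable_exp_sq_gaussian : Integrable (fun y : ℝ => exp (y ^ 2 / 4)) (gaussianReal 0 1) := by
  rw [gaussianReal_of_var_ne_zero _ one_ne_zero, integrable_withDensity_iff_integrable_smul'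
    (by fun_prop) (.of_forall fun x => by simp [gaussianPDF])]
  have h : Integrable fun y : ℝ => (√(2 * π))⁻¹ * exp (-(1 / 4) * y ^ 2) :=
    (integrable_exp_neg_mul_sq (by norm_num)).const_mul _
  refine h.congr (.of_forall fun y => ?_)
  simp only [toReal_gaussianPDF, gaussianPDFReal, smul_eq_mul, NNReal.coe_one, mul_one, sub_zero]
  rw [mul_assoc, ← Real.exp_add]
  congr 2; ring

/-- The Gaussian exponential-square moment bounding all the relevant moments. -/
def expSq : ℝ := ∫ y, exp (y ^ 2 / 4) ∂(gaussianReal 0 1)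

lemma exp_sq_dot_gaussS {n : ℕ} (S : Finset (Fin n)) {v : Fin n → ℝ} (hv : ∑ l, v l ^ 2 ≤ 1) :
    Integrable (fun x => exp ((v ⬝ᵥ x) ^ 2 / 4)) (gaussS S) ∧
      ∫ x, exp ((v ⬝ᵥ x) ^ 2 / 4) ∂(gaussS S) ≤ expSq := by
  have hs1 : ∑ l ∈ S, v l ^ 2 ≤ 1 :=
    (Finset.sum_le_sum_of_subset_of_nonneg (Finset.subset_univ S)
      fun _ _ _ => sq_nonneg _).trans hv
  have hs0 : 0 ≤ ∑ l ∈ S, v l ^ 2 := Finset.sum_nonneg fun l _ => sq_nonneg _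
  have hle : ∀ y : ℝ, exp ((√(∑ l ∈ S, v l ^ 2) * y) ^ 2 / 4) ≤ exp (y ^ 2 / 4) := by
    intro y
    refine Real.exp_le_exp.2 ?_
    rw [mul_pow, Real.sq_sqrt hs0]
    nlinarith [sq_nonneg y]
  have hI : Integrable (fun y : ℝ => exp ((√(∑ l ∈ S, v l ^ 2) * y) ^ 2 / 4))
      (gaussianReal 0 1) := by
    refine integrable_exp_sq_gaussian.mono (by fun_prop) (.of_forall fun y => ?_)
    rw [Real.norm_eq_abs, Real.norm_eq_abs, abs_of_pos (exp_pos _), abs_of_pos (exp_pos _)]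
    exact hle y
  refine ⟨(integrable_comp_dot_gaussS S v (F := fun y => exp (y ^ 2 / 4)) (by fun_prop)).2 hI, ?_⟩
  rw [integral_comp_dot_gaussS S v (F := fun y => exp (y ^ 2 / 4)) (by fun_prop)]
  exact integral_mono hI integrable_exp_sq_gaussian hle

lemma exp_sq_dot_bgVec {n : ℕ} {θ : ℝ} (h0 : 0 ≤ θ) (h1 : θ ≤ 1) {v : Fin n → ℝ}
    (hv : ∑ l, v l ^ 2 ≤ 1) :
    Integrable (fun x => exp ((v ⬝ᵥ x) ^ 2 / 4)) (bgVec θ n) ∧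
      ∫ x, exp ((v ⬝ᵥ x) ^ 2 / 4) ∂(bgVec θ n) ≤ expSq := by
  refine ⟨integrable_bgVec h0 h1 fun S => (exp_sq_dot_gaussS S hv).1, ?_⟩
  rw [integral_bgVec h0 h1 fun S => (exp_sq_dot_gaussS S hv).1]
  calc _ ≤ ∑ S : Finset (Fin n), bw θ S * expSq := Finset.sum_le_sum fun S _ =>
        mul_le_mul_of_nonneg_left (exp_sq_dot_gaussS S hv).2 (bw_nonneg h0 h1 S)
    _ = expSq := by rw [← Finset.sum_mul, sum_bw, one_mul]

section RandomSubset

variable {ι : Type*} [DecidableEq ι]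

/-- Expectation of `G` over a random subset of `A` in which every element is kept independently
with probability `θ`. -/
def EE (θ : ℝ) (A : Finset ι) (G : Finset ι → ℝ) : ℝ :=
  ∑ R ∈ A.powerset, θ ^ R.card * (1 - θ) ^ (A \ R).card * G R

lemma EE_insert (θ : ℝ) {A : Finset ι} {i : ι} (hi : i ∉ A) (G : Finset ι → ℝ) :
    EE θ (insert i A) G = EE θ A fun R => (1 - θ) * G R + θ * G (insert i R) := by
  unfold EE
  rw [Finset.sum_powerset_insert hi, ← Finset.sum_add_distrib]
  refine Finset.sum_congr rfl fun R hR => ?_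
  have hiR : i ∉ R := fun h => hi (Finset.mem_powerset.1 hR h)
  rw [Finset.insert_sdiff_of_notMem _ hiR, Finset.card_insert_of_notMem (by simp [hi]),
    Finset.card_insert_of_notMem hiR, Finset.insert_sdiff_insert, Finset.sdiff_insert_of_notMem hi]
  ring

lemma EE_congr (θ : ℝ) {A : Finset ι} {G H : Finset ι → ℝ} (h : ∀ R ⊆ A, G R = H R) :
    EE θ A G = EE θ A H :=
  Finset.sum_congr rfl fun R hR => by rw [h R (Finset.mem_powerset.1 hR)]

lemma EE_mono {θ : ℝ} (h0 : 0 ≤ θ) (h1 : θ ≤ 1) {A : Finset ι} {G H : Finset ι → ℝ}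
    (h : ∀ R ⊆ A, G R ≤ H R) : EE θ A G ≤ EE θ A H := by
  refine Finset.sum_le_sum fun R hR => mul_le_mul_of_nonneg_left (h R (Finset.mem_powerset.1 hR)) ?_
  have : 0 ≤ 1 - θ := by linarith
  positivity

lemma EE_const_mul (θ : ℝ) (A : Finset ι) (c : ℝ) (G : Finset ι → ℝ) :
    EE θ A (fun R => c * G R) = c * EE θ A G := by
  unfold EE
  rw [Finset.mul_sum]
  exact Finset.sum_congr rfl fun R _ => by ring

lemma EE_add (θ : ℝ) (A : Finset ι) (G H : Finset ι → ℝ) :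
    EE θ A (fun R => G R + H R) = EE θ A G + EE θ A H := by
  unfold EE
  rw [← Finset.sum_add_distrib]
  exact Finset.sum_congr rfl fun R _ => by ring

lemma EE_sub (θ : ℝ) (A : Finset ι) (G H : Finset ι → ℝ) :
    EE θ A (fun R => G R - H R) = EE θ A G - EE θ A H := by
  unfold EE
  rw [← Finset.sum_sub_distrib]
  exact Finset.sum_congr rfl fun R _ => by ring

lemma EE_const (θ : ℝ) (A : Finset ι) (c : ℝ) : EE θ A (fun _ => c) = c := by
  induction A using Finset.induction_on with
  | empty => simp [EE]
  | insert a A ha ih =>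
    rw [EE_insert θ ha, ← ih]
    exact EE_congr θ fun R _ => by rw [ih]; ring

lemma EE_sum (θ : ℝ) (A : Finset ι) (a : ι → ℝ) :
    EE θ A (fun R => ∑ l ∈ R, a l) = θ * ∑ l ∈ A, a l := by
  induction A using Finset.induction_on with
  | empty => simp [EE]
  | insert b A hb ih =>
    rw [EE_insert θ hb, Finset.sum_insert hb, mul_add, ← ih]
    have : EE θ A (fun R => (1 - θ) * ∑ l ∈ R, a l + θ * ∑ l ∈ insert b R, a l)
        = EE θ A (fun R => θ * a b + ∑ l ∈ R, a l) := by
      refine EE_congr θ fun R hR => ?_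
      rw [Finset.sum_insert fun h => hb (hR h)]
      ring
    rw [this, EE_add, EE_const]

lemma EE_univ_one [Fintype ι] (θ : ℝ) (i : ι) (G : Finset ι → ℝ) :
    EE θ Finset.univ G = EE θ {i}ᶜ fun R => (1 - θ) * G R + θ * G (insert i R) := by
  rw [← EE_insert θ (by simp)]
  congr 1
  ext l; simp

lemma EE_univ_two [Fintype ι] (θ : ℝ) {i j : ι} (hij : i ≠ j) (G : Finset ι → ℝ) :
    EE θ Finset.univ G = EE θ {i, j}ᶜ fun R =>
      (1 - θ) * ((1 - θ) * G R + θ * G (insert i R))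
        + θ * ((1 - θ) * G (insert j R) + θ * G (insert i (insert j R))) := by
  have h := EE_insert θ (A := {i, j}ᶜ) (i := j) (by simp) fun R => (1 - θ) * G R + θ * G (insert i R)
  rw [← h, EE_univ_one θ i]
  congr 1
  ext l
  by_cases hl : l = j
  · simp [hl, hij.symm]
  · simp [hl]

end RandomSubset

lemma sum_bw_mul {n : ℕ} (θ : ℝ) (G : Finset (Fin n) → ℝ) :
    ∑ S, bw θ S * G S = EE θ Finset.univ G := by
  unfold EE bw
  rw [Finset.powerset_univ]
  simp [Finset.compl_eq_univ_sdiff]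

section Phi

variable {μ : ℝ}

lemma gphi_anti (hμ : 0 < μ) {s t : ℝ} (hst : s ≤ t) : gphi μ t ≤ gphi μ s := by
  unfold gphi
  gcongr
  exact gA_antitone (by positivity) (by gcongr)

lemma gphi_nonneg (hμ : 0 < μ) (s : ℝ) : 0 ≤ gphi μ s :=
  div_nonneg (gA_nonneg _) hμ.le

/-- The total mass of the squared hyperbolic secant. -/
def intSech2 : ℝ := ∫ u, sech2 u

lemma sqrt_mul_gphi_le (hμ : 0 < μ) {s : ℝ} (hs : 0 < s) : √s * gphi μ s ≤ intSech2 := by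
  have := mul_gA_le (τ := √s / μ) (by positivity)
  unfold gphi intSech2
  calc _ = √s / μ * gA (√s / μ) := by ring
    _ ≤ _ := this

lemma intSech2_nonneg : 0 ≤ intSech2 := integral_nonneg fun u => (sech2_pos u).le

lemma mul_gphi_le (hμ : 0 < μ) {s : ℝ} (hs : 0 ≤ s) (hs1 : s ≤ 1) : s * gphi μ s ≤ intSech2 := by
  rcases hs.eq_or_lt with h | h
  · rw [← h, zero_mul]; exact intSech2_nonneg
  · calc s * gphi μ s = √s * (√s * gphi μ s) := by rw [← mul_assoc, Real.mul_self_sqrt hs]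
      _ ≤ 1 * intSech2 := by
          refine mul_le_mul (Real.sqrt_le_one.2 hs1) (sqrt_mul_gphi_le hμ h) ?_ zero_le_one
          exact mul_nonneg (Real.sqrt_nonneg _) (gphi_nonneg hμ _)
      _ = _ := one_mul _

lemma gphi_le_two (hμ : 0 < μ) {s : ℝ} (hs : 3 / 4 ≤ s) : gphi μ s ≤ 2 * intSech2 := by
  have h1 := sqrt_mul_gphi_le hμ (s := s) (by linarith)
  have h2 : 1 / 2 ≤ √s := by
    apply Real.le_sqrt_of_sq_le; linarith
  nlinarith [gphi_nonneg hμ s]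

lemma le_gphi_sq_of_le (hμ : 0 < μ) {r : ℝ} (hr0 : 0 ≤ r) (hr : r ≤ μ) :
    gA 1 / μ ≤ gphi μ (r ^ 2) := by
  unfold gphi
  rw [Real.sqrt_sq hr0]
  gcongr
  exact gA_antitone (by positivity) ((div_le_one hμ).2 hr)

lemma le_mul_gphi_sq (hμ : 0 < μ) {r : ℝ} (hr : μ ≤ r) : gA 1 ≤ r * gphi μ (r ^ 2) := by
  unfold gphi
  rw [Real.sqrt_sq (hμ.le.trans hr)]
  have := gA_one_le_mul_gA (τ := r / μ) ((one_le_div hμ).2 hr)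
  calc _ ≤ _ := this
    _ = _ := by ring

end Phi

section Population

variable {n : ℕ} {θ μ : ℝ}

/-- The vector `q i • e j - q j • e i`, tangent to the sphere at `q`. -/
def pairDir (q : Fin n → ℝ) (i j : Fin n) : Fin n → ℝ :=
  fun l => if l = j then q i else if l = i then -q j else 0

/-- The projection of `q` onto the coordinates `i` and `j`. -/
def pairProj (q : Fin n → ℝ) (i j : Fin n) : Fin n → ℝ :=
  fun l => if l = j then q j else if l = i then q i else 0

/-- The slope of the population objective along `pairDir`, divided by `q i * q j`. -/
def pairSlope (θ μ : ℝ) (q : Fin n → ℝ) (i j : Fin n) : ℝ :=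
  θ * (1 - θ) * EE θ {i, j}ᶜ fun R =>
    gphi μ (∑ l ∈ R, q l ^ 2 + q j ^ 2) - gphi μ (∑ l ∈ R, q l ^ 2 + q i ^ 2)

lemma sum_pair_off {i j : Fin n} (a : Fin n → ℝ) (ha : ∀ l, l ≠ i → l ≠ j → a l = 0)
    {R : Finset (Fin n)} (hR : R ⊆ {i, j}ᶜ) : ∑ l ∈ R, a l = 0 :=
  Finset.sum_eq_zero fun l hl => by
    have := hR hl
    simp only [Finset.mem_compl, Finset.mem_insert, Finset.mem_singleton, not_or] at this
    exact ha l this.1 this.2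

lemma M1_pairDir (h0 : 0 ≤ θ) (h1 : θ ≤ 1) (q : Fin n → ℝ) {i j : Fin n} (hij : i ≠ j) :
    M1 θ μ q (pairDir q i j) = q i * q j * pairSlope θ μ q i j := by
  rw [M1_eq h0 h1, sum_bw_mul, EE_univ_two θ hij, pairSlope, ← mul_assoc, ← EE_const_mul]
  refine EE_congr θ fun R hR => ?_
  have hiR : i ∉ R := fun h => by simpa using hR h
  have hjR : j ∉ R := fun h => by simpa using hR h
  have hi' : i ∉ insert j R := by simp [hij, hiR]
  have hz : ∑ l ∈ R, q l * pairDir q i j l = 0 :=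
    sum_pair_off _ (fun l hi hj => by simp [pairDir, hi, hj]) hR
  have hpi : pairDir q i j i = - q j := by simp [pairDir, hij]
  have hpj : pairDir q i j j = q i := by simp [pairDir]
  simp only [Finset.sum_insert hi', Finset.sum_insert hiR, Finset.sum_insert hjR, hz, hpi, hpj]
  rw [add_comm (q i ^ 2) (∑ l ∈ R, q l ^ 2), add_comm (q j ^ 2) (∑ l ∈ R, q l ^ 2)]
  ring

lemma pairSlope_nonneg (hμ : 0 < μ) (h0 : 0 ≤ θ) (h1 : θ ≤ 1) (q : Fin n → ℝ) {i j : Fin n}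
    (h : q j ^ 2 ≤ q i ^ 2) : 0 ≤ pairSlope θ μ q i j := by
  have h1' : 0 ≤ 1 - θ := by linarith
  refine mul_nonneg (mul_nonneg h0 h1') ?_
  rw [← EE_const θ ({i, j}ᶜ : Finset (Fin n)) 0]
  exact EE_mono h0 h1 fun R _ => sub_nonneg.2 (gphi_anti hμ (by linarith))

lemma sum_add_sq_le {q : Fin n → ℝ} (hq : ∑ l, q l ^ 2 ≤ 1) {R : Finset (Fin n)} {i : Fin n}
    (hi : i ∉ R) : ∑ l ∈ R, q l ^ 2 + q i ^ 2 ≤ 1 := by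
  rw [add_comm, ← Finset.sum_insert (f := fun l => q l ^ 2) hi]
  exact (Finset.sum_le_sum_of_subset_of_nonneg (Finset.subset_univ _)
    fun _ _ _ => sq_nonneg _).trans hq

lemma exists_pairSlope_ge : ∃ c K : ℝ, 0 < c ∧ 1 ≤ K ∧ ∀ (n : ℕ) (θ μ : ℝ) (q : Fin n → ℝ)
    (i j : Fin n), 0 < θ → θ ≤ 1 / 2 → 0 < μ → ∑ l, q l ^ 2 ≤ 1 →
    q j ^ 2 ≤ q i ^ 2 / 4 → K * μ ^ 2 ≤ q i ^ 2 → c * θ * q i ^ 2 ≤ pairSlope θ μ q i j := by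
  obtain ⟨c, K, hc, hK, h⟩ := exists_gA_sub_gA_ge
  refine ⟨3 / 8 * c, 4 / 3 * K, by positivity, by linarith, ?_⟩
  intro n θ μ q i j hθ hθ2 hμ hq hji hKμ
  have key : ∀ R ⊆ ({i, j}ᶜ : Finset (Fin n)), 3 / 4 * c * q i ^ 2 ≤
      gphi μ (∑ l ∈ R, q l ^ 2 + q j ^ 2) - gphi μ (∑ l ∈ R, q l ^ 2 + q i ^ 2) := by
    intro R hR
    have hiR : i ∉ R := fun h => by simpa using hR h
    have hb1 := sum_add_sq_le hq hiR
    have hr : 0 ≤ ∑ l ∈ R, q l ^ 2 := Finset.sum_nonneg fun l _ => sq_nonneg _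
    set a := ∑ l ∈ R, q l ^ 2 + q j ^ 2
    set b := ∑ l ∈ R, q l ^ 2 + q i ^ 2
    have hqi : 0 < q i ^ 2 := lt_of_lt_of_le (by positivity) hKμ
    have ha0 : 0 ≤ a := by positivity
    have hb0 : 0 < b := by positivity
    have hba : 3 / 4 * q i ^ 2 ≤ b - a := by simp only [a, b]; linarith
    have hsq : (√b / μ) ^ 2 - (√a / μ) ^ 2 = (b - a) / μ ^ 2 := by
      rw [div_pow, div_pow, Real.sq_sqrt hb0.le, Real.sq_sqrt ha0]; ring
    have h2 := h (√a / μ) (√b / μ) (by positivity) (by positivity)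
      (by rw [hsq, le_div_iff₀ (by positivity)]; linarith)
    rw [hsq] at h2
    have h3 : c * (b - a) ≤ c * ((b - a) / μ ^ 2) / (√b / μ) ^ 3 / μ := by
      have hsb : 0 < √b := Real.sqrt_pos.2 hb0
      have hsb1 : √b ≤ 1 := Real.sqrt_le_one.2 hb1
      have : c * ((b - a) / μ ^ 2) / (√b / μ) ^ 3 / μ = c * (b - a) / √b ^ 3 := by
        field_simp
      rw [this, le_div_iff₀ (by positivity)]
      exact mul_le_of_le_one_right (mul_nonneg hc.le (by nlinarith)) (pow_le_one₀ hsb.le hsb1)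
    unfold gphi
    rw [← sub_div]
    calc 3 / 4 * c * q i ^ 2 = c * (3 / 4 * q i ^ 2) := by ring
      _ ≤ c * (b - a) := by gcongr
      _ ≤ _ := h3
      _ ≤ _ := by gcongr
  have h4 := EE_mono hθ.le (by linarith) key
  rw [EE_const] at h4
  have hqi : 0 ≤ q i ^ 2 := sq_nonneg _
  unfold pairSlope
  calc 3 / 8 * c * θ * q i ^ 2 = θ * (1 / 2) * (3 / 4 * c * q i ^ 2) := by ring
    _ ≤ θ * (1 - θ) * (3 / 4 * c * q i ^ 2) := by gcongr; linarith
    _ ≤ _ := by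
      have : 0 ≤ 1 - θ := by linarith
      gcongr

lemma exists_pair_curvature_le : ∃ c τ₀ : ℝ, 0 < c ∧ 1 ≤ τ₀ ∧ ∀ (n : ℕ) (θ μ : ℝ) (q : Fin n → ℝ)
    (i j : Fin n), i ≠ j → 0 < θ → θ ≤ 1 / 2 → 0 < μ → ∑ l, q l ^ 2 ≤ 1 →
    q i ^ 2 / 4 ≤ q j ^ 2 → q j ^ 2 ≤ q i ^ 2 → τ₀ * μ ≤ |q i| →
    M2 θ μ q (pairDir q i j) / μ - M1 θ μ q (pairProj q i j)
      ≤ q i ^ 2 * pairSlope θ μ q i j - c * θ * q i ^ 4 := by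
  obtain ⟨c, τ₀, hc, hτ₀, h⟩ := exists_gA_sub_gB_ge
  refine ⟨c / 4, 2 * τ₀, by positivity, by linarith, ?_⟩
  intro n θ μ q i j hij hθ hθ2 hμ hq hij4 hji hτμ
  have h0 : 0 ≤ θ := hθ.le
  have h1 : θ ≤ 1 := by linarith
  have hqi0 : 0 < |q i| := lt_of_lt_of_le (by positivity) hτμ
  have hΓ : ∀ s, q i ^ 2 / 4 ≤ s → s ≤ 1 →
      c * q i ^ 4 / 4 ≤ q i ^ 2 * q j ^ 2 / s * ((gA (√s / μ) - gB (√s / μ)) / μ) := by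
    intro s hs hs1
    have hs0 : 0 < s := lt_of_lt_of_le (by rw [← sq_abs]; positivity) hs
    have hsq : |q i| / 2 ≤ √s := by
      apply Real.le_sqrt_of_sq_le
      rw [div_pow, sq_abs]; linarith
    have hτ : τ₀ ≤ √s / μ := by
      rw [le_div_iff₀ hμ]; linarith
    have h2 := h _ hτ
    have hss : 0 < √s := Real.sqrt_pos.2 hs0
    have hss1 : √s ≤ 1 := Real.sqrt_le_one.2 hs1
    have h3 : c ≤ (gA (√s / μ) - gB (√s / μ)) / μ := by
      rw [le_div_iff₀ hμ]
      refine le_trans ?_ h2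
      rw [div_div_eq_mul_div, le_div_iff₀ hss]
      exact mul_le_of_le_one_right (by positivity) hss1
    calc c * q i ^ 4 / 4 = (q i ^ 2 * (q i ^ 2 / 4)) * c := by ring
      _ ≤ (q i ^ 2 * q j ^ 2 / s) * c := by
          gcongr
          rw [le_div_iff₀ hs0]
          calc _ ≤ q i ^ 2 * (q i ^ 2 / 4) * 1 := by gcongr
            _ ≤ _ := by rw [mul_one]; gcongr
      _ ≤ _ := by gcongr
  have hexp : M2 θ μ q (pairDir q i j) / μ - M1 θ μ q (pairProj q i j) =
      θ * (1 - θ) * EE θ {i, j}ᶜ fun R =>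
        (q i ^ 2 - q j ^ 2) * (gphi μ (∑ l ∈ R, q l ^ 2 + q j ^ 2)
          - gphi μ (∑ l ∈ R, q l ^ 2 + q i ^ 2))
        - q i ^ 2 * q j ^ 2 / (∑ l ∈ R, q l ^ 2 + q j ^ 2) *
          ((gA (√(∑ l ∈ R, q l ^ 2 + q j ^ 2) / μ) - gB (√(∑ l ∈ R, q l ^ 2 + q j ^ 2) / μ)) / μ)
        - q i ^ 2 * q j ^ 2 / (∑ l ∈ R, q l ^ 2 + q i ^ 2) *
          ((gA (√(∑ l ∈ R, q l ^ 2 + q i ^ 2) / μ)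
            - gB (√(∑ l ∈ R, q l ^ 2 + q i ^ 2) / μ)) / μ) := by
    rw [M2_eq h0 h1, M1_eq h0 h1, sum_bw_mul, sum_bw_mul, div_eq_inv_mul, ← EE_const_mul,
      ← EE_sub, EE_univ_two θ hij, ← EE_const_mul]
    refine EE_congr θ fun R hR => ?_
    have hiR : i ∉ R := fun h => by simpa using hR h
    have hjR : j ∉ R := fun h => by simpa using hR h
    have hi' : i ∉ insert j R := by simp [hij, hiR]
    have hz : ∑ l ∈ R, q l * pairDir q i j l = 0 :=
      sum_pair_off _ (fun l hi hj => by simp [pairDir, hi, hj]) hR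
    have hz2 : ∑ l ∈ R, pairDir q i j l ^ 2 = 0 :=
      sum_pair_off _ (fun l hi hj => by simp [pairDir, hi, hj]) hR
    have hz3 : ∑ l ∈ R, q l * pairProj q i j l = 0 :=
      sum_pair_off _ (fun l hi hj => by simp [pairProj, hi, hj]) hR
    have hpi : pairDir q i j i = - q j := by simp [pairDir, hij]
    have hpj : pairDir q i j j = q i := by simp [pairDir]
    have hri : pairProj q i j i = q i := by simp [pairProj, hij]
    have hrj : pairProj q i j j = q j := by simp [pairProj]
    simp only [Finset.sum_insert hi', Finset.sum_insert hiR, Finset.sum_insert hjR, hz, hz2, hz3,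
      hpi, hpj, hri, hrj, gphi]
    rw [add_comm (q i ^ 2) (∑ l ∈ R, q l ^ 2), add_comm (q j ^ 2) (∑ l ∈ R, q l ^ 2)]
    ring
  rw [hexp, EE_sub, EE_sub, EE_const_mul]
  have h3 : ∀ k, (k = i ∨ k = j) → c * q i ^ 4 / 4 ≤ EE θ {i, j}ᶜ fun R =>
      q i ^ 2 * q j ^ 2 / (∑ l ∈ R, q l ^ 2 + q k ^ 2) *
          ((gA (√(∑ l ∈ R, q l ^ 2 + q k ^ 2) / μ)
            - gB (√(∑ l ∈ R, q l ^ 2 + q k ^ 2) / μ)) / μ) := by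
    intro k hk
    rw [← EE_const θ ({i, j}ᶜ : Finset (Fin n)) (c * q i ^ 4 / 4)]
    refine EE_mono h0 h1 fun R hR => hΓ _ ?_ ?_
    · have hr : 0 ≤ ∑ l ∈ R, q l ^ 2 := Finset.sum_nonneg fun l _ => sq_nonneg _
      rcases hk with rfl | rfl <;> nlinarith [sq_nonneg (q k)]
    · refine sum_add_sq_le hq fun h => ?_
      have := hR h
      rcases hk with rfl | rfl <;> simp at this
  have h4 := h3 i (.inl rfl)
  have h5 := h3 j (.inr rfl)
  have h6 : 0 ≤ pairSlope θ μ q i j := pairSlope_nonneg hμ h0 h1 q hji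
  unfold pairSlope at h6 ⊢
  set D := EE θ {i, j}ᶜ fun R =>
    gphi μ (∑ l ∈ R, q l ^ 2 + q j ^ 2) - gphi μ (∑ l ∈ R, q l ^ 2 + q i ^ 2)
  have hpos : 0 < θ * (1 - θ) := mul_pos hθ (by linarith)
  calc _ ≤ θ * (1 - θ) * ((q i ^ 2 - q j ^ 2) * D - c * q i ^ 4 / 4 - c * q i ^ 4 / 4) := by
        gcongr
    _ = q i ^ 2 * (θ * (1 - θ) * D) - q j ^ 2 * (θ * (1 - θ) * D)
        - (1 - θ) * 2 * (c / 4 * θ * q i ^ 4) := by ring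
    _ ≤ _ := by
        have h7 : 0 ≤ q j ^ 2 * (θ * (1 - θ) * D) := mul_nonneg (sq_nonneg _) h6
        have h8 : 0 ≤ c / 4 * θ * q i ^ 4 := by positivity
        nlinarith

/-- The direction from `q` away from the `i`-th axis, of length `√(1 - q i ^ 2)`. -/
def axisDir (q : Fin n → ℝ) (i : Fin n) : Fin n → ℝ :=
  fun l => if l = i then -(∑ k ∈ {i}ᶜ, q k ^ 2) else q i * q l

lemma M1_axisDir_ge (hμ : 0 < μ) (h0 : 0 ≤ θ) (h1 : θ ≤ 1) (q : Fin n → ℝ) {i : Fin n}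
    (hi : 0 ≤ q i) :
    q i * (∑ k ∈ {i}ᶜ, q k ^ 2) * (θ * (1 - θ)) *
        (gphi μ (∑ k ∈ {i}ᶜ, q k ^ 2) - gphi μ (q i ^ 2)) ≤ M1 θ μ q (axisDir q i) := by
  rw [M1_eq h0 h1, sum_bw_mul, EE_univ_one θ i]
  set ρ := ∑ k ∈ {i}ᶜ, q k ^ 2
  have h1' : 0 ≤ 1 - θ := by linarith
  have hE := EE_sum θ {i}ᶜ fun l => q l ^ 2
  have key : ∀ R ⊆ ({i}ᶜ : Finset (Fin n)),
      q i * (1 - θ) * gphi μ ρ * (∑ l ∈ R, q l ^ 2)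
        + q i * θ * gphi μ (q i ^ 2) * ((∑ l ∈ R, q l ^ 2) - ρ) ≤
      (1 - θ) * ((∑ l ∈ R, q l * axisDir q i l) * gphi μ (∑ l ∈ R, q l ^ 2))
        + θ * ((∑ l ∈ insert i R, q l * axisDir q i l) * gphi μ (∑ l ∈ insert i R, q l ^ 2)) := by
    intro R hR
    have hiR : i ∉ R := fun h => by simpa using hR h
    have hs : ∑ l ∈ R, q l * axisDir q i l = q i * ∑ l ∈ R, q l ^ 2 := by
      rw [Finset.mul_sum]
      refine Finset.sum_congr rfl fun l hl => ?_
      have : l ≠ i := fun h => hiR (h ▸ hl)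
      simp only [axisDir, this, if_false]; ring
    have hai : axisDir q i i = -ρ := by simp [axisDir, ρ]
    rw [Finset.sum_insert hiR, Finset.sum_insert hiR, hs, hai]
    have hr0 : 0 ≤ ∑ l ∈ R, q l ^ 2 := Finset.sum_nonneg fun l _ => sq_nonneg _
    have hrρ : ∑ l ∈ R, q l ^ 2 ≤ ρ :=
      Finset.sum_le_sum_of_subset_of_nonneg hR fun _ _ _ => sq_nonneg _
    have g1 : gphi μ ρ ≤ gphi μ (∑ l ∈ R, q l ^ 2) := gphi_anti hμ hrρ
    have g2 : gphi μ (q i ^ 2 + ∑ l ∈ R, q l ^ 2) ≤ gphi μ (q i ^ 2) :=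
      gphi_anti hμ (by linarith)
    set r := ∑ l ∈ R, q l ^ 2
    have e1 : 0 ≤ (1 - θ) * (q i * r) * (gphi μ r - gphi μ ρ) :=
      mul_nonneg (by positivity) (by linarith)
    have e2 : 0 ≤ θ * (q i * (ρ - r)) * (gphi μ (q i ^ 2) - gphi μ (q i ^ 2 + r)) :=
      mul_nonneg (mul_nonneg h0 (mul_nonneg hi (by linarith))) (by linarith)
    nlinarith
  refine le_trans (le_of_eq ?_) (EE_mono h0 h1 key)
  rw [EE_add, EE_const_mul, EE_const_mul, EE_sub, EE_const, hE]
  ring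

lemma M2_nonneg_summand (S : Finset (Fin n)) (q v : Fin n → ℝ) (m τ : ℝ)
    (hA : m ≤ gA τ) (hB : m ≤ gB τ) : m * (∑ l ∈ S, v l ^ 2) ≤
      (∑ l ∈ S, v l ^ 2 - (∑ l ∈ S, q l * v l) ^ 2 / ∑ l ∈ S, q l ^ 2) * gA τ
        + (∑ l ∈ S, q l * v l) ^ 2 / (∑ l ∈ S, q l ^ 2) * gB τ := by
  have h1 : 0 ≤ ∑ l ∈ S, v l ^ 2 - (∑ l ∈ S, q l * v l) ^ 2 / ∑ l ∈ S, q l ^ 2 := by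
    rw [← sum_resid_sq]; exact Finset.sum_nonneg fun l _ => sq_nonneg _
  have h2 : 0 ≤ (∑ l ∈ S, q l * v l) ^ 2 / (∑ l ∈ S, q l ^ 2) :=
    div_nonneg (sq_nonneg _) (Finset.sum_nonneg fun l _ => sq_nonneg _)
  nlinarith

lemma M2_ge (hμ : 0 < μ) (h0 : 0 ≤ θ) (h1 : θ ≤ 1) (q v : Fin n → ℝ) {i : Fin n}
    (hi : ∑ k ∈ {i}ᶜ, q k ^ 2 ≤ μ ^ 2) :
    min (gA 1) (gB 1) * (θ * (1 - θ)) * ∑ k ∈ {i}ᶜ, v k ^ 2 ≤ M2 θ μ q v := by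
  rw [M2_eq h0 h1, sum_bw_mul, EE_univ_one θ i]
  have h1' : 0 ≤ 1 - θ := by linarith
  set m := min (gA 1) (gB 1)
  have hE := EE_sum θ {i}ᶜ fun l => v l ^ 2
  have : m * (θ * (1 - θ)) * ∑ k ∈ {i}ᶜ, v k ^ 2
      = EE θ {i}ᶜ (fun R => (1 - θ) * (m * ∑ l ∈ R, v l ^ 2) + θ * 0) := by
    rw [EE_add, EE_const_mul, EE_const_mul, hE, mul_zero, EE_const]; ring
  rw [this]
  refine EE_mono h0 h1 fun R hR => ?_
  gcongr
  · have hs : √(∑ l ∈ R, q l ^ 2) / μ ≤ 1 := by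
      rw [div_le_one hμ]
      apply Real.sqrt_le_iff.2 ⟨hμ.le, ?_⟩
      exact (Finset.sum_le_sum_of_subset_of_nonneg hR fun _ _ _ => sq_nonneg _).trans hi
    refine M2_nonneg_summand R q v m _ ?_ ?_
    · exact (min_le_left _ _).trans (gA_antitone (by positivity) hs)
    · exact (min_le_right _ _).trans (gB_antitone (by positivity) hs)
  · refine le_trans (le_of_eq ?_) (M2_nonneg_summand (insert i R) q v 0 _ (gA_nonneg _)
      (gB_nonneg _))
    rw [zero_mul]

lemma M1_self_le (hμ : 0 < μ) (h0 : 0 ≤ θ) (h1 : θ ≤ 1) (q : Fin n → ℝ)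
    (hq : ∑ l, q l ^ 2 ≤ 1) : M1 θ μ q q ≤ intSech2 := by
  rw [M1_eq h0 h1, sum_bw_mul, ← EE_const θ (Finset.univ : Finset (Fin n)) intSech2]
  refine EE_mono h0 h1 fun R hR => ?_
  have : ∑ l ∈ R, q l * q l = ∑ l ∈ R, q l ^ 2 := Finset.sum_congr rfl fun l _ => by ring
  rw [this]
  exact mul_gphi_le hμ (Finset.sum_nonneg fun l _ => sq_nonneg _)
    ((Finset.sum_le_sum_of_subset_of_nonneg hR fun _ _ _ => sq_nonneg _).trans hq)

lemma exists_M1_axisDir_ge : ∃ c r₀ μ₀ : ℝ, 0 < c ∧ 0 < r₀ ∧ 0 < μ₀ ∧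
    ∀ (n : ℕ) (θ μ ρ : ℝ) (q : Fin n → ℝ) (i : Fin n), 0 < θ → θ ≤ 1 / 2 → 0 < μ → μ ≤ μ₀ →
      1 / 2 ≤ q i → 3 / 4 ≤ q i ^ 2 → 0 ≤ ρ → ∑ k ∈ {i}ᶜ, q k ^ 2 = ρ ^ 2 → ρ ≤ r₀ →
      (ρ ≤ μ → c * θ * ρ ^ 2 / μ ≤ M1 θ μ q (axisDir q i)) ∧
      (μ ≤ ρ → c * θ * ρ ≤ M1 θ μ q (axisDir q i)) := by
  have hI := intSech2_nonneg
  have hg := gA_pos 1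
  have hIp : 0 < 4 * (intSech2 + 1) := by linarith
  refine ⟨gA 1 / 8, gA 1 / (4 * (intSech2 + 1)), gA 1 / (4 * (intSech2 + 1)),
    by positivity, by positivity, by positivity, ?_⟩
  intro n θ μ ρ q i hθ hθ2 hμ hμ0 hqi hqi2 hρ hsum hρ0
  have h := M1_axisDir_ge (μ := μ) hμ hθ.le (by linarith) q (i := i) (by linarith)
  rw [hsum] at h
  have h34 := gphi_le_two hμ hqi2
  rw [le_div_iff₀ hIp] at hμ0 hρ0
  have key : ∀ X, 0 ≤ X → X ≤ ρ ^ 2 * (gphi μ (ρ ^ 2) - gphi μ (q i ^ 2)) →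
      1 / 4 * θ * X ≤ M1 θ μ q (axisDir q i) := by
    intro X hX hX2
    refine le_trans ?_ h
    calc 1 / 4 * θ * X = 1 / 2 * (θ * (1 / 2)) * X := by ring
      _ ≤ q i * (θ * (1 - θ)) * (ρ ^ 2 * (gphi μ (ρ ^ 2) - gphi μ (q i ^ 2))) := by
          gcongr
          · have : 0 ≤ 1 - θ := by linarith
            positivity
          · linarith
      _ = _ := by ring
  constructor
  · intro hle
    have h1 := le_gphi_sq_of_le hμ hρ hle
    have h2 : gA 1 / μ / 2 ≤ gphi μ (ρ ^ 2) - gphi μ (q i ^ 2) := by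
      have : 2 * intSech2 ≤ gA 1 / μ / 2 := by
        rw [div_div, le_div_iff₀ (by positivity)]
        nlinarith
      linarith
    have := key (ρ ^ 2 * (gA 1 / μ / 2)) (by positivity) (by gcongr)
    calc _ = 1 / 4 * θ * (ρ ^ 2 * (gA 1 / μ / 2)) := by ring
      _ ≤ _ := this
  · intro hle
    have h1 := le_mul_gphi_sq hμ hle
    have := key (ρ * (gA 1 / 2)) (by positivity) (by nlinarith)
    calc _ = 1 / 4 * θ * (ρ * (gA 1 / 2)) := by ring
      _ ≤ _ := this

end Population

lemma isProbabilityMeasure_bg {θ : ℝ} (h0 : 0 ≤ θ) (h1 : θ ≤ 1) : IsProbabilityMeasure (bg θ) := by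
  constructor
  have : (0 : ℝ) ≤ 1 - θ := by linarith
  have h : bg θ Set.univ = ENNReal.ofReal θ * gaussianReal 0 1 Set.univ
      + ENNReal.ofReal (1 - θ) * Measure.dirac (0 : ℝ) Set.univ := by
    rw [bg, Measure.add_apply]; rfl
  rw [h, measure_univ, measure_univ, mul_one, mul_one, ← ENNReal.ofReal_add h0 this]
  simp

lemma isProbabilityMeasure_bgVec {n : ℕ} {θ : ℝ} (h0 : 0 ≤ θ) (h1 : θ ≤ 1) :
    IsProbabilityMeasure (bgVec θ n) := by
  have := isProbabilityMeasure_bg h0 h1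
  unfold bgVec; infer_instance

/-- Law of `p` independent columns in `ℝ^n` with i.i.d. `BG(θ)` entries. -/
def bgCols (θ : ℝ) (n p : ℕ) : Measure (Fin p → Fin n → ℝ) := Measure.pi fun _ => bgVec θ n

lemma isProbabilityMeasure_bgCols {n p : ℕ} {θ : ℝ} (h0 : 0 ≤ θ) (h1 : θ ≤ 1) :
    IsProbabilityMeasure (bgCols θ n p) := by
  have := isProbabilityMeasure_bgVec (n := n) h0 h1
  unfold bgCols; infer_instance

lemma bgMatrix_apply_eq {n p : ℕ} {θ : ℝ} (h0 : 0 ≤ θ) (h1 : θ ≤ 1)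
    (G : Set (Fin n → Fin p → ℝ)) :
    bgMatrix θ n p G = bgCols θ n p {Y | (fun i k => Y k i) ∈ G} := by
  have := isProbabilityMeasure_bg h0 h1
  have e1 : bgMatrix θ n p = (Measure.infinitePi fun _ : Fin n × Fin p => bg θ).map
      (MeasurableEquiv.curry (Fin n) (Fin p) ℝ) := by
    rw [Measure.infinitePi_map_curry (fun _ _ => bg θ), bgMatrix]
    simp_rw [Measure.infinitePi_eq_pi]
  have e2 : bgCols θ n p = (Measure.infinitePi fun _ : Fin p × Fin n => bg θ).map
      (MeasurableEquiv.curry (Fin p) (Fin n) ℝ) := by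
    rw [Measure.infinitePi_map_curry (fun _ _ => bg θ), bgCols, bgVec]
    simp_rw [Measure.infinitePi_eq_pi]
  have e3 := Measure.infinitePi_map_piCongrLeft (fun _ : Fin n × Fin p => bg θ)
    (Equiv.prodComm (Fin p) (Fin n))
  rw [e1, ← e3, e2, MeasurableEquiv.map_apply, MeasurableEquiv.map_apply,
    MeasurableEquiv.map_apply]
  rfl

lemma exp_le_one_add_add_sq (x : ℝ) : exp x ≤ 1 + x + x ^ 2 * exp |x| := by
  have h := Complex.norm_exp_sub_sum_le_norm_mul_exp (x : ℂ) 2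
  have h2 : Complex.exp x - ∑ m ∈ Finset.range 2, (x : ℂ) ^ m / (m.factorial : ℂ)
      = ((exp x - (1 + x) : ℝ) : ℂ) := by
    simp [Finset.sum_range_succ]
  rw [h2, Complex.norm_real, Complex.norm_real, Real.norm_eq_abs, Real.norm_eq_abs, sq_abs] at h
  linarith [le_abs_self (exp x - (1 + x))]

section Chernoff

variable {Ω : Type*} [MeasurableSpace Ω] {ν : Measure Ω} [IsProbabilityMeasure ν] {T : Ω → ℝ}
  {K : ℝ}

lemma integrable_of_exp_abs (hT : Measurable T) (hi : Integrable (fun x => exp (|T x| / 4)) ν) :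
    Integrable T ν := by
  refine (hi.const_mul 4).mono hT.aestronglyMeasurable (.of_forall fun x => ?_)
  rw [Real.norm_eq_abs, Real.norm_eq_abs, abs_of_nonneg (a := 4 * exp (|T x| / 4)) (by positivity)]
  have := Real.add_one_le_exp (|T x| / 4)
  linarith

lemma centred_exp_bound (hT : Measurable T) (hi : Integrable (fun x => exp (|T x| / 4)) ν)
    (hK : ∫ x, exp (|T x| / 4) ∂ν ≤ K) {l : ℝ} (hl : |l| ≤ 1 / 16) :
    Integrable (fun x => exp (l * (T x - ∫ y, T y ∂ν))) ν ∧
      ∫ x, exp (l * (T x - ∫ y, T y ∂ν)) ∂ν ≤ exp (512 * exp (K / 2) * K * l ^ 2) := by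
  have hTi := integrable_of_exp_abs hT hi
  set m := ∫ y, T y ∂ν with hm
  have hmK : |m| ≤ 4 * K := by
    calc |m| ≤ ∫ y, |T y| ∂ν := abs_integral_le_integral_abs
      _ ≤ ∫ y, 4 * exp (|T y| / 4) ∂ν := by
          refine integral_mono hTi.abs (hi.const_mul 4) fun x => ?_
          have := Real.add_one_le_exp (|T x| / 4)
          simp only; linarith
      _ ≤ 4 * K := by rw [integral_const_mul]; linarith
  have hpt : ∀ x, exp (l * (T x - m)) ≤
      1 + l * (T x - m) + l ^ 2 * (512 * exp (K / 2) * exp (|T x| / 4)) := by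
    intro x
    refine (exp_le_one_add_add_sq _).trans ?_
    set Y := T x - m
    have hY : |Y| ≤ |T x| + 4 * K := (abs_sub _ _).trans (by linarith)
    have h1 : exp |l * Y| ≤ exp (|Y| / 16) := by
      rw [abs_mul]
      exact Real.exp_le_exp.2 (by nlinarith [abs_nonneg Y])
    have h2 : Y ^ 2 ≤ 512 * exp (|Y| / 16) := by
      have := Real.quadratic_le_exp_of_nonneg (x := |Y| / 16) (by positivity)
      rw [← sq_abs Y]
      nlinarith [abs_nonneg Y]
    have h3 : Y ^ 2 * exp |l * Y| ≤ 512 * exp (K / 2) * exp (|T x| / 4) := by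
      calc Y ^ 2 * exp |l * Y| ≤ (512 * exp (|Y| / 16)) * exp (|Y| / 16) := by gcongr
        _ = 512 * exp (|Y| / 8) := by
            rw [mul_assoc, ← Real.exp_add]; congr 2; ring
        _ ≤ 512 * exp (K / 2 + |T x| / 4) := by
            gcongr; linarith [abs_nonneg (T x)]
        _ = _ := by rw [Real.exp_add]; ring
    rw [mul_pow, mul_assoc]
    gcongr
  have hg : Integrable (fun x => 1 + l * (T x - m) + l ^ 2 * (512 * exp (K / 2) * exp (|T x| / 4)))
      ν := by
    have hd : Integrable (fun x => T x - m) ν := hTi.sub (integrable_const m)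
    have h1 : Integrable (fun x => 1 + l * (T x - m)) ν := (integrable_const 1).add (hd.const_mul l)
    exact h1.add ((hi.const_mul _).const_mul _)
  have hI : Integrable (fun x => exp (l * (T x - m))) ν := by
    refine hg.mono' (by fun_prop) (.of_forall fun x => ?_)
    rw [Real.norm_eq_abs, abs_of_pos (exp_pos _)]
    exact hpt x
  refine ⟨hI, (integral_mono hI hg hpt).trans ?_⟩
  have hd : Integrable (fun x => T x - m) ν := hTi.sub (integrable_const m)
  have h1 : Integrable (fun x => 1 + l * (T x - m)) ν := (integrable_const 1).add (hd.const_mul l)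
  rw [integral_add h1 ((hi.const_mul _).const_mul _),
    integral_add (integrable_const 1) (hd.const_mul l), integral_const_mul, integral_const_mul,
    integral_const_mul, integral_sub hTi (integrable_const m)]
  simp only [integral_const, probReal_univ, smul_eq_mul, one_mul, ← hm, sub_self, mul_zero,
    add_zero]
  calc 1 + l ^ 2 * (512 * exp (K / 2) * ∫ x, exp (|T x| / 4) ∂ν)
      ≤ 1 + l ^ 2 * (512 * exp (K / 2) * K) := by gcongr
    _ ≤ exp (512 * exp (K / 2) * K * l ^ 2) := by
        have := Real.add_one_le_exp (512 * exp (K / 2) * K * l ^ 2)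
        linarith

lemma chernoff_one_side (hT : Measurable T) (hi : Integrable (fun x => exp (|T x| / 4)) ν)
    (hK : ∫ x, exp (|T x| / 4) ∂ν ≤ K) {p : ℕ} (hp : 0 < p) {t : ℝ} (ht : 0 ≤ t)
    (htK : t ≤ 512 * exp (K / 2) * K / 8) (hK0 : 0 < K) :
    (Measure.pi fun _ : Fin p => ν).real
        {x | t ≤ (p : ℝ)⁻¹ * ∑ k, T (x k) - ∫ y, T y ∂ν}
      ≤ exp (-(p * t ^ 2 / (4 * (512 * exp (K / 2) * K)))) := by
  set K' := 512 * exp (K / 2) * K with hK'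
  have hK'0 : 0 < K' := by positivity
  set m := ∫ y, T y ∂ν with hm
  set l := t / (2 * K') with hl
  have hl0 : 0 ≤ l := by positivity
  have hl1 : |l| ≤ 1 / 16 := by
    rw [abs_of_nonneg hl0, hl, div_le_iff₀ (by positivity)]; linarith
  obtain ⟨hI, hle⟩ := centred_exp_bound hT hi hK hl1
  have hexp : ∀ x : Fin p → Ω, exp (l * ∑ k, (T (x k) - m)) = ∏ k, exp (l * (T (x k) - m)) := by
    intro x
    rw [Finset.mul_sum, Real.exp_sum]
  have hint : Integrable (fun x : Fin p → Ω => exp (l * ∑ k, (T (x k) - m)))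
      (Measure.pi fun _ => ν) := by
    simp_rw [hexp]
    exact Integrable.fintype_prod fun _ => hI
  have h := measure_ge_le_exp_mul_mgf (μ := Measure.pi fun _ : Fin p => ν)
    (X := fun x => ∑ k, (T (x k) - m)) (p * t) hl0 hint
  have hset : {x : Fin p → Ω | t ≤ (p : ℝ)⁻¹ * ∑ k, T (x k) - m}
      = {x | p * t ≤ ∑ k, (T (x k) - m)} := by
    ext x
    have hp' : (0 : ℝ) < p := by exact_mod_cast hp
    simp only [Set.mem_ofPred_eq, Finset.sum_sub_distrib, Finset.sum_const, Finset.card_univ,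
      Fintype.card_fin, nsmul_eq_mul]
    rw [← mul_le_mul_iff_right₀ hp', mul_sub, mul_inv_cancel_left₀ hp'.ne']
  rw [hset]
  refine h.trans ?_
  have hmgf : mgf (fun x : Fin p → Ω => ∑ k, (T (x k) - m)) (Measure.pi fun _ => ν) l
      ≤ exp (K' * l ^ 2) ^ p := by
    unfold mgf
    simp_rw [hexp]
    rw [integral_fintype_prod_eq_pow (fun y => exp (l * (T y - m)))]
    simp only [Fintype.card_fin]
    exact pow_le_pow_left₀ (integral_nonneg fun x => (exp_pos _).le) hle p
  calc exp (-l * (p * t)) * mgf _ _ l ≤ exp (-l * (p * t)) * exp (K' * l ^ 2) ^ p := by gcongr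
    _ = exp (-(p * t ^ 2 / (4 * K'))) := by
        rw [← Real.exp_nat_mul, ← Real.exp_add]
        congr 1
        rw [hl]; field_simp; ring

lemma chernoff_two_side (hT : Measurable T) (hi : Integrable (fun x => exp (|T x| / 4)) ν)
    (hK : ∫ x, exp (|T x| / 4) ∂ν ≤ K) {p : ℕ} (hp : 0 < p) {t : ℝ} (ht : 0 ≤ t)
    (htK : t ≤ 512 * exp (K / 2) * K / 8) (hK0 : 0 < K) :
    (Measure.pi fun _ : Fin p => ν).real
        {x | t ≤ |(p : ℝ)⁻¹ * ∑ k, T (x k) - ∫ y, T y ∂ν|}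
      ≤ 2 * exp (-(p * t ^ 2 / (4 * (512 * exp (K / 2) * K)))) := by
  have h1 := chernoff_one_side hT hi hK hp ht htK hK0
  have h2 := chernoff_one_side (T := fun x => -T x) hT.neg (by simpa using hi) (by simpa using hK)
    hp ht htK hK0
  have hsub : {x : Fin p → Ω | t ≤ |(p : ℝ)⁻¹ * ∑ k, T (x k) - ∫ y, T y ∂ν|} ⊆
      {x | t ≤ (p : ℝ)⁻¹ * ∑ k, T (x k) - ∫ y, T y ∂ν} ∪
        {x | t ≤ (p : ℝ)⁻¹ * ∑ k, -T (x k) - ∫ y, -T y ∂ν} := by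
    intro x hx
    rcases le_abs.1 (show t ≤ |_| from hx) with h | h
    · exact .inl h
    · refine .inr ?_
      simp only [Set.mem_ofPred_eq, Finset.sum_neg_distrib, integral_neg]
      linarith
  refine (measureReal_mono hsub).trans ((measureReal_union_le _ _).trans ?_)
  linarith

end Chernoff

lemma exists_round {N : ℕ} (hN : 0 < N) {a : ℝ} (ha : |a| ≤ 1) :
    ∃ z ∈ Finset.Icc (-(N : ℤ)) N, |(z : ℝ) / N| ≤ |a| ∧ |a - (z : ℝ) / N| ≤ 1 / N := by
  have hN' : (0 : ℝ) < N := by exact_mod_cast hN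
  wlog h0 : 0 ≤ a generalizing a
  · obtain ⟨z, hz, h1, h2⟩ := this (a := -a) (by rwa [abs_neg]) (by linarith)
    refine ⟨-z, ?_, ?_, ?_⟩
    · rw [Finset.mem_Icc] at hz ⊢; omega
    · rw [abs_neg] at h1
      rwa [Int.cast_neg, neg_div, abs_neg]
    · rw [← abs_neg, Int.cast_neg, neg_div]
      convert h2 using 2
      ring
  · have hz0 : 0 ≤ ⌊a * N⌋ := Int.floor_nonneg.2 (by positivity)
    have hfl := Int.floor_le (a * N)
    have hlt := Int.lt_floor_add_one (a * N)
    rw [abs_of_nonneg h0] at ha ⊢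
    have hz0' : (0 : ℝ) ≤ ⌊a * N⌋ := by exact_mod_cast hz0
    refine ⟨⌊a * N⌋, ?_, ?_, ?_⟩
    · rw [Finset.mem_Icc]
      refine ⟨by omega, ?_⟩
      have : (⌊a * N⌋ : ℝ) ≤ (N : ℝ) := hfl.trans (by nlinarith)
      exact_mod_cast this
    · rw [abs_of_nonneg (by positivity), div_le_iff₀ hN']; exact hfl
    · rw [show a - (⌊a * N⌋ : ℝ) / N = (a * N - ⌊a * N⌋) / N by field_simp, abs_div,
        abs_of_nonneg (sub_nonneg.2 hfl), abs_of_pos hN']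
      gcongr
      linarith

lemma one_le_expSq : 1 ≤ expSq := by
  have : (1 : ℝ) = ∫ _, (1 : ℝ) ∂(gaussianReal 0 1) := by simp
  rw [this]
  refine integral_mono (integrable_const _) integrable_exp_sq_gaussian fun y => ?_
  exact Real.one_le_exp (by positivity)

/-- The weight controlling how fast the empirical quantities vary with the direction. -/
def wt {n : ℕ} (x : Fin n → ℝ) : ℝ := (1 + ∑ i, |x i|) ^ 3

lemma wt_nonneg {n : ℕ} (x : Fin n → ℝ) : 0 ≤ wt x := by
  unfold wt
  have : 0 ≤ ∑ i, |x i| := Finset.sum_nonneg fun i _ => abs_nonneg _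
  positivity

lemma wt_le {n : ℕ} (x : Fin n → ℝ) :
    wt x ≤ 4 + 132 * n ^ 2 * ∑ i, exp ((x i) ^ 2 / 4) := by
  have hL : 0 ≤ ∑ i, |x i| := Finset.sum_nonneg fun i _ => abs_nonneg _
  have h1 := add_pow_le zero_le_one hL 3
  have h2 : (∑ i, |x i|) ^ 3 ≤ n ^ 2 * ∑ i, |x i| ^ 3 := by
    rcases Nat.eq_zero_or_pos n with rfl | hn
    · simp
    · have h := pow_sum_div_card_le_sum_pow (s := Finset.univ) (f := fun i => |x i|)
        (fun i _ => abs_nonneg _) 2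
      have hn' : (0 : ℝ) < n := by exact_mod_cast hn
      rw [Finset.card_univ, Fintype.card_fin, div_le_iff₀ (by positivity)] at h
      rw [mul_comm]
      exact h
  have h3 : ∀ i, |x i| ^ 3 ≤ 33 * exp ((x i) ^ 2 / 4) := by
    intro i
    have hq := Real.quadratic_le_exp_of_nonneg (x := (x i) ^ 2 / 4) (by positivity)
    rw [← sq_abs] at hq ⊢
    set y := |x i|
    have hy : 0 ≤ y := abs_nonneg _
    nlinarith [sq_nonneg (y ^ 2 - y), sq_nonneg (y - 1), sq_nonneg y, mul_nonneg hy (sq_nonneg (y - 1))]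
  have h4 : ∑ i, |x i| ^ 3 ≤ 33 * ∑ i, exp ((x i) ^ 2 / 4) := by
    rw [Finset.mul_sum]; exact Finset.sum_le_sum fun i _ => h3 i
  unfold wt
  calc (1 + ∑ i, |x i|) ^ 3 ≤ 2 ^ 2 * (1 ^ 3 + (∑ i, |x i|) ^ 3) := h1
    _ ≤ 2 ^ 2 * (1 ^ 3 + n ^ 2 * (33 * ∑ i, exp ((x i) ^ 2 / 4))) := by
        gcongr
        exact h2.trans (by gcongr)
    _ = _ := by ring

lemma exp_sq_eval_bgVec {n : ℕ} {θ : ℝ} (h0 : 0 ≤ θ) (h1 : θ ≤ 1) (i : Fin n) :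
    Integrable (fun x => exp ((x i) ^ 2 / 4)) (bgVec θ n) ∧
      ∫ x, exp ((x i) ^ 2 / 4) ∂(bgVec θ n) ≤ expSq := by
  have h := exp_sq_dot_bgVec h0 h1 (v := Pi.single i (1 : ℝ)) (by simp [Pi.single_apply])
  simpa using h

lemma wt_bgVec {n : ℕ} {θ : ℝ} (h0 : 0 ≤ θ) (h1 : θ ≤ 1) (hn : 1 ≤ n) :
    Integrable (wt (n := n)) (bgVec θ n) ∧ ∫ x, wt x ∂(bgVec θ n) ≤ 136 * n ^ 3 * expSq := by
  have := isProbabilityMeasure_bgVec (n := n) h0 h1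
  have hs : Integrable (fun x => ∑ i : Fin n, exp ((x i) ^ 2 / 4)) (bgVec θ n) :=
    integrable_finsetSum _ fun i _ => (exp_sq_eval_bgVec h0 h1 i).1
  have hg : Integrable (fun x => 4 + 132 * (n : ℝ) ^ 2 * ∑ i : Fin n, exp ((x i) ^ 2 / 4))
      (bgVec θ n) := (integrable_const 4).add (hs.const_mul _)
  have hI : Integrable (wt (n := n)) (bgVec θ n) := by
    have hc : Continuous (wt (n := n)) :=
      (continuous_const.add (continuous_finsetSum _ fun i _ => (continuous_apply i).abs)).pow 3
    refine hg.mono' hc.aestronglyMeasurable (.of_forall fun x => ?_)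
    rw [Real.norm_eq_abs, abs_of_nonneg (wt_nonneg x)]
    exact wt_le x
  refine ⟨hI, (integral_mono hI hg wt_le).trans ?_⟩
  rw [integral_add (integrable_const 4) (hs.const_mul _), integral_const_mul,
    integral_finsetSum _ fun i _ => (exp_sq_eval_bgVec h0 h1 i).1]
  have h2 : ∑ i : Fin n, ∫ x, exp ((x i) ^ 2 / 4) ∂(bgVec θ n) ≤ n * expSq := by
    refine (Finset.sum_le_sum fun i _ => (exp_sq_eval_bgVec h0 h1 i).2).trans ?_
    simp
  have hn' : (1 : ℝ) ≤ n := by exact_mod_cast hn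
  have h3 : 1 ≤ (n : ℝ) ^ 3 * expSq := one_le_mul_of_one_le_of_one_le (one_le_pow₀ hn') one_le_expSq
  simp only [integral_const, probReal_univ, smul_eq_mul, one_mul]
  calc _ ≤ 4 + 132 * (n : ℝ) ^ 2 * (n * expSq) := by gcongr
    _ ≤ _ := by nlinarith

/-- The sub-exponential constant of the empirical processes. -/
def subexpK : ℝ := 512 * exp (2 * expSq / 2) * (2 * expSq)

lemma le_subexpK : 1024 * expSq ≤ subexpK := by
  have h1 := one_le_expSq
  have h2 : 1 ≤ exp (2 * expSq / 2) := Real.one_le_exp (by linarith)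
  unfold subexpK
  nlinarith

/-- The uniform deviation level of the empirical processes. -/
def devLevel (n p : ℕ) : ℝ := 640 * subexpK * √(n * log p / p)

lemma devLevel_nonneg (n p : ℕ) : 0 ≤ devLevel n p := by
  have := le_subexpK
  have := one_le_expSq
  unfold devLevel
  have : 0 ≤ subexpK := by linarith
  positivity

lemma one_le_log_of_three_le {p : ℕ} (hp : 3 ≤ p) : 1 ≤ log p := by
  rw [Real.le_log_iff_exp_le (by positivity)]
  have := Real.exp_one_lt_d9
  have : (3 : ℝ) ≤ p := by exact_mod_cast hp
  linarith

lemma devLevel_ge {n p : ℕ} (hn : 1 ≤ n) (hp : 3 ≤ p) : 655360 * expSq / p ≤ devLevel n p := by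
  have h1 := le_subexpK
  have h2 := one_le_expSq
  have h3 := one_le_log_of_three_le hp
  have hp' : (3 : ℝ) ≤ p := by exact_mod_cast hp
  have hn' : (1 : ℝ) ≤ n := by exact_mod_cast hn
  have h4 : 1 / (p : ℝ) ≤ √(n * log p / p) := by
    apply Real.le_sqrt_of_sq_le
    rw [div_pow, one_pow, div_le_div_iff₀ (by positivity) (by positivity)]
    have : 1 ≤ n * log p := one_le_mul_of_one_le_of_one_le hn' h3
    nlinarith
  unfold devLevel
  have : 0 ≤ subexpK := by linarith
  calc 655360 * expSq / p = 640 * (1024 * expSq) * (1 / p) := by ring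
    _ ≤ _ := by gcongr

section Uniform

variable {n p : ℕ} {θ μ : ℝ} {T : (Fin n → ℝ) → (Fin n → ℝ) → (Fin n → ℝ) → ℝ}

lemma exp_abs_bgVec (h0 : 0 ≤ θ) (h1 : θ ≤ 1) (hmeas : ∀ q v, Measurable (T q v))
    (hbd : ∀ q v x, |T q v x| ≤ 1 + (v ⬝ᵥ x) ^ 2) (q : Fin n → ℝ) {v : Fin n → ℝ}
    (hv : ∑ l, v l ^ 2 ≤ 1) :
    Integrable (fun x => exp (|T q v x| / 4)) (bgVec θ n) ∧
      ∫ x, exp (|T q v x| / 4) ∂(bgVec θ n) ≤ 2 * expSq := by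
  obtain ⟨hi, hle⟩ := exp_sq_dot_bgVec (θ := θ) h0 h1 hv
  have hpt : ∀ x, exp (|T q v x| / 4) ≤ 2 * exp ((v ⬝ᵥ x) ^ 2 / 4) := by
    intro x
    have h2 : exp (1 / 4) ≤ 2 := by
      rw [← Real.le_log_iff_exp_le (by norm_num)]
      linarith [Real.log_two_gt_d9]
    calc exp (|T q v x| / 4) ≤ exp (1 / 4 + (v ⬝ᵥ x) ^ 2 / 4) :=
          Real.exp_le_exp.2 (by linarith [hbd q v x])
      _ = exp (1 / 4) * exp ((v ⬝ᵥ x) ^ 2 / 4) := Real.exp_add _ _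
      _ ≤ _ := by gcongr
  have hI : Integrable (fun x => exp (|T q v x| / 4)) (bgVec θ n) := by
    have hm := hmeas q v
    refine (hi.const_mul 2).mono' (by fun_prop) (.of_forall fun x => ?_)
    rw [Real.norm_eq_abs, abs_of_pos (exp_pos _)]
    exact hpt x
  refine ⟨hI, (integral_mono hI (hi.const_mul 2) hpt).trans ?_⟩
  rw [integral_const_mul]
  linarith

/-- Integer grids of resolution `p ^ 14` on the cube. -/
def gridZ (n p : ℕ) : Finset (Fin n → ℤ) :=
  Fintype.piFinset fun _ => Finset.Icc (-((p ^ 14 : ℕ) : ℤ)) ((p ^ 14 : ℕ) : ℤ)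

/-- The point of the cube indexed by an integer vector. -/
def gridPt (p : ℕ) (z : Fin n → ℤ) : Fin n → ℝ := fun l => (z l : ℝ) / ((p ^ 14 : ℕ) : ℝ)

/-- The event that some empirical average over the grid deviates from its mean, or that the
weights are atypically large. -/
def badSet (θ : ℝ) (n p : ℕ) (T : (Fin n → ℝ) → (Fin n → ℝ) → (Fin n → ℝ) → ℝ) :
    Set (Fin p → Fin n → ℝ) :=
  {X | p ^ 6 * (136 * n ^ 3 * expSq) ≤ ∑ k, wt (X k)} ∪
    ⋃ z ∈ (gridZ n p ×ˢ gridZ n p).filter fun z => ∑ l, gridPt p z.2 l ^ 2 ≤ 1,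
      {X | devLevel n p / 2 ≤ |(p : ℝ)⁻¹ * ∑ k, T (gridPt p z.1) (gridPt p z.2) (X k)
        - ∫ x, T (gridPt p z.1) (gridPt p z.2) x ∂(bgVec θ n)|}

lemma card_gridZ_le (hp : 3 ≤ p) : ((gridZ n p).card : ℝ) ≤ (p : ℝ) ^ (15 * n) := by
  have h : (gridZ n p).card ≤ p ^ (15 * n) := by
    unfold gridZ
    rw [Fintype.card_piFinset_const, Int.card_Icc, pow_mul]
    refine Nat.pow_le_pow_left ?_ n
    have h1 : 3 * p ^ 14 ≤ p ^ 15 := by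
      rw [pow_succ p 14, mul_comm]; exact Nat.mul_le_mul_left _ hp
    have h2 : 1 ≤ p ^ 14 := Nat.one_le_pow _ _ (by omega)
    omega
  exact_mod_cast h

lemma badSet_prob (h0 : 0 ≤ θ) (h1 : θ ≤ 1) (hn : 1 ≤ n) (hp : 3 ≤ p)
    (hdev : devLevel n p ≤ 1) (hmeas : ∀ q v, Measurable (T q v))
    (hbd : ∀ q v x, |T q v x| ≤ 1 + (v ⬝ᵥ x) ^ 2) :
    (bgCols θ n p).real (badSet θ n p T) ≤ 3 / p ^ 5 := by
  have := isProbabilityMeasure_bgVec (n := n) h0 h1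
  have := isProbabilityMeasure_bgCols (n := n) (p := p) h0 h1
  have hp0 : 0 < p := by omega
  have hp' : (3 : ℝ) ≤ p := by exact_mod_cast hp
  have hE := one_le_expSq
  have hK := le_subexpK
  have hn' : (1 : ℝ) ≤ n := by exact_mod_cast hn
  have hW : (bgCols θ n p).real {X | p ^ 6 * (136 * n ^ 3 * expSq) ≤ ∑ k, wt (X k)}
      ≤ 1 / p ^ 5 := by
    obtain ⟨hwi, hwl⟩ := wt_bgVec (n := n) h0 h1 hn
    have hmp : ∀ k : Fin p, MeasurePreserving (Function.eval k) (bgCols θ n p) (bgVec θ n) :=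
      fun k => measurePreserving_eval (fun _ : Fin p => bgVec θ n) k
    have hik : ∀ k : Fin p, Integrable (fun X : Fin p → Fin n → ℝ => wt (X k)) (bgCols θ n p) :=
      fun k => (hmp k).integrable_comp_of_integrable hwi
    have hik2 : ∀ k : Fin p, ∫ X, wt (X k) ∂(bgCols θ n p) = ∫ x, wt x ∂(bgVec θ n) := by
      intro k
      rw [← (hmp k).map_eq, integral_map (hmp k).aemeasurable
        (by rw [(hmp k).map_eq]; exact hwi.aestronglyMeasurable)]
    have hM := mul_meas_ge_le_integral_of_nonneg (μ := bgCols θ n p)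
      (f := fun X : Fin p → Fin n → ℝ => ∑ k, wt (X k))
      (.of_forall fun X => Finset.sum_nonneg fun k _ => wt_nonneg _)
      (integrable_finsetSum _ fun k _ => hik k) (p ^ 6 * (136 * n ^ 3 * expSq))
    rw [integral_finsetSum _ fun k _ => hik k] at hM
    simp_rw [hik2] at hM
    rw [Finset.sum_const, Finset.card_univ, Fintype.card_fin, nsmul_eq_mul] at hM
    have hm : 0 < 136 * (n : ℝ) ^ 3 * expSq := by positivity
    rw [le_div_iff₀ (by positivity)]
    have h5 : (p : ℝ) * (136 * n ^ 3 * expSq) * ((bgCols θ n p).real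
        {X | p ^ 6 * (136 * n ^ 3 * expSq) ≤ ∑ k, wt (X k)} * p ^ 5)
        ≤ p * (136 * n ^ 3 * expSq) * 1 := by
      calc _ = p ^ 6 * (136 * n ^ 3 * expSq) * (bgCols θ n p).real
            {X | p ^ 6 * (136 * n ^ 3 * expSq) ≤ ∑ k, wt (X k)} := by ring
        _ ≤ _ := hM
        _ ≤ _ := by rw [mul_one]; gcongr
    exact le_of_mul_le_mul_left h5 (by positivity)
  have hG : ∀ z ∈ (gridZ n p ×ˢ gridZ n p).filter fun z => ∑ l, gridPt p z.2 l ^ 2 ≤ 1,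
      (bgCols θ n p).real {X | devLevel n p / 2 ≤
        |(p : ℝ)⁻¹ * ∑ k, T (gridPt p z.1) (gridPt p z.2) (X k)
        - ∫ x, T (gridPt p z.1) (gridPt p z.2) x ∂(bgVec θ n)|} ≤ 2 / (p : ℝ) ^ (40 * n) := by
    intro z hz
    obtain ⟨hi, hle⟩ := exp_abs_bgVec h0 h1 hmeas hbd (gridPt p z.1) (Finset.mem_filter.1 hz).2
    have hc := chernoff_two_side (hmeas _ _) hi hle hp0 (t := devLevel n p / 2)
      (by linarith [devLevel_nonneg n p]) (by
        change _ ≤ subexpK / 8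
        linarith) (by linarith)
    refine hc.trans ?_
    change 2 * exp (-(p * (devLevel n p / 2) ^ 2 / (4 * subexpK))) ≤ _
    have hlog := one_le_log_of_three_le hp
    have hsq : p * (devLevel n p / 2) ^ 2 / (4 * subexpK) = 25600 * subexpK * (n * log p) := by
      unfold devLevel
      rw [div_pow, mul_pow, Real.sq_sqrt (by positivity)]
      have : subexpK ≠ 0 := by linarith
      field_simp
      ring
    rw [hsq, div_eq_mul_inv]
    gcongr
    rw [Real.exp_neg]
    gcongr
    rw [← Real.exp_log (show (0 : ℝ) < p by positivity), ← Real.exp_nat_mul, Real.exp_log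
      (show (0 : ℝ) < p by positivity)]
    refine Real.exp_le_exp.2 ?_
    push_cast
    have : 0 ≤ n * log p := by positivity
    nlinarith
  unfold badSet
  refine (measureReal_union_le _ _).trans ?_
  have hU : (bgCols θ n p).real (⋃ z ∈ (gridZ n p ×ˢ gridZ n p).filter
      fun z => ∑ l, gridPt p z.2 l ^ 2 ≤ 1,
      {X | devLevel n p / 2 ≤ |(p : ℝ)⁻¹ * ∑ k, T (gridPt p z.1) (gridPt p z.2) (X k)
        - ∫ x, T (gridPt p z.1) (gridPt p z.2) x ∂(bgVec θ n)|}) ≤ 2 / p ^ 5 := by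
    refine (measureReal_biUnion_finset_le _ _).trans ((Finset.sum_le_sum hG).trans ?_)
    rw [Finset.sum_const, nsmul_eq_mul]
    have hcard : (((gridZ n p ×ˢ gridZ n p).filter
        fun z => ∑ l, gridPt p z.2 l ^ 2 ≤ 1).card : ℝ) ≤ (p : ℝ) ^ (30 * n) := by
      calc _ ≤ ((gridZ n p ×ˢ gridZ n p).card : ℝ) := by
            exact_mod_cast Finset.card_filter_le _ _
        _ = (gridZ n p).card * (gridZ n p).card := by rw [Finset.card_product]; push_cast; rfl
        _ ≤ (p : ℝ) ^ (15 * n) * (p : ℝ) ^ (15 * n) := by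
            gcongr <;> exact card_gridZ_le hp
        _ = _ := by rw [← pow_add]; congr 1; ring
    calc _ ≤ (p : ℝ) ^ (30 * n) * (2 / (p : ℝ) ^ (40 * n)) := by gcongr
      _ = 2 / (p : ℝ) ^ (10 * n) := by
          rw [show 40 * n = 30 * n + 10 * n by ring, pow_add]
          field_simp
      _ ≤ 2 / (p : ℝ) ^ 5 := by
          gcongr
          · linarith
          · omega
  calc _ ≤ 1 / (p : ℝ) ^ 5 + 2 / p ^ 5 := add_le_add hW hU
    _ = _ := by ring

lemma deviation_of_notMem_badSet (h0 : 0 ≤ θ) (h1 : θ ≤ 1) (hn : 1 ≤ n) (hnp : n ≤ p)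
    (hp : 3 ≤ p) (hμ : 0 < μ) (hμp : 1 ≤ p * μ) (hmeas : ∀ q v, Measurable (T q v))
    (hbd : ∀ q v x, |T q v x| ≤ 1 + (v ⬝ᵥ x) ^ 2)
    (hlip : ∀ q v q' v' x η, (∀ l, |q l| ≤ 1) → (∀ l, |v l| ≤ 1) → (∀ l, |v' l| ≤ 1) →
      (∀ l, |q l - q' l| ≤ η) → (∀ l, |v l - v' l| ≤ η) →
      |T q v x - T q' v' x| ≤ 4 * η / μ * wt x)
    {X : Fin p → Fin n → ℝ} (hX : X ∉ badSet θ n p T) {q v : Fin n → ℝ} (hq : ∑ l, q l ^ 2 ≤ 1)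
    (hv : ∑ l, v l ^ 2 ≤ 1) :
    |(p : ℝ)⁻¹ * ∑ k, T q v (X k) - ∫ x, T q v x ∂(bgVec θ n)| ≤ devLevel n p := by
  have := isProbabilityMeasure_bgVec (n := n) h0 h1
  have hp0 : 0 < p := by omega
  have hp' : (3 : ℝ) ≤ p := by exact_mod_cast hp
  have hE := one_le_expSq
  have hn' : (1 : ℝ) ≤ n := by exact_mod_cast hn
  have hnp' : (n : ℝ) ≤ p := by exact_mod_cast hnp
  have habs : ∀ a : Fin n → ℝ, ∑ l, a l ^ 2 ≤ 1 → ∀ l, |a l| ≤ 1 := by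
    intro a ha l
    rw [← sq_le_one_iff_abs_le_one]
    exact (Finset.single_le_sum (f := fun l => a l ^ 2) (fun _ _ => sq_nonneg _)
      (Finset.mem_univ l)).trans ha
  have hN : 0 < p ^ 14 := by positivity
  have hgrid : ∀ a : Fin n → ℝ, ∑ l, a l ^ 2 ≤ 1 → ∃ z ∈ gridZ n p,
      (∑ l, gridPt p z l ^ 2 ≤ 1) ∧ ∀ l, |a l - gridPt p z l| ≤ 1 / ((p ^ 14 : ℕ) : ℝ) := by
    intro a ha
    choose z hz1 hz2 hz3 using fun l => exists_round hN (habs a ha l)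
    refine ⟨z, Fintype.mem_piFinset.2 hz1, le_trans (Finset.sum_le_sum fun l _ => ?_) ha, hz3⟩
    exact sq_le_sq.2 (hz2 l)
  obtain ⟨z1, hz1, hz1s, hz1d⟩ := hgrid q hq
  obtain ⟨z2, hz2, hz2s, hz2d⟩ := hgrid v hv
  simp only [badSet, Set.mem_union, Set.mem_iUnion, Set.mem_ofPred_eq, not_or, not_exists,
    not_le] at hX
  have hX2 := hX.2 (z1, z2) (Finset.mem_filter.2 ⟨Finset.mem_product.2 ⟨hz1, hz2⟩, hz2s⟩)
  have hX1 := hX.1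
  simp only at hX2
  set q' := gridPt p z1
  set v' := gridPt p z2
  set η := 1 / ((p ^ 14 : ℕ) : ℝ) with hη
  have hη0 : 0 ≤ η := by positivity
  have hL := fun x => hlip q v q' v' x η (habs q hq) (habs v hv) (habs v' hz2s) hz1d hz2d
  obtain ⟨hwi, hwl⟩ := wt_bgVec (n := n) h0 h1 hn
  have hdiff1 : |(p : ℝ)⁻¹ * ∑ k, T q v (X k) - (p : ℝ)⁻¹ * ∑ k, T q' v' (X k)|
      ≤ 4 * η / μ * (p ^ 5 * (136 * n ^ 3 * expSq)) := by
    rw [← mul_sub, ← Finset.sum_sub_distrib, abs_mul, abs_of_nonneg (by positivity)]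
    calc _ ≤ (p : ℝ)⁻¹ * ∑ k, 4 * η / μ * wt (X k) := by
          gcongr
          exact (Finset.abs_sum_le_sum_abs _ _).trans (Finset.sum_le_sum fun k _ => hL _)
      _ = 4 * η / μ * ((p : ℝ)⁻¹ * ∑ k, wt (X k)) := by rw [← Finset.mul_sum]; ring
      _ ≤ 4 * η / μ * ((p : ℝ)⁻¹ * (p ^ 6 * (136 * n ^ 3 * expSq))) := by gcongr
      _ = _ := by field_simp
  have hI1 := integrable_of_exp_abs (hmeas q v) (exp_abs_bgVec (θ := θ) h0 h1 hmeas hbd q hv).1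
  have hI2 := integrable_of_exp_abs (hmeas q' v')
    (exp_abs_bgVec (θ := θ) h0 h1 hmeas hbd q' hz2s).1
  have hdiff2 : |∫ x, T q v x ∂(bgVec θ n) - ∫ x, T q' v' x ∂(bgVec θ n)|
      ≤ 4 * η / μ * (136 * n ^ 3 * expSq) := by
    rw [← integral_sub hI1 hI2]
    calc _ ≤ ∫ x, |T q v x - T q' v' x| ∂(bgVec θ n) := abs_integral_le_integral_abs
      _ ≤ ∫ x, 4 * η / μ * wt x ∂(bgVec θ n) :=
          integral_mono (hI1.sub hI2).abs (hwi.const_mul _) hL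
      _ ≤ _ := by
          rw [integral_const_mul]; gcongr
  have hsmall : 4 * η / μ * (p ^ 5 * (136 * n ^ 3 * expSq)) + 4 * η / μ * (136 * n ^ 3 * expSq)
      ≤ devLevel n p / 2 := by
    have hμ' : 1 / μ ≤ p := by rw [div_le_iff₀ hμ]; exact hμp
    have h5 : (1 : ℝ) ≤ p ^ 5 := one_le_pow₀ (by linarith)
    have hdl := devLevel_ge hn hp
    calc _ = 4 * η * (1 / μ) * ((p ^ 5 + 1) * (136 * n ^ 3 * expSq)) := by ring
      _ ≤ 4 * η * p * ((p ^ 5 + p ^ 5) * (136 * p ^ 3 * expSq)) := by gcongr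
      _ = 1088 * expSq / p ^ 5 := by
          rw [hη]; push_cast; field_simp; ring
      _ ≤ 1088 * expSq / p := by
          gcongr
          exact le_self_pow₀ (by linarith) (by norm_num)
      _ ≤ (655360 * expSq / p) / 2 := by
          rw [div_div, div_le_div_iff₀ (by positivity) (by positivity)]
          have : 0 ≤ expSq * p := by positivity
          nlinarith
      _ ≤ _ := by linarith
  rw [abs_le] at hdiff1 hdiff2 ⊢
  rw [abs_lt] at hX2
  constructor <;> linarith [hdiff1.1, hdiff1.2, hdiff2.1, hdiff2.2, hX2.1, hX2.2]

end Uniform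

/-- Integrand of the first-order quantity. -/
def slopeTerm (μ : ℝ) {n : ℕ} (q v x : Fin n → ℝ) : ℝ := tanh (q ⬝ᵥ x / μ) * (v ⬝ᵥ x)

/-- Integrand of the second-order quantity. -/
def curvTerm (μ : ℝ) {n : ℕ} (q v x : Fin n → ℝ) : ℝ := sech2 (q ⬝ᵥ x / μ) * (v ⬝ᵥ x) ^ 2

/-- Empirical counterpart of `M1`. -/
def E1 (μ : ℝ) {n p : ℕ} (X : Fin p → Fin n → ℝ) (q v : Fin n → ℝ) : ℝ :=
  (p : ℝ)⁻¹ * ∑ k, slopeTerm μ q v (X k)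

/-- Empirical counterpart of `M2`. -/
def E2 (μ : ℝ) {n p : ℕ} (X : Fin p → Fin n → ℝ) (q v : Fin n → ℝ) : ℝ :=
  (p : ℝ)⁻¹ * ∑ k, curvTerm μ q v (X k)

section Terms

variable {n p : ℕ} {θ μ : ℝ}

lemma measurable_slopeTerm (q v : Fin n → ℝ) : Measurable (slopeTerm μ q v) := by
  have h1 := (continuous_dot q)
  have h2 := (continuous_dot v)
  exact ((continuous_tanh'.comp (h1.div_const μ)).mul h2).measurable

lemma measurable_curvTerm (q v : Fin n → ℝ) : Measurable (curvTerm μ q v) := by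
  have h1 := (continuous_dot q)
  have h2 := (continuous_dot v)
  exact ((continuous_sech2.comp (h1.div_const μ)).mul (h2.pow 2)).measurable

lemma abs_slopeTerm_le (q v x : Fin n → ℝ) : |slopeTerm μ q v x| ≤ 1 + (v ⬝ᵥ x) ^ 2 := by
  unfold slopeTerm
  rw [abs_mul]
  have h := abs_tanh_le_one (q ⬝ᵥ x / μ)
  rw [← sq_abs (v ⬝ᵥ x)]
  nlinarith [abs_nonneg (v ⬝ᵥ x), sq_nonneg (|v ⬝ᵥ x| - 1)]

lemma abs_curvTerm_le (q v x : Fin n → ℝ) : |curvTerm μ q v x| ≤ 1 + (v ⬝ᵥ x) ^ 2 := by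
  unfold curvTerm
  have h := sech2_le_one (q ⬝ᵥ x / μ)
  have h' := (sech2_pos (q ⬝ᵥ x / μ)).le
  rw [abs_of_nonneg (by positivity)]
  nlinarith [sq_nonneg (v ⬝ᵥ x)]

lemma abs_dot_le {a x : Fin n → ℝ} {η : ℝ} (ha : ∀ l, |a l| ≤ η) :
    |a ⬝ᵥ x| ≤ η * ∑ l, |x l| := by
  rw [Finset.mul_sum]
  refine (Finset.abs_sum_le_sum_abs _ _).trans (Finset.sum_le_sum fun l _ => ?_)
  rw [abs_mul]
  exact mul_le_mul_of_nonneg_right (ha l) (abs_nonneg _)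

lemma abs_dot_sub_le {a a' x : Fin n → ℝ} {η : ℝ} (ha : ∀ l, |a l - a' l| ≤ η) :
    |a ⬝ᵥ x - a' ⬝ᵥ x| ≤ η * ∑ l, |x l| := by
  rw [← sub_dotProduct]
  exact abs_dot_le ha

lemma slopeTerm_lipschitz (hμ : 0 < μ) (hμ1 : μ ≤ 1) (hn : 1 ≤ n) (q v q' v' x : Fin n → ℝ)
    (η : ℝ) (_ : ∀ l, |q l| ≤ 1) (hv : ∀ l, |v l| ≤ 1) (_ : ∀ l, |v' l| ≤ 1)
    (hqq : ∀ l, |q l - q' l| ≤ η) (hvv : ∀ l, |v l - v' l| ≤ η) :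
    |slopeTerm μ q v x - slopeTerm μ q' v' x| ≤ 4 * η / μ * wt x := by
  have hη : 0 ≤ η := (abs_nonneg _).trans (hqq ⟨0, hn⟩)
  have hL : 0 ≤ ∑ i, |x i| := Finset.sum_nonneg fun i _ => abs_nonneg _
  have hd := abs_dot_le (x := x) hv
  have h1 := abs_dot_sub_le (x := x) hqq
  have h2 := abs_dot_sub_le (x := x) hvv
  have h3 := abs_tanh_sub_le (q ⬝ᵥ x / μ) (q' ⬝ᵥ x / μ)
  have h4 := abs_tanh_le_one (q' ⬝ᵥ x / μ)
  rw [← sub_div, abs_div, abs_of_pos hμ] at h3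
  unfold slopeTerm wt
  set L := ∑ i, |x i|
  have hημ : η ≤ η / μ := by rw [le_div_iff₀ hμ]; nlinarith
  calc _ = |(tanh (q ⬝ᵥ x / μ) - tanh (q' ⬝ᵥ x / μ)) * (v ⬝ᵥ x)
        + tanh (q' ⬝ᵥ x / μ) * (v ⬝ᵥ x - v' ⬝ᵥ x)| := by congr 1; ring
    _ ≤ |tanh (q ⬝ᵥ x / μ) - tanh (q' ⬝ᵥ x / μ)| * |v ⬝ᵥ x|
        + |tanh (q' ⬝ᵥ x / μ)| * |v ⬝ᵥ x - v' ⬝ᵥ x| := by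
          rw [← abs_mul, ← abs_mul]; exact abs_add_le _ _
    _ ≤ (η * L / μ) * (1 * L) + 1 * (η * L) := by
          gcongr
          exact h3.trans (by gcongr)
    _ ≤ (η * L / μ) * (1 * L) + 1 * (η / μ * L) := by gcongr
    _ = η / μ * (L ^ 2 + L) := by ring
    _ ≤ η / μ * (4 * (1 + L) ^ 3) := by
          gcongr
          nlinarith [pow_nonneg hL 3, pow_nonneg hL 2]
    _ = _ := by ring

lemma curvTerm_lipschitz (hμ : 0 < μ) (hμ1 : μ ≤ 1) (hn : 1 ≤ n) (q v q' v' x : Fin n → ℝ)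
    (η : ℝ) (_ : ∀ l, |q l| ≤ 1) (hv : ∀ l, |v l| ≤ 1) (hv' : ∀ l, |v' l| ≤ 1)
    (hqq : ∀ l, |q l - q' l| ≤ η) (hvv : ∀ l, |v l - v' l| ≤ η) :
    |curvTerm μ q v x - curvTerm μ q' v' x| ≤ 4 * η / μ * wt x := by
  have hη : 0 ≤ η := (abs_nonneg _).trans (hqq ⟨0, hn⟩)
  have hL : 0 ≤ ∑ i, |x i| := Finset.sum_nonneg fun i _ => abs_nonneg _
  have hd := abs_dot_le (x := x) hv
  have hd' := abs_dot_le (x := x) hv'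
  have h1 := abs_dot_sub_le (x := x) hqq
  have h2 := abs_dot_sub_le (x := x) hvv
  have h3 := abs_sech2_sub_le (q ⬝ᵥ x / μ) (q' ⬝ᵥ x / μ)
  have h4 := sech2_le_one (q' ⬝ᵥ x / μ)
  have h5 := (sech2_pos (q' ⬝ᵥ x / μ)).le
  rw [← sub_div, abs_div, abs_of_pos hμ] at h3
  unfold curvTerm wt
  set L := ∑ i, |x i|
  have hημ : η ≤ η / μ := by rw [le_div_iff₀ hμ]; nlinarith
  have hsum : |v ⬝ᵥ x + v' ⬝ᵥ x| ≤ 2 * L := (abs_add_le _ _).trans (by linarith)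
  calc _ = |(sech2 (q ⬝ᵥ x / μ) - sech2 (q' ⬝ᵥ x / μ)) * (v ⬝ᵥ x) ^ 2
        + sech2 (q' ⬝ᵥ x / μ) * ((v ⬝ᵥ x - v' ⬝ᵥ x) * (v ⬝ᵥ x + v' ⬝ᵥ x))| := by
          congr 1; ring
    _ ≤ |sech2 (q ⬝ᵥ x / μ) - sech2 (q' ⬝ᵥ x / μ)| * |v ⬝ᵥ x| ^ 2
        + |sech2 (q' ⬝ᵥ x / μ)| * (|v ⬝ᵥ x - v' ⬝ᵥ x| * |v ⬝ᵥ x + v' ⬝ᵥ x|) := by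
          rw [← abs_pow, ← abs_mul, ← abs_mul, ← abs_mul]; exact abs_add_le _ _
    _ ≤ (2 * (η * L / μ)) * (1 * L) ^ 2 + 1 * ((η * L) * (2 * L)) := by
          rw [abs_of_nonneg h5]
          gcongr
          exact h3.trans (by gcongr)
    _ ≤ (2 * (η * L / μ)) * (1 * L) ^ 2 + 1 * ((η / μ * L) * (2 * L)) := by gcongr
    _ = η / μ * (2 * L ^ 3 + 2 * L ^ 2) := by ring
    _ ≤ η / μ * (4 * (1 + L) ^ 3) := by
          gcongr
          nlinarith [pow_nonneg hL 3, pow_nonneg hL 2]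
    _ = _ := by ring

/-- Uniform closeness of the empirical first- and second-order quantities to their means. -/
def Good (θ μ ε : ℝ) {n p : ℕ} (X : Fin p → Fin n → ℝ) : Prop :=
  ∀ (q v : Fin n → ℝ) (r : ℝ), ∑ l, q l ^ 2 ≤ 1 → 0 ≤ r → ∑ l, v l ^ 2 = r ^ 2 →
    |E1 μ X q v - M1 θ μ q v| ≤ ε * r ∧ |E2 μ X q v - M2 θ μ q v| ≤ ε * r ^ 2

lemma good_of_notMem (h0 : 0 ≤ θ) (h1 : θ ≤ 1) (hn : 1 ≤ n) (hnp : n ≤ p)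
    (hp : 3 ≤ p) (hμ : 0 < μ) (hμ1 : μ ≤ 1) (hμp : 1 ≤ p * μ) {X : Fin p → Fin n → ℝ}
    (hX1 : X ∉ badSet θ n p (slopeTerm μ)) (hX2 : X ∉ badSet θ n p (curvTerm μ)) :
    Good θ μ (devLevel n p) X := by
  intro q v r hq hr hv
  rcases hr.eq_or_lt with rfl | hr
  · have hv0 : v = 0 := by
      rw [zero_pow two_ne_zero, Finset.sum_eq_zero_iff_of_nonneg fun _ _ => sq_nonneg _] at hv
      ext l
      simpa using hv l (Finset.mem_univ l)
    simp [hv0, E1, E2, M1, M2, slopeTerm, curvTerm]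
  · obtain ⟨u, rfl⟩ : ∃ u, v = r • u := ⟨r⁻¹ • v, by rw [smul_smul, mul_inv_cancel₀ hr.ne', one_smul]⟩
    have hu : ∑ l, u l ^ 2 ≤ 1 := by
      simp only [Pi.smul_apply, smul_eq_mul, mul_pow] at hv
      rw [← Finset.mul_sum] at hv
      have : r ^ 2 ≠ 0 := by positivity
      exact (mul_left_cancel₀ this (hv.trans (mul_one _).symm)).le
    have d1 := deviation_of_notMem_badSet (T := slopeTerm μ) h0 h1 hn hnp hp hμ hμp
      measurable_slopeTerm abs_slopeTerm_le (slopeTerm_lipschitz hμ hμ1 hn) hX1 hq hu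
    have d2 := deviation_of_notMem_badSet (T := curvTerm μ) h0 h1 hn hnp hp hμ hμp
      measurable_curvTerm abs_curvTerm_le (curvTerm_lipschitz hμ hμ1 hn) hX2 hq hu
    have s1 : ∀ x : Fin n → ℝ, slopeTerm μ q (r • u) x = r * slopeTerm μ q u x := by
      intro x; simp only [slopeTerm, smul_dotProduct, smul_eq_mul]; ring
    have s2 : ∀ x : Fin n → ℝ, curvTerm μ q (r • u) x = r ^ 2 * curvTerm μ q u x := by
      intro x; simp only [curvTerm, smul_dotProduct, smul_eq_mul]; ring
    have e1 : E1 μ X q (r • u) - M1 θ μ q (r • u) = r * ((p : ℝ)⁻¹ * ∑ k, slopeTerm μ q u (X k)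
        - ∫ x, slopeTerm μ q u x ∂(bgVec θ n)) := by
      change (p : ℝ)⁻¹ * ∑ k, slopeTerm μ q (r • u) (X k)
        - ∫ x, slopeTerm μ q (r • u) x ∂(bgVec θ n) = _
      simp_rw [s1]
      rw [integral_const_mul, ← Finset.mul_sum]; ring
    have e2 : E2 μ X q (r • u) - M2 θ μ q (r • u) = r ^ 2 * ((p : ℝ)⁻¹ *
        ∑ k, curvTerm μ q u (X k) - ∫ x, curvTerm μ q u x ∂(bgVec θ n)) := by
      change (p : ℝ)⁻¹ * ∑ k, curvTerm μ q (r • u) (X k)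
        - ∫ x, curvTerm μ q (r • u) x ∂(bgVec θ n) = _
      simp_rw [s2]
      rw [integral_const_mul, ← Finset.mul_sum]; ring
    rw [e1, e2, abs_mul, abs_mul, abs_of_pos hr, abs_of_pos (by positivity : 0 < r ^ 2),
      mul_comm r, mul_comm (r ^ 2)]
    exact ⟨by gcongr, by gcongr⟩

end Terms

lemma bgMatrix_ge {n p : ℕ} {θ μ : ℝ} (h0 : 0 ≤ θ) (h1 : θ ≤ 1) (hn : 1 ≤ n) (hnp : n ≤ p)
    (hp : 3 ≤ p) (hμ : 0 < μ) (hμ1 : μ ≤ 1) (hμp : 1 ≤ p * μ) (hdev : devLevel n p ≤ 1)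
    {G : Set (Fin n → Fin p → ℝ)}
    (hG : ∀ X : Fin p → Fin n → ℝ, Good θ μ (devLevel n p) X → (fun i k => X k i) ∈ G) :
    ENNReal.ofReal (1 - 6 / (p : ℝ) ^ 5) ≤ bgMatrix θ n p G := by
  have := isProbabilityMeasure_bgCols (n := n) (p := p) h0 h1
  rw [bgMatrix_apply_eq h0 h1]
  set S : Set (Fin p → Fin n → ℝ) := {Y | (fun i k => Y k i) ∈ G}
  set B := badSet θ n p (slopeTerm μ) ∪ badSet θ n p (curvTerm μ)
  have hB : (bgCols θ n p).real B ≤ 6 / p ^ 5 := by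
    refine (measureReal_union_le _ _).trans ?_
    have b1 := badSet_prob (T := slopeTerm μ) h0 h1 hn hp hdev measurable_slopeTerm
      abs_slopeTerm_le
    have b2 := badSet_prob (T := curvTerm μ) h0 h1 hn hp hdev measurable_curvTerm
      abs_curvTerm_le
    calc _ ≤ 3 / (p : ℝ) ^ 5 + 3 / p ^ 5 := add_le_add b1 b2
      _ = _ := by ring
  have hcover : Set.univ ⊆ S ∪ B := by
    intro X _
    by_cases hX : X ∈ B
    · exact Or.inr hX
    · left
      simp only [B, Set.mem_union, not_or] at hX
      exact hG X (good_of_notMem h0 h1 hn hnp hp hμ hμ1 hμp hX.1 hX.2)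
  have h3 : 1 ≤ (bgCols θ n p).real S + (bgCols θ n p).real B := by
    calc (1 : ℝ) = (bgCols θ n p).real Set.univ := by simp
      _ ≤ (bgCols θ n p).real (S ∪ B) := measureReal_mono hcover
      _ ≤ _ := measureReal_union_le _ _
  rw [← ofReal_measureReal]
  exact ENNReal.ofReal_le_ofReal (by linarith)

lemma mul_log_le_of_mul_log_le {a x : ℝ} (ha : 0 < a) (hx : 0 < x)
    (h : 2 * (a * log (2 * a)) ≤ x) : a * log x ≤ x := by
  have h1 := Real.log_le_sub_one_of_pos (show 0 < x / (2 * a) by positivity)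
  rw [Real.log_div hx.ne' (by positivity)] at h1
  have h2 : a * (x / (2 * a)) = x / 2 := by field_simp
  nlinarith

lemma exists_sample_size {δ : ℝ} (hδ : 0 < δ) : ∃ C, 0 < C ∧ ∀ (n p : ℕ) (θ μ : ℝ), 2 ≤ n →
    0 < θ → θ ≤ 1 / 2 → 0 < μ → μ ≤ 1 →
    C / (μ ^ 2 * θ ^ 2) * (n : ℝ) ^ 3 * log ((n : ℝ) / (μ * θ)) ≤ (p : ℝ) →
    devLevel n p ≤ δ * (μ * θ / n) ∧ n ≤ p ∧ 3 ≤ p ∧ 1 ≤ p * μ := by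
  have hK : 1 ≤ subexpK := by linarith [le_subexpK, one_le_expSq]
  set B := (640 * subexpK / δ) ^ 2 + 1 with hBdef
  have hB1 : 1 ≤ B := by have := sq_nonneg (640 * subexpK / δ); linarith
  have hB : (640 * subexpK / δ) ^ 2 ≤ B := by linarith
  have hlB : 0 ≤ log (2 * B) := Real.log_nonneg (by linarith)
  refine ⟨2 * B * (log (2 * B) + 3), by positivity, fun n p θ μ hn hθ hθ2 hμ hμ1 hp => ?_⟩
  have hn' : (2 : ℝ) ≤ n := by exact_mod_cast hn
  have hs : 0 < μ * θ := by positivity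
  have hs1 : μ * θ ≤ 1 / 2 := by nlinarith
  set s := μ * θ
  set A := (n : ℝ) ^ 3 / s ^ 2 with hA
  have hA0 : 0 < A := by positivity
  have hnA : (n : ℝ) ≤ A := by
    rw [hA, le_div_iff₀ (by positivity)]
    have : s ^ 2 ≤ 1 := by nlinarith
    nlinarith [mul_nonneg (show (0:ℝ) ≤ n by linarith) (sub_nonneg.2 this), sq_nonneg ((n : ℝ) - 1)]
  have h8 : 8 ≤ A := by
    rw [hA, le_div_iff₀ (by positivity)]
    have h1 : s ^ 2 ≤ 1 := by nlinarith
    have h2 : (2 : ℝ) ^ 3 ≤ (n : ℝ) ^ 3 := by gcongr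
    nlinarith
  have hu : 4 ≤ n / s := by rw [le_div_iff₀ hs]; linarith
  have hL : 1 ≤ log (n / s) := by
    rw [Real.le_log_iff_exp_le (by positivity)]
    linarith [Real.exp_one_lt_d9]
  have hAu : log A ≤ 3 * log (n / s) := by
    rw [← Real.log_rpow (by positivity)]
    apply Real.log_le_log hA0
    rw [show (3 : ℝ) = ((3 : ℕ) : ℝ) by norm_num, Real.rpow_natCast, hA, div_pow]
    refine div_le_div_of_nonneg_left (by positivity) (by positivity) ?_
    exact pow_le_pow_of_le_one hs.le (by linarith) (by norm_num)
  have hp1 : 2 * (B * A * ((log (2 * B) + 3) * log (n / s))) ≤ p := by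
    refine le_trans (le_of_eq ?_) hp
    rw [hA, show μ ^ 2 * θ ^ 2 = s ^ 2 by rw [← mul_pow]]
    ring
  have hBA : A ≤ B * A := by nlinarith
  have hpA : A ≤ p := by
    have : 1 ≤ (log (2 * B) + 3) * log (n / s) := one_le_mul_of_one_le_of_one_le (by linarith) hL
    nlinarith [mul_le_mul hBA this zero_le_one (by positivity)]
  have hp0 : (0 : ℝ) < p := by linarith
  have hlog : B * A * log p ≤ p := by
    apply mul_log_le_of_mul_log_le (by positivity) hp0
    refine le_trans ?_ hp1
    gcongr
    rw [show 2 * (B * A) = 2 * B * A by ring, Real.log_mul (by positivity) (by positivity)]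
    nlinarith
  refine ⟨?_, by exact_mod_cast hnA.trans hpA, ?_, ?_⟩
  · unfold devLevel
    have hsq : n * log p / p ≤ (δ * (s / n) / (640 * subexpK)) ^ 2 := by
      rw [div_le_iff₀ hp0]
      have h5 : (640 * subexpK / δ) ^ 2 * A * log p ≤ p := by
        refine le_trans ?_ hlog
        have : 0 ≤ log p := Real.log_nonneg (by linarith)
        gcongr
      calc n * log p = (δ * (s / n) / (640 * subexpK)) ^ 2
            * ((640 * subexpK / δ) ^ 2 * A * log p) := by rw [hA]; field_simp
        _ ≤ _ := by gcongr
    have h6 := Real.sqrt_le_sqrt hsq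
    rw [Real.sqrt_sq (by positivity)] at h6
    calc _ ≤ 640 * subexpK * (δ * (s / n) / (640 * subexpK)) := by gcongr
      _ = _ := by field_simp
  · have : (3 : ℝ) ≤ p := by linarith
    exact_mod_cast this
  · have h7 : 1 ≤ A * μ := by
      rw [hA, div_mul_eq_mul_div, le_div_iff₀ (by positivity)]
      have h9 : s ≤ μ := mul_le_of_le_one_right hμ.le (by linarith)
      have h10 : s ^ 2 ≤ s := by
        rw [sq]; exact mul_le_of_le_one_right hs.le (by linarith)
      have h11 : (1 : ℝ) ≤ (n : ℝ) ^ 3 := one_le_pow₀ (by linarith)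
      have h12 : μ ≤ (n : ℝ) ^ 3 * μ := le_mul_of_one_le_left hμ.le h11
      linarith
    exact h7.trans (by gcongr)

/-- The objective as a function of coordinates and of the columns of the data. -/
def fE (μ : ℝ) {n p : ℕ} (X : Fin p → Fin n → ℝ) (q : Fin n → ℝ) : ℝ :=
  (p : ℝ)⁻¹ * ∑ k, hmu μ (q ⬝ᵥ X k)

/-- Local minimality of `fE` over the unit sphere, in coordinates. -/
def LM (μ : ℝ) {n p : ℕ} (X : Fin p → Fin n → ℝ) (q : Fin n → ℝ) : Prop :=
  q ⬝ᵥ q = 1 ∧ ∀ᶠ q' in nhds q, q' ⬝ᵥ q' = 1 → fE μ X q ≤ fE μ X q'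

lemma hasDerivAt_hmu {μ : ℝ} (hμ : μ ≠ 0) (z : ℝ) : HasDerivAt (hmu μ) (tanh (z / μ)) z := by
  have h1 : HasDerivAt (fun z : ℝ => z / μ) (1 / μ) z := (hasDerivAt_id z).div_const μ
  have h2 := (HasDerivAt.log (f := fun z => cosh (z / μ)) h1.cosh
    (Real.cosh_pos _).ne').const_mul μ
  refine h2.congr_deriv ?_
  rw [Real.tanh_eq_sinh_div_cosh]
  field_simp

section Curve

variable {n p : ℕ} {μ : ℝ} (X : Fin p → Fin n → ℝ) (z a b : Fin n → ℝ)

/-- The circle `z + cos t • a + sin t • b`. -/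
def circ (t : ℝ) : Fin n → ℝ := z + cos t • a + sin t • b

/-- The velocity of `circ`. -/
def circ' (t : ℝ) : Fin n → ℝ := -sin t • a + cos t • b

variable {z a b} in
lemma circ_dot_self (hza : z ⬝ᵥ a = 0) (hzb : z ⬝ᵥ b = 0) (hab : a ⬝ᵥ b = 0)
    (haa : a ⬝ᵥ a = b ⬝ᵥ b) (t : ℝ) : circ z a b t ⬝ᵥ circ z a b t = z ⬝ᵥ z + a ⬝ᵥ a := by
  have h := Real.sin_sq_add_cos_sq t
  simp only [circ, add_dotProduct, dotProduct_add, smul_dotProduct, dotProduct_smul, smul_eq_mul,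
    dotProduct_comm a z, dotProduct_comm b z, dotProduct_comm b a, hza, hzb, hab]
  rw [← haa]
  linear_combination (a ⬝ᵥ a) * h

lemma hasDerivAt_circ_dot (x : Fin n → ℝ) (t : ℝ) :
    HasDerivAt (fun t => circ z a b t ⬝ᵥ x) (circ' a b t ⬝ᵥ x) t := by
  simp only [circ, circ', add_dotProduct, smul_dotProduct, smul_eq_mul]
  exact (((Real.hasDerivAt_cos t).mul_const _).const_add _).add
    ((Real.hasDerivAt_sin t).mul_const _)

lemma hasDerivAt_circ'_dot (x : Fin n → ℝ) (t : ℝ) :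
    HasDerivAt (fun t => circ' a b t ⬝ᵥ x) (-((cos t • a + sin t • b) ⬝ᵥ x)) t := by
  simp only [circ', add_dotProduct, smul_dotProduct, smul_eq_mul]
  refine (((Real.hasDerivAt_sin t).neg.mul_const _).add
    ((Real.hasDerivAt_cos t).mul_const _)).congr_deriv ?_
  ring

lemma hasDerivAt_fE_circ (hμ : μ ≠ 0) (t : ℝ) :
    HasDerivAt (fun t => fE μ X (circ z a b t)) (E1 μ X (circ z a b t) (circ' a b t)) t := by
  refine HasDerivAt.const_mul _ (HasDerivAt.fun_sum fun k _ => ?_)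
  exact (hasDerivAt_hmu hμ _).comp t (hasDerivAt_circ_dot z a b (X k) t)

lemma hasDerivAt_E1_circ (t : ℝ) :
    HasDerivAt (fun t => E1 μ X (circ z a b t) (circ' a b t))
      (E2 μ X (circ z a b t) (circ' a b t) / μ - E1 μ X (circ z a b t) (cos t • a + sin t • b))
      t := by
  have h : ∀ k, HasDerivAt (fun t => slopeTerm μ (circ z a b t) (circ' a b t) (X k))
      (curvTerm μ (circ z a b t) (circ' a b t) (X k) / μ
        - slopeTerm μ (circ z a b t) (cos t • a + sin t • b) (X k)) t := by
    intro k
    have h1 := (hasDerivAt_circ_dot z a b (X k) t).div_const μ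
    have h2 := ((hasDerivAt_tanh' _).comp t h1).mul (hasDerivAt_circ'_dot a b (X k) t)
    refine h2.congr_deriv ?_
    simp only [curvTerm, slopeTerm, Function.comp]
    ring
  refine (HasDerivAt.const_mul _ (HasDerivAt.fun_sum fun k _ => h k)).congr_deriv ?_
  simp only [E1, E2, Finset.sum_sub_distrib, ← Finset.sum_div]
  ring

lemma continuous_circ : Continuous (circ z a b) := by
  unfold circ; fun_prop

end Curve

/-- Second-order necessary condition at a local minimum on the line. -/
lemma second_deriv_nonneg_of_isLocalMin {φ φ' : ℝ → ℝ} {d : ℝ} (hφ : ∀ t, HasDerivAt φ (φ' t) t)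
    (hφ' : HasDerivAt φ' d 0) (hmin : IsLocalMin φ 0) : φ' 0 = 0 ∧ 0 ≤ d := by
  have h0 := hmin.hasDerivAt_eq_zero (hφ 0)
  refine ⟨h0, ?_⟩
  by_contra! hd
  have hderiv : deriv φ = φ' := funext fun t => (hφ t).deriv
  have hmax : IsLocalMax φ 0 := isLocalMax_of_deriv_deriv_neg (by rw [hderiv, hφ'.deriv]; exact hd)
    (by rw [hderiv, h0]) (hφ 0).continuousAt
  have heq : φ =ᶠ[nhds 0] fun _ => φ 0 := by
    filter_upwards [hmin, hmax] with t h1 h2 using le_antisymm h2 h1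
  have h2 : φ' =ᶠ[nhds 0] fun _ => 0 := by
    have := heq.deriv
    rw [hderiv] at this
    simpa using this
  have h3 := h2.deriv_eq
  rw [hφ'.deriv] at h3
  simp at h3
  linarith

section Critical

variable {n p : ℕ} {μ : ℝ} {X : Fin p → Fin n → ℝ} {q : Fin n → ℝ}

lemma LM.isLocalMin_circ (h : LM μ X q) {z a b : Fin n → ℝ} (hza : z ⬝ᵥ a = 0)
    (hzb : z ⬝ᵥ b = 0) (hab : a ⬝ᵥ b = 0) (haa : a ⬝ᵥ a = b ⬝ᵥ b) (hq : z + a = q) :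
    IsLocalMin (fun t => fE μ X (circ z a b t)) 0 := by
  have hc0 : circ z a b 0 = q := by simp [circ, hq]
  have h1 : Filter.Tendsto (circ z a b) (nhds 0) (nhds q) := by
    rw [← hc0]; exact (continuous_circ z a b).tendsto 0
  have hzz : z ⬝ᵥ z + a ⬝ᵥ a = 1 := by rw [← circ_dot_self hza hzb hab haa 0, hc0, h.1]
  filter_upwards [h1.eventually h.2] with t ht
  rw [hc0]
  exact ht (by rw [circ_dot_self hza hzb hab haa, hzz])

lemma LM.circ_conditions (hμ : μ ≠ 0) (h : LM μ X q) {z a b : Fin n → ℝ} (hza : z ⬝ᵥ a = 0)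
    (hzb : z ⬝ᵥ b = 0) (hab : a ⬝ᵥ b = 0) (haa : a ⬝ᵥ a = b ⬝ᵥ b) (hq : z + a = q) :
    E1 μ X q b = 0 ∧ 0 ≤ E2 μ X q b / μ - E1 μ X q a := by
  have h2 := second_deriv_nonneg_of_isLocalMin (fun t => hasDerivAt_fE_circ X z a b hμ t)
    (hasDerivAt_E1_circ X z a b 0) (h.isLocalMin_circ hza hzb hab haa hq)
  simpa [circ, circ', hq] using h2

lemma E1_smul (q v : Fin n → ℝ) (r : ℝ) : E1 μ X q (r • v) = r * E1 μ X q v := by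
  simp only [E1, slopeTerm, smul_dotProduct, smul_eq_mul, Finset.mul_sum]
  exact Finset.sum_congr rfl fun k _ => by ring

/-- First-order condition in every tangent direction. -/
lemma LM.E1_eq_zero (hμ : μ ≠ 0) (h : LM μ X q) {v : Fin n → ℝ} (hv : q ⬝ᵥ v = 0) :
    E1 μ X q v = 0 := by
  rcases eq_or_ne v 0 with rfl | hv0
  · simp [E1, slopeTerm]
  have hpos : 0 < v ⬝ᵥ v := by
    refine lt_of_le_of_ne (Finset.sum_nonneg fun i _ => mul_self_nonneg _) ?_
    exact fun h0 => hv0 (dotProduct_self_eq_zero.1 h0.symm)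
  set r := √(v ⬝ᵥ v)
  have hr : 0 < r := Real.sqrt_pos.2 hpos
  have hr2 : r * r = v ⬝ᵥ v := Real.mul_self_sqrt hpos.le
  have h2 := (h.circ_conditions hμ (z := 0) (a := q) (b := r⁻¹ • v) (by simp) (by simp)
    (by simp [dotProduct_smul, hv]) (by
      rw [h.1, smul_dotProduct, dotProduct_smul, ← hr2, smul_eq_mul, smul_eq_mul]
      field_simp) (by simp)).1
  rw [E1_smul] at h2
  exact (mul_eq_zero.1 h2).resolve_left (by positivity)

lemma fE_neg (q : Fin n → ℝ) : fE μ X (-q) = fE μ X q := by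
  simp only [fE, hmu, neg_dotProduct, neg_div, Real.cosh_neg]

lemma LM.neg (h : LM μ X q) : LM μ X (-q) := by
  refine ⟨by simpa using h.1, ?_⟩
  have h1 : Filter.Tendsto (fun q' : Fin n → ℝ => -q') (nhds (-q)) (nhds q) := by
    have := (continuous_neg (G := Fin n → ℝ)).tendsto (-q)
    rwa [neg_neg] at this
  filter_upwards [h1.eventually h.2] with q' hq' hu
  rw [fE_neg]
  have := hq' (by simpa using hu)
  rwa [fE_neg] at this

lemma continuous_fE : Continuous (fE μ X) := by
  have h1 : Continuous (hmu μ) := by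
    unfold hmu
    exact continuous_const.mul ((Real.continuous_cosh.comp (continuous_id.div_const μ)).log
      fun z => (Real.cosh_pos _).ne')
  unfold fE
  refine continuous_const.mul (continuous_finsetSum _ fun k _ => h1.comp ?_)
  unfold dotProduct
  fun_prop

end Critical

lemma mem_localMins_iff {n p : ℕ} {μ : ℝ} (X : Fin p → Fin n → ℝ) (q : EuclideanSpace ℝ (Fin n)) :
    q ∈ LocalMins n p μ (Matrix.of fun i k => X k i) ↔ LM μ X q.ofLp := by
  have hs : ∀ x : EuclideanSpace ℝ (Fin n), x ∈ Metric.sphere (0 : EuclideanSpace ℝ (Fin n)) 1 ↔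
      x.ofLp ⬝ᵥ x.ofLp = 1 := by
    intro x
    rw [mem_sphere_zero_iff_norm, EuclideanSpace.norm_eq, Real.sqrt_eq_one]
    simp [dotProduct, sq]
  have hf : ∀ x : EuclideanSpace ℝ (Fin n),
      ffun n p μ (Matrix.of fun i k => X k i) x = fE μ X x.ofLp := fun x => rfl
  unfold LocalMins LM
  rw [Set.mem_ofPred_eq, hs]
  refine and_congr_right fun _ => ?_
  have hmap : Filter.map (fun x : EuclideanSpace ℝ (Fin n) => x.ofLp) (nhds q) = nhds q.ofLp :=
    (EuclideanSpace.equiv (Fin n) ℝ).toHomeomorph.map_nhds_eq q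
  rw [← hmap, Filter.eventually_map, IsLocalMinOn, IsMinFilter, eventually_nhdsWithin_iff]
  simp only [hs, hf]

section Geometry

variable {n p : ℕ} {θ μ ε : ℝ} {X : Fin p → Fin n → ℝ} {q : Fin n → ℝ}

lemma dot_self_eq_sum_sq (v : Fin n → ℝ) : v ⬝ᵥ v = ∑ l, v l ^ 2 :=
  Finset.sum_congr rfl fun l _ => (sq (v l)).symm

lemma sq_add_sum_compl (v : Fin n → ℝ) (i : Fin n) :
    v i ^ 2 + ∑ k ∈ {i}ᶜ, v k ^ 2 = ∑ l, v l ^ 2 := by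
  rw [← Finset.sum_add_sum_compl {i}, Finset.sum_singleton]

lemma dot_eq_of_pair_support {i j : Fin n} (hij : i ≠ j) {u : Fin n → ℝ}
    (hu : ∀ l, l ≠ i → l ≠ j → u l = 0) (w : Fin n → ℝ) : u ⬝ᵥ w = u i * w i + u j * w j :=
  Finset.sum_eq_add i j hij (fun l _ hl => by simp [hu l hl.1 hl.2]) (by simp) (by simp)

lemma pairDir_apply_of_ne {i j l : Fin n} (hi : l ≠ i) (hj : l ≠ j) : pairDir q i j l = 0 := by
  simp [pairDir, hi, hj]

lemma pairProj_apply_of_ne {i j l : Fin n} (hi : l ≠ i) (hj : l ≠ j) : pairProj q i j l = 0 := by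
  simp [pairProj, hi, hj]

lemma pairDir_dot_self {i j : Fin n} (hij : i ≠ j) :
    pairDir q i j ⬝ᵥ pairDir q i j = q i ^ 2 + q j ^ 2 := by
  rw [dot_eq_of_pair_support hij fun l => pairDir_apply_of_ne]
  simp [pairDir, hij]; ring

lemma pairProj_dot_self {i j : Fin n} (hij : i ≠ j) :
    pairProj q i j ⬝ᵥ pairProj q i j = q i ^ 2 + q j ^ 2 := by
  rw [dot_eq_of_pair_support hij fun l => pairProj_apply_of_ne]
  simp [pairProj, hij]; ring

/-- Necessary conditions at a local minimizer along the rotation in the plane of two axes. -/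
lemma LM.pair_conditions (hμ : μ ≠ 0) (h : LM μ X q) {i j : Fin n} (hij : i ≠ j) :
    E1 μ X q (pairDir q i j) = 0 ∧
      0 ≤ E2 μ X q (pairDir q i j) / μ - E1 μ X q (pairProj q i j) := by
  refine h.circ_conditions hμ (z := q - pairProj q i j) ?_ ?_ ?_ ?_ (by simp)
  · rw [dotProduct_comm, dot_eq_of_pair_support hij fun l => pairProj_apply_of_ne]
    simp [pairProj, hij]
  · rw [dotProduct_comm, dot_eq_of_pair_support hij fun l => pairDir_apply_of_ne]
    simp [pairDir, pairProj, hij]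
  · rw [dot_eq_of_pair_support hij fun l => pairProj_apply_of_ne]
    simp [pairDir, pairProj, hij]; ring
  · rw [pairDir_dot_self hij, pairProj_dot_self hij]

lemma LM.sum_sq (h : LM μ X q) : ∑ l, q l ^ 2 = 1 := by rw [← dot_self_eq_sum_sq]; exact h.1

lemma exists_sq_max (hn : 1 ≤ n) (hq : ∑ l, q l ^ 2 = 1) :
    ∃ i, (∀ j, q j ^ 2 ≤ q i ^ 2) ∧ 1 / (n : ℝ) ≤ q i ^ 2 := by
  have : Nonempty (Fin n) := ⟨⟨0, hn⟩⟩
  obtain ⟨i, hi⟩ := Finite.exists_max fun i => q i ^ 2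
  refine ⟨i, hi, ?_⟩
  have h := Finset.sum_le_sum fun j (_ : j ∈ Finset.univ) => hi j
  rw [hq, Finset.sum_const, Finset.card_univ, Fintype.card_fin, nsmul_eq_mul] at h
  have hn' : (0 : ℝ) < n := by exact_mod_cast hn
  rw [div_le_iff₀ hn']
  linarith

set_option maxHeartbeats 800000 in
/-- Local minimizers lie close to a coordinate axis. -/
lemma exists_axis_of_LM {r₀ : ℝ} (hr₀ : 0 < r₀) : ∃ δ ca : ℝ, 0 < δ ∧ 0 < ca ∧
    ∀ (n p : ℕ) (θ μ ε : ℝ) (X : Fin p → Fin n → ℝ) (q : Fin n → ℝ), 2 ≤ n → 0 < θ → θ ≤ 1 / 2 →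
      0 < μ → μ ≤ ca * (θ / n) → 0 ≤ ε → ε ≤ δ * (μ * θ / n) → Good θ μ ε X → LM μ X q →
      ∃ i, ∑ k ∈ {i}ᶜ, q k ^ 2 ≤ r₀ ^ 2 := by
  obtain ⟨c, K, hc, hK, hslope⟩ := exists_pairSlope_ge
  obtain ⟨d, τ₀, hd, hτ, hcurv⟩ := exists_pair_curvature_le
  refine ⟨min (c / 2) (d / 8), min (min 1 r₀) (min (1 / K) (1 / τ₀)), by positivity,
    by positivity, ?_⟩
  intro n p θ μ ε X q hn hθ hθ2 hμ hμca hε hεδ hgood hLM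
  have hq := hLM.sum_sq
  obtain ⟨i, himax, hin⟩ := exists_sq_max (by omega) hq
  have hn' : (2 : ℝ) ≤ n := by exact_mod_cast hn
  have hn0 : (0 : ℝ) < n := by linarith
  set m := |q i| with hm
  have hm2 : m ^ 2 = q i ^ 2 := sq_abs _
  have hm0 : 0 ≤ m := abs_nonneg _
  have hmpos : 0 < m := by
    have : 0 < 1 / (n : ℝ) := by positivity
    rcases hm0.eq_or_lt with h | h
    · rw [← h] at hm2; linarith
    · exact h
  have hm1 : m ≤ 1 := by
    have := sq_add_sum_compl q i
    have h2 : 0 ≤ ∑ k ∈ {i}ᶜ, q k ^ 2 := Finset.sum_nonneg fun _ _ => sq_nonneg _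
    nlinarith
  -- sizes of the parameters
  have hμn : ∀ x : ℝ, min (min 1 r₀) (min (1 / K) (1 / τ₀)) ≤ x → μ ≤ x * (1 / n) := by
    intro x hx
    have hx0 : 0 ≤ x := le_trans (by positivity) hx
    refine hμca.trans ?_
    have : θ / n ≤ 1 / n := by gcongr; linarith
    gcongr
  have h1n : 1 / (n : ℝ) ≤ m := by nlinarith
  have hμm : μ ≤ m := (hμn 1 ((min_le_left _ _).trans (min_le_left _ _))).trans (by linarith)
  have hμ1 : μ ≤ 1 := hμm.trans hm1
  have hμτ : τ₀ * μ ≤ m := by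
    have := hμn (1 / τ₀) ((min_le_right _ _).trans (min_le_right _ _))
    rw [div_mul_eq_mul_div, one_mul, le_div_iff₀ (by linarith)] at this
    linarith
  have hμK : K * μ ^ 2 ≤ q i ^ 2 := by
    have := hμn (1 / K) ((min_le_right _ _).trans (min_le_left _ _))
    rw [div_mul_eq_mul_div, one_mul, le_div_iff₀ (by linarith)] at this
    nlinarith
  have hεq : ∀ x : ℝ, min (c / 2) (d / 8) ≤ x → ε ≤ x * (μ * θ * m ^ 2) := by
    intro x hx
    have hx0 : 0 ≤ x := le_trans (by positivity) hx
    refine hεδ.trans ?_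
    calc _ ≤ x * (μ * θ / n) := by gcongr
      _ = x * (μ * θ * (1 / n)) := by ring
      _ ≤ _ := by rw [hm2]; gcongr
  -- first-order condition in the plane of two axes
  have hfirst : ∀ j, i ≠ j → |q j| * pairSlope θ μ q i j ≤ 3 / 2 * ε := by
    intro j hij
    have hE := (hLM.pair_conditions hμ.ne' hij).1
    have hg := (hgood q (pairDir q i j) (√(q i ^ 2 + q j ^ 2)) hq.le (by positivity) (by
      rw [← dot_self_eq_sum_sq, pairDir_dot_self hij, Real.sq_sqrt (by positivity)])).1
    rw [hE, zero_sub, abs_neg, M1_pairDir hθ.le (by linarith) q hij, abs_mul, abs_mul,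
      abs_of_nonneg (pairSlope_nonneg hμ hθ.le (by linarith) q (himax j))] at hg
    have hr : √(q i ^ 2 + q j ^ 2) ≤ 3 / 2 * m := by
      apply Real.sqrt_le_iff.2 ⟨by positivity, ?_⟩
      nlinarith [himax j]
    have h2 : m * (|q j| * pairSlope θ μ q i j) ≤ m * (3 / 2 * ε) := by
      calc _ = m * |q j| * pairSlope θ μ q i j := by ring
        _ ≤ ε * (3 / 2 * m) := hg.trans (by gcongr)
        _ = _ := by ring
    exact le_of_mul_le_mul_left h2 hmpos
  by_cases hex : ∃ j, i ≠ j ∧ q i ^ 2 / 4 ≤ q j ^ 2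
  · exfalso
    obtain ⟨j, hij, hj4⟩ := hex
    have hf := hfirst j hij
    have hP := pairSlope_nonneg hμ hθ.le (by linarith : θ ≤ 1) q (himax j)
    have hmj : m ≤ 2 * |q j| := by
      refine abs_le_of_sq_le_sq' ?_ (by positivity) |>.2
      rw [mul_pow, hm2, sq_abs]; linarith
    have hP2 : m * pairSlope θ μ q i j ≤ 3 * ε := by nlinarith
    have hsec := (hLM.pair_conditions hμ.ne' hij).2
    set r := √(q i ^ 2 + q j ^ 2) with hrdef
    have hr2 : r ^ 2 = q i ^ 2 + q j ^ 2 := Real.sq_sqrt (by positivity)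
    have hr0 : 0 ≤ r := Real.sqrt_nonneg _
    have hr : r ≤ 3 / 2 * m := by
      apply Real.sqrt_le_iff.2 ⟨by positivity, ?_⟩
      nlinarith [himax j]
    have hg2 := (abs_le.1 (hgood q (pairDir q i j) r hq.le hr0 (by
      rw [← dot_self_eq_sum_sq, pairDir_dot_self hij, hr2])).2).2
    have hg1 := (abs_le.1 (hgood q (pairProj q i j) r hq.le hr0 (by
      rw [← dot_self_eq_sum_sq, pairProj_dot_self hij, hr2])).1).1
    have hcv := hcurv n θ μ q i j hij hθ hθ2 hμ hq.le hj4 (himax j) hμτ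
    have h3 : E2 μ X q (pairDir q i j) / μ ≤ M2 θ μ q (pairDir q i j) / μ + ε * r ^ 2 / μ := by
      rw [← add_div]; gcongr; linarith
    have hεd := hεq (d / 8) (min_le_right _ _)
    have h4 : ε * r ^ 2 / μ ≤ d / 8 * θ * m ^ 2 * (2 * m ^ 2) := by
      rw [div_le_iff₀ hμ]
      calc ε * r ^ 2 ≤ d / 8 * (μ * θ * m ^ 2) * (2 * m ^ 2) := by
            gcongr
            linarith [himax j]
        _ = _ := by ring
    have h5 : ε ≤ d / 8 * θ * m ^ 3 := by
      refine hεd.trans ?_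
      calc _ ≤ d / 8 * (m * θ * m ^ 2) := by gcongr
        _ = _ := by ring
    have h6 : ε * r ≤ d / 8 * θ * m ^ 3 * (3 / 2 * m) :=
      mul_le_mul h5 hr hr0 (by positivity)
    have h7 : q i ^ 2 * pairSlope θ μ q i j ≤ m * (3 * (d / 8 * θ * m ^ 3)) := by
      rw [← hm2, sq, mul_assoc]
      exact mul_le_mul_of_nonneg_left (hP2.trans (by linarith)) hm0
    have h8 : q i ^ 4 = m ^ 4 := by rw [show q i ^ 4 = (q i ^ 2) ^ 2 by ring, ← hm2]; ring
    rw [h8] at hcv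
    have h9 : 0 < d * θ * m ^ 4 := by positivity
    rw [show d / 8 * θ * m ^ 2 * (2 * m ^ 2) = 2 / 8 * (d * θ * m ^ 4) by ring] at h4
    rw [show d / 8 * θ * m ^ 3 * (3 / 2 * m) = 3 / 16 * (d * θ * m ^ 4) by ring] at h6
    rw [show m * (3 * (d / 8 * θ * m ^ 3)) = 3 / 8 * (d * θ * m ^ 4) by ring] at h7
    linarith
  · push Not at hex
    refine ⟨i, ?_⟩
    have hqj : ∀ j, i ≠ j → |q j| ≤ μ := by
      intro j hij
      have hs := hslope n θ μ q i j hθ hθ2 hμ hq.le (hex j hij).le hμK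
      have hf := hfirst j hij
      have hεc := hεq (c / 2) (min_le_left _ _)
      have h2 : (c * θ * m ^ 2) * |q j| ≤ (c * θ * m ^ 2) * μ := by
        calc _ ≤ |q j| * pairSlope θ μ q i j := by
              rw [mul_comm, hm2]; gcongr
          _ ≤ 3 / 2 * ε := hf
          _ ≤ 3 / 2 * (c / 2 * (μ * θ * m ^ 2)) := by gcongr
          _ ≤ _ := by
              have : 0 ≤ c * θ * m ^ 2 * μ := by positivity
              nlinarith
      exact le_of_mul_le_mul_left h2 (by positivity)
    have h3 : ∑ k ∈ {i}ᶜ, q k ^ 2 ≤ ∑ k ∈ ({i}ᶜ : Finset (Fin n)), μ ^ 2 := by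
      refine Finset.sum_le_sum fun k hk => ?_
      rw [← sq_abs]
      have := hqj k (by simpa [eq_comm] using hk)
      gcongr
    refine h3.trans ?_
    rw [Finset.sum_const, nsmul_eq_mul]
    have hcard : ((({i}ᶜ : Finset (Fin n)).card : ℕ) : ℝ) ≤ n := by
      exact_mod_cast (Finset.card_le_univ _).trans (by simp)
    have h4 := hμn r₀ ((min_le_left _ _).trans (min_le_right _ _))
    calc _ ≤ (n : ℝ) * (r₀ * (1 / n)) ^ 2 := by gcongr
      _ = r₀ ^ 2 * (1 / n) := by field_simp
      _ ≤ r₀ ^ 2 * 1 := by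
          gcongr
          rw [div_le_one hn0]; linarith
      _ = _ := mul_one _

end Geometry

section Axis

variable {n p : ℕ} {θ μ ε : ℝ} {X : Fin p → Fin n → ℝ} {q : Fin n → ℝ}

lemma dot_axisDir (i : Fin n) : q ⬝ᵥ axisDir q i = 0 := by
  unfold dotProduct
  rw [← Finset.sum_add_sum_compl {i}, Finset.sum_singleton]
  have h : ∑ k ∈ {i}ᶜ, q k * axisDir q i k = ∑ k ∈ {i}ᶜ, q i * q k ^ 2 :=
    Finset.sum_congr rfl fun k hk => by
      have hk' : k ≠ i := by simpa using hk
      simp only [axisDir, hk', if_false]; ring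
  rw [h, ← Finset.mul_sum]
  simp [axisDir]

lemma axisDir_sum_sq (hq : ∑ l, q l ^ 2 = 1) (i : Fin n) :
    ∑ l, axisDir q i l ^ 2 = ∑ k ∈ {i}ᶜ, q k ^ 2 := by
  rw [← sq_add_sum_compl] at hq
  rw [← sq_add_sum_compl _ i]
  have h : ∑ k ∈ {i}ᶜ, axisDir q i k ^ 2 = ∑ k ∈ {i}ᶜ, q i ^ 2 * q k ^ 2 :=
    Finset.sum_congr rfl fun k hk => by
      have hk' : k ≠ i := by simpa using hk
      simp only [axisDir, hk', if_false]; ring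
  rw [h, ← Finset.mul_sum]
  simp only [axisDir, if_true]
  linear_combination (∑ k ∈ {i}ᶜ, q k ^ 2) * hq

/-- Local minimizers in a polar cap are quantitatively close to the pole. -/
lemma exists_cap_radius : ∃ δ ca r₀ c : ℝ, 0 < δ ∧ 0 < ca ∧ 0 < r₀ ∧ r₀ ≤ 1 / 2 ∧ 0 < c ∧
    ∀ (n p : ℕ) (θ μ ε : ℝ) (X : Fin p → Fin n → ℝ) (q : Fin n → ℝ) (i : Fin n), 2 ≤ n → 0 < θ →
      θ ≤ 1 / 2 → 0 < μ → μ ≤ ca * (θ / n) → 0 ≤ ε → ε ≤ δ * (μ * θ / n) → Good θ μ ε X →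
      LM μ X q → 1 / 2 ≤ q i → ∑ k ∈ {i}ᶜ, q k ^ 2 ≤ r₀ ^ 2 →
      √(∑ k ∈ {i}ᶜ, q k ^ 2) ≤ min (ε * μ / (c * θ)) (μ / 16) := by
  obtain ⟨c, r₀, μ₀, hc, hr₀, hμ₀, hax⟩ := exists_M1_axisDir_ge
  refine ⟨c / 16, min 1 μ₀, min r₀ (1 / 2), c, by positivity, by positivity, by positivity,
    min_le_right _ _, hc, ?_⟩
  intro n p θ μ ε X q i hn hθ hθ2 hμ hμca hε hεδ hgood hLM hqi hS
  have hq := hLM.sum_sq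
  have hn' : (2 : ℝ) ≤ n := by exact_mod_cast hn
  have hS0 : 0 ≤ ∑ k ∈ {i}ᶜ, q k ^ 2 := Finset.sum_nonneg fun _ _ => sq_nonneg _
  have hSi := sq_add_sum_compl q i
  set S := ∑ k ∈ {i}ᶜ, q k ^ 2 with hSdef
  set ρ := √S with hρdef
  have hρ0 : 0 ≤ ρ := Real.sqrt_nonneg _
  have hρ2 : ρ ^ 2 = S := Real.sq_sqrt hS0
  have hρr : ρ ≤ min r₀ (1 / 2) := Real.sqrt_le_iff.2 ⟨by positivity, hS⟩
  have hθn : θ / n ≤ 1 := by rw [div_le_one (by linarith)]; linarith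
  have hμmin : μ ≤ min 1 μ₀ := hμca.trans (mul_le_of_le_one_right (by positivity) hθn)
  have hμ1 : μ ≤ 1 := hμmin.trans (min_le_left _ _)
  have hρh : ρ ≤ 1 / 2 := hρr.trans (min_le_right _ _)
  have hq34 : 3 / 4 ≤ q i ^ 2 := by
    rw [hq] at hSi
    nlinarith
  have hεθ : ε ≤ c / 16 * θ * μ := by
    refine hεδ.trans ?_
    have : μ * θ / n ≤ μ * θ := div_le_self (by positivity) (by linarith)
    calc _ ≤ c / 16 * (μ * θ) := by gcongr
      _ = _ := by ring
  have hM : M1 θ μ q (axisDir q i) ≤ ε * ρ := by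
    have hE := hLM.E1_eq_zero hμ.ne' (dot_axisDir i)
    have hg := (hgood q (axisDir q i) ρ hq.le hρ0 (by rw [axisDir_sum_sq hq, hρ2])).1
    rw [hE, zero_sub, abs_neg] at hg
    exact (le_abs_self _).trans hg
  have hA := hax n θ μ ρ q i hθ hθ2 hμ (hμmin.trans (min_le_right _ _)) hqi hq34 hρ0 hρ2.symm
    (hρr.trans (min_le_left _ _))
  have hbound : ρ ≤ ε * μ / (c * θ) := by
    rcases hρ0.eq_or_lt with h0 | hpos
    · rw [← h0]; positivity
    rcases le_total ρ μ with h | h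
    · have h1 := (hA.1 h).trans hM
      rw [le_div_iff₀ (by positivity)]
      rw [div_le_iff₀ hμ] at h1
      have h2 : ρ * (ρ * (c * θ)) ≤ ρ * (ε * μ) := by linarith
      exact le_of_mul_le_mul_left h2 hpos
    · exfalso
      have h1 := (hA.2 h).trans hM
      have h2 : c * θ ≤ ε := le_of_mul_le_mul_right h1 hpos
      have h3 : c / 16 * θ * μ ≤ c / 16 * θ := mul_le_of_le_one_right (by positivity) hμ1
      have h4 : 0 < c * θ := by positivity
      linarith
  refine le_min hbound (hbound.trans ?_)
  rw [div_le_iff₀ (by positivity)]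
  have h5 : ε ≤ c / 16 * θ := hεθ.trans (mul_le_of_le_one_right (by positivity) hμ1)
  calc ε * μ ≤ c / 16 * θ * μ := by gcongr
    _ = _ := by ring

lemma eventually_lt_left_of_hasDerivAt_pos {g : ℝ → ℝ} {d : ℝ} (hg : HasDerivAt g d 0)
    (hd : 0 < d) : ∀ᶠ t in nhdsWithin 0 (Set.Iio 0), g t < g 0 := by
  have h1 := (hasDerivAt_iff_tendsto_slope.1 hg).eventually (lt_mem_nhds hd)
  have h2 := h1.filter_mono (nhdsWithin_mono (0 : ℝ) fun t (ht : t < 0) => ht.ne)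
  filter_upwards [h2, self_mem_nhdsWithin] with t ht ht0
  have ht0' : t < 0 := ht0
  rw [slope_def_field, sub_zero] at ht
  by_contra! h
  have := div_nonpos_of_nonneg_of_nonpos (sub_nonneg.2 h) ht0'.le
  linarith

/-- Every polar cap contains a local minimizer. -/
lemma exists_LM_in_cap {r₀ : ℝ} (hr₀ : 0 < r₀) : ∃ δ ca : ℝ, 0 < δ ∧ 0 < ca ∧
    ∀ (n p : ℕ) (θ μ ε : ℝ) (X : Fin p → Fin n → ℝ) (i : Fin n), 2 ≤ n → 0 < θ →
      θ ≤ 1 / 2 → 0 < μ → μ ≤ ca * (θ / n) → 0 ≤ ε → ε ≤ δ * (μ * θ / n) → Good θ μ ε X →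
      ∃ q, LM μ X q ∧ 1 / 2 ≤ q i ∧ ∑ k ∈ {i}ᶜ, q k ^ 2 ≤ r₀ ^ 2 := by
  obtain ⟨c, r₁, μ₀, hc, hr₁, hμ₀, hax⟩ := exists_M1_axisDir_ge
  refine ⟨c / 2, min (min (1 / 2) μ₀) (min r₀ r₁), by positivity, by positivity, ?_⟩
  intro n p θ μ ε X i hn hθ hθ2 hμ hμca hε hεδ hgood
  have hn' : (2 : ℝ) ≤ n := by exact_mod_cast hn
  have hθn : θ / n ≤ 1 := by rw [div_le_one (by linarith)]; linarith
  have hμmin : μ ≤ min (min (1 / 2) μ₀) (min r₀ r₁) :=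
    hμca.trans (mul_le_of_le_one_right (by positivity) hθn)
  have hμh : μ ≤ 1 / 2 := hμmin.trans ((min_le_left _ _).trans (min_le_left _ _))
  have hμμ₀ : μ ≤ μ₀ := hμmin.trans ((min_le_left _ _).trans (min_le_right _ _))
  have hμr₀ : μ ≤ r₀ := hμmin.trans ((min_le_right _ _).trans (min_le_left _ _))
  have hμr₁ : μ ≤ r₁ := hμmin.trans ((min_le_right _ _).trans (min_le_right _ _))
  have hεθ : ε < c * θ := by
    have h1 : μ * θ / n ≤ θ := by
      rw [div_le_iff₀ (by linarith)]; nlinarith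
    have h2 : c / 2 * (μ * θ / n) ≤ c / 2 * θ := by gcongr
    have : 0 < c * θ := by positivity
    linarith
  set κ := √(1 - μ ^ 2) with hκ
  have hκ2 : κ ^ 2 = 1 - μ ^ 2 := Real.sq_sqrt (by nlinarith)
  have hκ0 : 0 ≤ κ := Real.sqrt_nonneg _
  have hκh : 1 / 2 ≤ κ := by
    apply Real.le_sqrt_of_sq_le; nlinarith
  set K : Set (Fin n → ℝ) := {q | q ⬝ᵥ q = 1 ∧ κ ≤ q i} with hK
  have hdotc : Continuous fun q : Fin n → ℝ => q ⬝ᵥ q := by unfold dotProduct; fun_prop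
  have hKc : IsCompact K := by
    refine (isCompact_closedBall (0 : Fin n → ℝ) 1).of_isClosed_subset ?_ ?_
    · exact (isClosed_eq hdotc continuous_const).inter
        (isClosed_le continuous_const (continuous_apply i))
    · intro q hq
      rw [mem_closedBall_zero_iff, pi_norm_le_iff_of_nonneg zero_le_one]
      intro l
      rw [Real.norm_eq_abs, ← sq_le_one_iff_abs_le_one, ← hq.1, dot_self_eq_sum_sq]
      exact Finset.single_le_sum (f := fun l => q l ^ 2) (fun _ _ => sq_nonneg _)
        (Finset.mem_univ l)
  have hKn : K.Nonempty := by
    refine ⟨Pi.single i 1, by simp, ?_⟩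
    rw [Pi.single_eq_same]
    exact Real.sqrt_le_one.2 (by nlinarith [sq_nonneg μ])
  obtain ⟨q, hqK, hqmin⟩ := hKc.exists_isMinOn hKn (continuous_fE (μ := μ) (X := X)).continuousOn
  have hq1 : ∑ l, q l ^ 2 = 1 := by rw [← dot_self_eq_sum_sq]; exact hqK.1
  have hqi : κ ≤ q i := hqK.2
  have hSi := sq_add_sum_compl q i
  refine ⟨q, ⟨hqK.1, ?_⟩, hκh.trans hqi, ?_⟩
  swap
  · have : κ ^ 2 ≤ q i ^ 2 := by gcongr
    have h2 : μ ^ 2 ≤ r₀ ^ 2 := by gcongr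
    linarith
  rcases hqi.lt_or_eq with hlt | heq
  · have := (isOpen_lt (continuous_const (y := κ))
      (continuous_apply (A := fun _ : Fin n => ℝ) i)).mem_nhds hlt
    filter_upwards [this] with q' hq' hu
    exact hqmin ⟨hu, le_of_lt hq'⟩
  · exfalso
    have hS : ∑ k ∈ {i}ᶜ, q k ^ 2 = μ ^ 2 := by rw [← heq, hκ2] at hSi; linarith
    have hM := (hax n θ μ μ q i hθ hθ2 hμ hμμ₀ (hκh.trans hqi) (by rw [← heq, hκ2]; nlinarith)
      hμ.le hS hμr₁).2 le_rfl
    have hg := (abs_le.1 (hgood q (axisDir q i) μ hq1.le hμ.le (by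
      rw [axisDir_sum_sq hq1, hS])).1).1
    have hE : 0 < E1 μ X q (axisDir q i) := by
      have : ε * μ < c * θ * μ := by gcongr
      linarith
    set v := μ⁻¹ • axisDir q i with hv
    have hvv : v ⬝ᵥ v = 1 := by
      rw [hv, smul_dotProduct, dotProduct_smul, dot_self_eq_sum_sq, axisDir_sum_sq hq1, hS,
        smul_eq_mul, smul_eq_mul]
      field_simp
    have hqv : q ⬝ᵥ v = 0 := by rw [hv, dotProduct_smul, dot_axisDir, smul_zero]
    have hvi : v i = -μ := by
      simp only [hv, Pi.smul_apply, axisDir, if_true, hS, smul_eq_mul]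
      field_simp
    have hc0 : circ 0 q v 0 = q := by simp [circ]
    have hc0' : circ' q v 0 = v := by simp [circ']
    have hd1 := hasDerivAt_fE_circ (μ := μ) X 0 q v hμ.ne' 0
    rw [hc0, hc0', hv, E1_smul, ← hv] at hd1
    have he1 := eventually_lt_left_of_hasDerivAt_pos hd1 (by positivity)
    have hd2 := (hasDerivAt_circ_dot 0 q v (Pi.single i 1) 0).neg
    have he2 := eventually_lt_left_of_hasDerivAt_pos hd2 (by rw [hc0']; simp [hvi, hμ])
    obtain ⟨t, ht1, ht2⟩ := (he1.and he2).exists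
    simp only [dotProduct_single_one, Pi.neg_apply, hc0, neg_lt_neg_iff] at ht2
    rw [hc0] at ht1
    have hmem : circ 0 q v t ∈ K := by
      refine ⟨?_, ?_⟩
      · rw [circ_dot_self (by simp) (by simp) hqv (by rw [hvv, hqK.1])]
        simpa using hqK.1
      · rw [heq]; exact ht2.le
    exact absurd (hqmin hmem) (not_le.2 ht1)

/-- Uniform geodesic convexity of the objective on a polar cap. -/
lemma exists_cap_convex : ∃ δ ca : ℝ, 0 < δ ∧ 0 < ca ∧
    ∀ (n p : ℕ) (θ μ ε : ℝ) (X : Fin p → Fin n → ℝ) (i : Fin n) (q v : Fin n → ℝ), 2 ≤ n →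
      0 < θ → θ ≤ 1 / 2 → 0 < μ → μ ≤ ca * (θ / n) → 0 ≤ ε → ε ≤ δ * (μ * θ / n) →
      Good θ μ ε X → q ⬝ᵥ q = 1 → v ⬝ᵥ v = 1 → q ⬝ᵥ v = 0 → ∑ k ∈ {i}ᶜ, q k ^ 2 ≤ μ ^ 2 →
      0 < E2 μ X q v / μ - E1 μ X q q := by
  have hI := intSech2_nonneg
  have hm : 0 < min (gA 1) (gB 1) := lt_min (gA_pos 1) (gB_pos 1)
  set m := min (gA 1) (gB 1)
  refine ⟨min 1 (m / 8), min (1 / 2) (m / (8 * (intSech2 + 1))), by positivity, by positivity, ?_⟩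
  intro n p θ μ ε X i q v hn hθ hθ2 hμ hμca hε hεδ hgood hq hv hqv hS
  have hn' : (2 : ℝ) ≤ n := by exact_mod_cast hn
  have hθn : θ / n ≤ θ := div_le_self hθ.le (by linarith)
  have hμθ : μ ≤ min (1 / 2) (m / (8 * (intSech2 + 1))) * θ := hμca.trans (by gcongr)
  have hμh : μ ≤ 1 / 2 := by
    have h1 : min (1 / 2) (m / (8 * (intSech2 + 1))) ≤ 1 / 2 := min_le_left _ _
    nlinarith
  have hμm : μ * (8 * (intSech2 + 1)) ≤ m * θ := by
    have h1 : μ ≤ m / (8 * (intSech2 + 1)) * θ := hμθ.trans (by gcongr; exact min_le_right _ _)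
    rwa [div_mul_eq_mul_div, le_div_iff₀ (by positivity)] at h1
  have hμθn : μ * θ / n ≤ θ * μ := by
    rw [div_le_iff₀ (by linarith)]; nlinarith [mul_pos hμ hθ]
  have hε1 : ε ≤ θ * μ := hεδ.trans ((mul_le_of_le_one_left (by positivity)
    (min_le_left _ _)).trans hμθn)
  have hεm : ε ≤ m / 8 * θ * μ := by
    calc ε ≤ m / 8 * (θ * μ) := hεδ.trans (by gcongr; exact min_le_right _ _)
      _ = _ := by ring
  have hq1 : ∑ l, q l ^ 2 = 1 := by rw [← dot_self_eq_sum_sq]; exact hq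
  have hv1 : ∑ l, v l ^ 2 = 1 := by rw [← dot_self_eq_sum_sq]; exact hv
  have hqs := sq_add_sum_compl q i
  have hvs := sq_add_sum_compl v i
  have hV : 3 / 4 ≤ ∑ k ∈ {i}ᶜ, v k ^ 2 := by
    have hcs := Finset.sum_mul_sq_le_sq_mul_sq ({i}ᶜ : Finset (Fin n)) q v
    have hdot : q i * v i + ∑ k ∈ {i}ᶜ, q k * v k = 0 := by
      rw [← hqv]
      unfold dotProduct
      rw [← Finset.sum_add_sum_compl {i}, Finset.sum_singleton]
    have h2 : (∑ k ∈ {i}ᶜ, q k * v k) ^ 2 = q i ^ 2 * v i ^ 2 := by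
      rw [eq_neg_of_add_eq_zero_right hdot]; ring
    rw [h2] at hcs
    rw [hq1] at hqs
    rw [hv1] at hvs
    nlinarith
  have hM2 := M2_ge hμ hθ.le (by linarith : θ ≤ 1) q v hS
  have hM1 := M1_self_le hμ hθ.le (by linarith : θ ≤ 1) q hq1.le
  have hg2 := (abs_le.1 (hgood q v 1 hq1.le zero_le_one (by rw [hv1, one_pow])).2).1
  have hg1 := (abs_le.1 (hgood q q 1 hq1.le zero_le_one (by rw [hq1, one_pow])).1).2
  have hM2' : 3 / 8 * (m * θ) ≤ M2 θ μ q v := by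
    refine le_trans ?_ hM2
    have h3 : θ / 2 ≤ θ * (1 - θ) := by nlinarith
    have h1θ : 0 ≤ 1 - θ := by linarith
    calc 3 / 8 * (m * θ) = m * (θ / 2) * (3 / 4) := by ring
      _ ≤ _ := by gcongr
  have hmθ : 0 < m * θ := by positivity
  have hE2 : 1 / 4 * (m * θ) ≤ E2 μ X q v := by
    have : m / 8 * θ * μ ≤ m / 8 * θ := mul_le_of_le_one_right (by positivity) (by linarith)
    linarith
  have hE1 : E1 μ X q q ≤ intSech2 + 1 := by nlinarith
  have h5 : 2 * (intSech2 + 1) ≤ E2 μ X q v / μ := by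
    rw [le_div_iff₀ hμ]; linarith
  linarith

set_option maxHeartbeats 800000 in
/-- Each polar cap contains at most one local minimizer. -/
lemma exists_cap_unique : ∃ δ ca : ℝ, 0 < δ ∧ 0 < ca ∧
    ∀ (n p : ℕ) (θ μ ε : ℝ) (X : Fin p → Fin n → ℝ) (i : Fin n) (q q' : Fin n → ℝ), 2 ≤ n →
      0 < θ → θ ≤ 1 / 2 → 0 < μ → μ ≤ ca * (θ / n) → 0 ≤ ε → ε ≤ δ * (μ * θ / n) →
      Good θ μ ε X → LM μ X q → LM μ X q' → 1 / 2 ≤ q i → 1 / 2 ≤ q' i →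
      ∑ k ∈ {i}ᶜ, q k ^ 2 ≤ μ ^ 2 → ∑ k ∈ {i}ᶜ, q' k ^ 2 ≤ μ ^ 2 → q = q' := by
  obtain ⟨δ, ca, hδ, hca, hconv⟩ := exists_cap_convex
  refine ⟨δ, min 1 ca, hδ, by positivity, ?_⟩
  intro n p θ μ ε X i q q' hn hθ hθ2 hμ hμca hε hεδ hgood hL hL' hqi hqi' hS hS'
  by_contra hne
  have hn' : (2 : ℝ) ≤ n := by exact_mod_cast hn
  have hθn : θ / n ≤ 1 := by rw [div_le_one (by linarith)]; linarith
  have hμ1 : μ ≤ 1 := hμca.trans (by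
    calc _ ≤ 1 * (1 : ℝ) := by gcongr; exact min_le_left _ _
      _ = 1 := one_mul 1)
  have hμca' : μ ≤ ca * (θ / n) := hμca.trans (by gcongr; exact min_le_right _ _)
  set κ := √(1 - μ ^ 2) with hκ
  have hκ2 : κ ^ 2 = 1 - μ ^ 2 := Real.sq_sqrt (by nlinarith)
  have hκ0 : 0 ≤ κ := Real.sqrt_nonneg _
  have hκle : ∀ u : Fin n → ℝ, ∑ l, u l ^ 2 = 1 → 0 ≤ u i → ∑ k ∈ {i}ᶜ, u k ^ 2 ≤ μ ^ 2 →
      κ ≤ u i := by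
    intro u hu hui hSu
    refine Real.sqrt_le_iff.2 ⟨hui, ?_⟩
    linarith [sq_add_sum_compl u i]
  have hκq := hκle q hL.sum_sq (by linarith) hS
  have hκq' := hκle q' hL'.sum_sq (by linarith) hS'
  set c := q ⬝ᵥ q' with hc
  have hc1 : c < 1 := by
    have h1 : 0 < (q - q') ⬝ᵥ (q - q') := by
      refine lt_of_le_of_ne (Finset.sum_nonneg fun i _ => mul_self_nonneg _) fun h0 => ?_
      exact hne (sub_eq_zero.1 (dotProduct_self_eq_zero.1 h0.symm))
    simp only [sub_dotProduct, dotProduct_sub, hL.1, hL'.1, dotProduct_comm q' q, ← hc] at h1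
    linarith
  have hc2 : -1 < c := by
    have h1 : (q i + q' i) ^ 2 ≤ (q + q') ⬝ᵥ (q + q') := by
      rw [dot_self_eq_sum_sq]
      exact Finset.single_le_sum (f := fun l => (q + q') l ^ 2) (fun _ _ => sq_nonneg _)
        (Finset.mem_univ i)
    simp only [add_dotProduct, dotProduct_add, hL.1, hL'.1, dotProduct_comm q' q, ← hc] at h1
    nlinarith
  set T := arccos c with hT
  have hcosT : cos T = c := Real.cos_arccos hc2.le hc1.le
  have hT0 : 0 < T := Real.arccos_pos.2 hc1
  have hTπ : T ≤ π := Real.arccos_le_pi c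
  have hTπ' : T < π := lt_of_le_of_ne hTπ fun h => by
    rw [h, Real.cos_pi] at hcosT; linarith
  set s := sin T with hs
  have hs0 : 0 < s := Real.sin_pos_of_pos_of_lt_pi hT0 hTπ'
  have hs2 : s ^ 2 = 1 - c ^ 2 := by rw [← hcosT]; exact Real.sin_sq T
  set b := s⁻¹ • (q' - c • q) with hb
  have hqb : q ⬝ᵥ b = 0 := by
    simp only [hb, dotProduct_smul, dotProduct_sub, hL.1, ← hc, smul_eq_mul]; ring
  have hbb : b ⬝ᵥ b = 1 := by
    simp only [hb, smul_dotProduct, dotProduct_smul, sub_dotProduct, dotProduct_sub, hL.1, hL'.1,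
      dotProduct_comm q' q, ← hc, smul_eq_mul]
    field_simp
    linarith
  have hγ : ∀ t, circ 0 q b t ⬝ᵥ circ 0 q b t = 1 := by
    intro t
    rw [circ_dot_self (by simp) (by simp) hqb (by rw [hbb, hL.1])]
    simpa using hL.1
  have hγ' : ∀ t, circ' q b t ⬝ᵥ circ' q b t = 1 := by
    intro t
    have h := Real.sin_sq_add_cos_sq t
    simp only [circ', add_dotProduct, dotProduct_add, smul_dotProduct, dotProduct_smul, hL.1, hbb,
      dotProduct_comm b q, hqb, smul_eq_mul]
    linear_combination h
  have hγγ' : ∀ t, circ 0 q b t ⬝ᵥ circ' q b t = 0 := by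
    intro t
    simp only [circ, circ', zero_add, add_dotProduct, dotProduct_add, smul_dotProduct,
      dotProduct_smul, hL.1, hbb, dotProduct_comm b q, hqb, smul_eq_mul]
    ring
  have h0 : circ 0 q b 0 = q := by simp [circ]
  have h1 : circ 0 q b T = q' := by
    simp only [circ, hcosT, ← hs, hb, smul_smul, mul_inv_cancel₀ hs0.ne', one_smul]
    simp
  have hd0 : E1 μ X (circ 0 q b 0) (circ' q b 0) = 0 := by
    have := hγγ' 0
    rw [h0] at this ⊢
    exact hL.E1_eq_zero hμ.ne' this
  have hd1 : E1 μ X (circ 0 q b T) (circ' q b T) = 0 := by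
    have := hγγ' T
    rw [h1] at this ⊢
    exact hL'.E1_eq_zero hμ.ne' this
  have hder := fun t => hasDerivAt_E1_circ (μ := μ) X 0 q b t
  obtain ⟨t, ht, hzero⟩ := exists_hasDerivAt_eq_zero hT0
    (fun t _ => (hder t).continuousAt.continuousWithinAt) (hd0.trans hd1.symm) (fun t _ => hder t)
  have hcapi : κ ≤ circ 0 q b t i := by
    have hst : 0 ≤ sin t := Real.sin_nonneg_of_nonneg_of_le_pi ht.1.le (by linarith [ht.2])
    have hsTt : 0 ≤ sin (T - t) :=
      Real.sin_nonneg_of_nonneg_of_le_pi (by linarith [ht.2]) (by linarith [ht.1])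
    have hsub : sin (T - t) = s * cos t - c * sin t := by rw [Real.sin_sub, hcosT]
    have hval : s * circ 0 q b t i = sin (T - t) * q i + sin t * q' i := by
      simp only [circ, hb, Pi.add_apply, Pi.smul_apply, Pi.sub_apply, Pi.zero_apply, smul_eq_mul,
        hsub]
      field_simp
      ring
    have hsum : s ≤ sin (T - t) + sin t := by
      have h2 : s = sin (T - t) * cos t + cos (T - t) * sin t := by
        rw [← Real.sin_add]; simp [hs]
      have h3 := Real.cos_le_one t
      have h4 := Real.cos_le_one (T - t)
      rw [h2]
      exact add_le_add (mul_le_of_le_one_right hsTt h3) (mul_le_of_le_one_left hst h4)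
    have h5 : s * κ ≤ s * circ 0 q b t i := by
      rw [hval]
      calc s * κ ≤ (sin (T - t) + sin t) * κ := mul_le_mul_of_nonneg_right hsum hκ0
        _ = sin (T - t) * κ + sin t * κ := by ring
        _ ≤ _ := add_le_add (mul_le_mul_of_nonneg_left hκq hsTt)
          (mul_le_mul_of_nonneg_left hκq' hst)
    exact le_of_mul_le_mul_left h5 hs0
  have hcap : ∑ k ∈ {i}ᶜ, circ 0 q b t k ^ 2 ≤ μ ^ 2 := by
    have h2 := sq_add_sum_compl (circ 0 q b t) i
    rw [← dot_self_eq_sum_sq, hγ] at h2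
    have : κ ^ 2 ≤ circ 0 q b t i ^ 2 := by gcongr
    linarith
  have hpos := hconv n p θ μ ε X i _ _ hn hθ hθ2 hμ hμca' hε hεδ hgood (hγ t) (hγ' t) (hγγ' t) hcap
  have hself : cos t • q + sin t • b = circ 0 q b t := by simp [circ]
  rw [hself] at hzero
  linarith

end Axis

section Assembly

/-- The element `x` or `-x`, as selected by a Boolean. -/
def signed {E : Type*} [Neg E] (s : Bool) (x : E) : E := if s then x else -x

/-- A unit vector whose mass off the `i`-th coordinate is at most `R ^ 2` is `√2 R`-close to
`e_i`, provided its `i`-th coordinate is nonnegative. -/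
lemma norm_sub_single_le {n : ℕ} {q : EuclideanSpace ℝ (Fin n)} {i : Fin n} {R : ℝ} (hR : 0 ≤ R)
    (hq : ∑ l, q l ^ 2 = 1) (hqi : 0 ≤ q i) (hS : ∑ k ∈ {i}ᶜ, q k ^ 2 ≤ R ^ 2) :
    ‖q - EuclideanSpace.single i (1 : ℝ)‖ ≤ √2 * R := by
  refine abs_le_of_sq_le_sq' ?_ (by positivity) |>.2
  have h := sq_add_sum_compl (fun l => q l) i
  have h2 := sq_add_sum_compl (fun l => (q - EuclideanSpace.single i (1 : ℝ)) l) i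
  have h3 : ∑ k ∈ {i}ᶜ, ((q - EuclideanSpace.single i (1 : ℝ)) k) ^ 2 = ∑ k ∈ {i}ᶜ, q k ^ 2 := by
    refine Finset.sum_congr rfl fun k hk => ?_
    have : k ≠ i := by simpa using hk
    simp [this]
  have h4 : (q - EuclideanSpace.single i (1 : ℝ)) i = q i - 1 := by simp
  rw [EuclideanSpace.norm_sq_eq]
  simp only [Real.norm_eq_abs, sq_abs]
  rw [mul_pow, Real.sq_sqrt zero_le_two, ← h2, h3, h4]
  have h5 : q i ≤ 1 := by
    have := Finset.sum_nonneg (s := ({i}ᶜ : Finset (Fin n))) fun k _ => sq_nonneg (q k)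
    nlinarith
  nlinarith

/-- A symmetric set of unit vectors having exactly one member in each of the small caps around
the vectors `e_i`, and no member outside these caps and their negatives, is in bijection with the
signed standard basis. -/
lemma exists_bijOn_signedBasis {n : ℕ} [NeZero n] (L : Set (EuclideanSpace ℝ (Fin n))) {R : ℝ}
    (hR : 0 ≤ R) (hR2 : R ≤ 1 / 2) (hneg : ∀ q ∈ L, -q ∈ L) (hunit : ∀ q ∈ L, ∑ l, q l ^ 2 = 1)
    (hcover : ∀ q ∈ L, ∃ i, (1 / 2 ≤ q i ∨ 1 / 2 ≤ -q i) ∧ ∑ k ∈ {i}ᶜ, q k ^ 2 ≤ R ^ 2)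
    (hexists : ∀ i, ∃ q ∈ L, 1 / 2 ≤ q i ∧ ∑ k ∈ {i}ᶜ, q k ^ 2 ≤ R ^ 2)
    (hunique : ∀ i, ∀ q ∈ L, ∀ q' ∈ L, 1 / 2 ≤ q i → 1 / 2 ≤ q' i →
      ∑ k ∈ {i}ᶜ, q k ^ 2 ≤ R ^ 2 → ∑ k ∈ {i}ᶜ, q' k ^ 2 ≤ R ^ 2 → q = q') :
    L.ncard = 2 * n ∧ ∃ F : EuclideanSpace ℝ (Fin n) → EuclideanSpace ℝ (Fin n),
      Set.BijOn F L (SignedBasis n) ∧ ∀ q ∈ L, ‖q - F q‖ ≤ √2 * R := by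
  choose g hgL hgi hgS using hexists
  have hoff : ∀ i j, j ≠ i → g i j ^ 2 ≤ 1 / 4 := by
    intro i j hj
    have h := Finset.single_le_sum (f := fun k => g i k ^ 2) (fun k _ => sq_nonneg _)
      (show j ∈ ({i}ᶜ : Finset (Fin n)) by simpa using hj)
    nlinarith [hgS i]
  have hon : ∀ i, 3 / 4 ≤ g i i ^ 2 := by
    intro i
    have h := sq_add_sum_compl (fun l => g i l) i
    rw [hunit _ (hgL i)] at h
    nlinarith [hgS i]
  let H : Fin n × Bool → EuclideanSpace ℝ (Fin n) := fun x => signed x.2 (g x.1)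
  let e : Fin n × Bool → EuclideanSpace ℝ (Fin n) :=
    fun x => signed x.2 (EuclideanSpace.single x.1 (1 : ℝ))
  have hsq : ∀ (s : Bool) (q : EuclideanSpace ℝ (Fin n)) (j : Fin n),
      (signed s q) j ^ 2 = q j ^ 2 := by
    intro s q j; cases s <;> simp [signed]
  have hH : Function.Injective H := by
    rintro ⟨i, s⟩ ⟨j, t⟩ hij
    have hij' : signed s (g i) = signed t (g j) := hij
    obtain rfl : i = j := by
      by_contra hne
      have h1 := hsq s (g i) i
      rw [hij', hsq] at h1
      linarith [hon i, hoff j i hne]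
    have h1 := congrArg (fun q : EuclideanSpace ℝ (Fin n) => q i) hij'
    have h2 := hgi i
    cases s <;> cases t <;> simp [signed] at h1 ⊢ <;> linarith
  have he : Function.Injective e := by
    rintro ⟨i, s⟩ ⟨j, t⟩ hij
    have hij' : signed s (EuclideanSpace.single i (1 : ℝ)) =
      signed t (EuclideanSpace.single j (1 : ℝ)) := hij
    obtain rfl : i = j := by
      by_contra hne
      have h1 := hsq s (EuclideanSpace.single i (1 : ℝ)) i
      rw [hij', hsq] at h1
      simp [hne] at h1
    have h1 := congrArg (fun q : EuclideanSpace ℝ (Fin n) => q i) hij'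
    cases s <;> cases t <;> simp [signed] at h1 ⊢ <;> linarith
  have hLH : L = Set.range H := by
    ext q
    constructor
    · intro hq
      obtain ⟨i, h | h, hS⟩ := hcover q hq
      · exact ⟨(i, true), hunique i _ (hgL i) q hq (hgi i) h (hgS i) hS⟩
      · refine ⟨(i, false), ?_⟩
        have := hunique i _ (hgL i) (-q) (hneg q hq) (hgi i) (by simpa using h) (hgS i)
          (by simpa using hS)
        simp [H, signed, this]
    · rintro ⟨⟨i, s⟩, rfl⟩
      cases s
      · exact hneg _ (hgL i)
      · exact hgL i
  have hinv : ∀ x, Function.invFun H (H x) = x := Function.leftInverse_invFun hH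
  refine ⟨?_, e ∘ Function.invFun H, ⟨?_, ?_, ?_⟩, ?_⟩
  · rw [hLH, ← Set.image_univ, Set.ncard_image_of_injective _ hH, Set.ncard_univ]
    simp [mul_comm]
  · rw [hLH]
    rintro _ ⟨⟨i, s⟩, rfl⟩
    rw [Function.comp_apply, hinv]
    refine ⟨i, ?_⟩
    cases s <;> simp [e, signed]
  · rw [hLH]
    rintro _ ⟨x, rfl⟩ _ ⟨y, rfl⟩ hxy
    simp only [Function.comp_apply, hinv] at hxy
    rw [he hxy]
  · rw [hLH]
    rintro b ⟨i, rfl | rfl⟩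
    · exact ⟨H (i, true), ⟨_, rfl⟩, by simp [hinv, e, signed]⟩
    · exact ⟨H (i, false), ⟨_, rfl⟩, by simp [hinv, e, signed]⟩
  · rw [hLH]
    rintro _ ⟨⟨i, s⟩, rfl⟩
    rw [Function.comp_apply, hinv]
    have h := norm_sub_single_le hR (hunit _ (hgL i)) (by linarith [hgi i]) (hgS i)
    cases s
    · have : H (i, false) - e (i, false) = -(g i - EuclideanSpace.single i (1 : ℝ)) := by
        simp only [H, e, signed]
        simp [sub_eq_neg_add, add_comm]
      rw [this, norm_neg]
      exact h
    · exact h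

/-- On the good event the local minimizers are in bijection with the signed basis. -/
lemma exists_good_localMins : ∃ δ ca c : ℝ, 0 < δ ∧ 0 < ca ∧ 0 < c ∧
    ∀ (n p : ℕ) (θ μ ε : ℝ) (X : Fin p → Fin n → ℝ), 2 ≤ n → 0 < θ → θ ≤ 1 / 2 → 0 < μ →
      μ ≤ ca * (θ / n) → 0 ≤ ε → ε ≤ δ * (μ * θ / n) → Good θ μ ε X →
      (LocalMins n p μ (Matrix.of fun i k => X k i)).ncard = 2 * n ∧
      ∃ F : EuclideanSpace ℝ (Fin n) → EuclideanSpace ℝ (Fin n),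
        Set.BijOn F (LocalMins n p μ (Matrix.of fun i k => X k i)) (SignedBasis n) ∧
        ∀ q ∈ LocalMins n p μ (Matrix.of fun i k => X k i),
          ‖q - F q‖ ≤ √2 * min (ε * μ / (c * θ)) (μ / 16) := by
  obtain ⟨δ₁, ca₁, r₀, c, hδ₁, hca₁, hr₀, hr₀2, hc, hrad⟩ := exists_cap_radius
  obtain ⟨δ₂, ca₂, hδ₂, hca₂, haxis⟩ := exists_axis_of_LM hr₀
  obtain ⟨δ₃, ca₃, hδ₃, hca₃, hex⟩ := exists_LM_in_cap hr₀
  obtain ⟨δ₄, ca₄, hδ₄, hca₄, huniq⟩ := exists_cap_unique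
  refine ⟨min (min δ₁ δ₂) (min δ₃ δ₄), min 1 (min (min ca₁ ca₂) (min ca₃ ca₄)), c,
    by positivity, by positivity, hc, ?_⟩
  intro n p θ μ ε X hn hθ hθ2 hμ hμca hε hεδ hgood
  have hn' : (2 : ℝ) ≤ n := by exact_mod_cast hn
  have hθn0 : 0 ≤ θ / n := by positivity
  have hθn : θ / n ≤ 1 := by rw [div_le_one (by linarith)]; linarith
  have hμθn : 0 ≤ μ * θ / n := by positivity
  have hle : ∀ {a b x y : ℝ}, 0 ≤ x → y ≤ a * x → a ≤ b → y ≤ b * x :=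
    fun hx hy hab => hy.trans (mul_le_mul_of_nonneg_right hab hx)
  have hμ1 : μ ≤ 1 := by
    have := hle hθn0 hμca (min_le_left _ _)
    linarith
  have hμca' := hle hθn0 hμca (min_le_right _ _)
  have hμ₁ := hle hθn0 hμca' ((min_le_left _ _).trans (min_le_left _ _))
  have hμ₂ := hle hθn0 hμca' ((min_le_left _ _).trans (min_le_right _ _))
  have hμ₃ := hle hθn0 hμca' ((min_le_right _ _).trans (min_le_left _ _))
  have hμ₄ := hle hθn0 hμca' ((min_le_right _ _).trans (min_le_right _ _))
  have hε₁ := hle hμθn hεδ ((min_le_left _ _).trans (min_le_left _ _))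
  have hε₂ := hle hμθn hεδ ((min_le_left _ _).trans (min_le_right _ _))
  have hε₃ := hle hμθn hεδ ((min_le_right _ _).trans (min_le_left _ _))
  have hε₄ := hle hμθn hεδ ((min_le_right _ _).trans (min_le_right _ _))
  set R := min (ε * μ / (c * θ)) (μ / 16) with hRdef
  have hR0 : 0 ≤ R := by positivity
  have hRμ : R ≤ μ / 16 := min_le_right _ _
  have hRμ2 : R ^ 2 ≤ μ ^ 2 := by
    gcongr
    linarith
  have hcap : ∀ (q : Fin n → ℝ) (i : Fin n), LM μ X q → 1 / 2 ≤ q i →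
      ∑ k ∈ {i}ᶜ, q k ^ 2 ≤ r₀ ^ 2 → ∑ k ∈ {i}ᶜ, q k ^ 2 ≤ R ^ 2 := fun q i hL hi hS =>
    (Real.sqrt_le_left hR0).1 (hrad n p θ μ ε X q i hn hθ hθ2 hμ hμ₁ hε hε₁ hgood hL hi hS)
  have : NeZero n := ⟨by omega⟩
  have hmem := mem_localMins_iff (μ := μ) X
  refine exists_bijOn_signedBasis _ hR0 (by linarith) ?_ ?_ ?_ ?_ ?_
  · intro q hq
    exact (hmem _).2 ((hmem q).1 hq).neg
  · intro q hq
    exact ((hmem q).1 hq).sum_sq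
  · intro q hq
    have hL := (hmem q).1 hq
    obtain ⟨i, hi⟩ := haxis n p θ μ ε X q.ofLp hn hθ hθ2 hμ hμ₂ hε hε₂ hgood hL
    have h1 := sq_add_sum_compl q.ofLp i
    rw [hL.sum_sq] at h1
    have h2 : (1 / 2 : ℝ) ^ 2 ≤ q i ^ 2 := by nlinarith
    have h3 : 1 / 2 ≤ |q i| := by
      rw [← sq_abs (q i)] at h2
      exact le_of_sq_le_sq h2 (abs_nonneg _)
    rcases le_abs.1 h3 with h | h
    · exact ⟨i, Or.inl h, hcap _ i hL h hi⟩
    · refine ⟨i, Or.inr h, ?_⟩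
      have := hcap _ i hL.neg (by simpa using h) (by simpa using hi)
      simpa using this
  · intro i
    obtain ⟨q, hL, hi, hS⟩ := hex n p θ μ ε X i hn hθ hθ2 hμ hμ₃ hε hε₃ hgood
    exact ⟨WithLp.toLp 2 q, (hmem _).2 hL, hi, hcap q i hL hi hS⟩
  · intro i q hq q' hq' hi hi' hS hS'
    exact WithLp.ofLp_injective 2 (huniq n p θ μ ε X i q.ofLp q'.ofLp hn hθ hθ2 hμ hμ₄ hε hε₄ hgood
      ((hmem q).1 hq) ((hmem q').1 hq') hi hi' (hS.trans hRμ2) (hS'.trans hRμ2))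

end Assembly

/-- Corollary: 2n local minimizers on the sphere, orthogonal dictionary. -/
theorem statement1 :
    ∃ C ca cb cc : ℝ, 0 < C ∧ 0 < ca ∧ 0 < cb ∧ 0 < cc ∧
      ∀ (n p : ℕ) (θ μ : ℝ), 2 ≤ n → θ ∈ Set.Ioo (0 : ℝ) (1 / 2) → 0 < μ →
        μ < ca * min (θ / n) ((n : ℝ) ^ (-(5 : ℝ) / 4)) →
        C / (μ ^ 2 * θ ^ 2) * (n : ℝ) ^ 3 * Real.log ((n : ℝ) / (μ * θ)) ≤ (p : ℝ) →
        ENNReal.ofReal (1 - cb / (p : ℝ) ^ 5) ≤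
          bgMatrix θ n p
            {X | (LocalMins n p μ (Matrix.of X)).ncard = 2 * n ∧
                 ∃ F : EuclideanSpace ℝ (Fin n) → EuclideanSpace ℝ (Fin n),
                   Set.BijOn F (LocalMins n p μ (Matrix.of X)) (SignedBasis n) ∧
                   ∀ q ∈ LocalMins n p μ (Matrix.of X),
                     ‖q - F q‖ ≤ Real.sqrt 2 *
                       min (cc * μ / θ * Real.sqrt ((n : ℝ) * Real.log p / p)) (μ / 16)} := by
  obtain ⟨δ, ca, c, hδ, hca, hc, hmain⟩ := exists_good_localMins
  obtain ⟨C, hC, hsize⟩ := exists_sample_size (δ := min 1 δ) (by positivity)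
  have hK : 0 < subexpK := by linarith [le_subexpK, one_le_expSq]
  refine ⟨C, min 1 ca, 6, 640 * subexpK / c, hC, by positivity, by norm_num, by positivity, ?_⟩
  intro n p θ μ hn hθ hμ hμca hp
  have hn' : (2 : ℝ) ≤ n := by exact_mod_cast hn
  have hθ0 : 0 < θ := hθ.1
  have hθ2 : θ ≤ 1 / 2 := hθ.2.le
  have hθn : θ / n ≤ 1 := by rw [div_le_one (by linarith)]; linarith
  have hμ' : μ ≤ min 1 ca * (θ / n) := hμca.le.trans (by gcongr; exact min_le_left _ _)
  have hμ1 : μ ≤ 1 := hμ'.trans (mul_le_one₀ (min_le_left _ _) (by positivity) hθn)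
  obtain ⟨hdev, hnp, hp3, hpμ⟩ := hsize n p θ μ hn hθ0 hθ2 hμ hμ1 hp
  have hμθn : μ * θ / n ≤ 1 := by
    rw [mul_div_assoc]
    exact mul_le_one₀ hμ1 (by positivity) hθn
  refine bgMatrix_ge hθ0.le (by linarith) (by omega) hnp hp3 hμ hμ1 hpμ
    (hdev.trans (mul_le_one₀ (min_le_left _ _) (by positivity) hμθn)) fun X hX => ?_
  have h := hmain n p θ μ (devLevel n p) X hn hθ0 hθ2 hμ
    (hμ'.trans (by gcongr; exact min_le_right _ _)) (devLevel_nonneg n p)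
    (hdev.trans (by gcongr; exact min_le_right _ _)) hX
  have hrw : devLevel n p * μ / (c * θ) =
      640 * subexpK / c * μ / θ * √((n : ℝ) * Real.log p / p) := by
    unfold devLevel
    field_simp
  rw [hrw] at h
  exact h

end
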